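/- arXiv:2108.02857 — 4 statements merged into one kernel-verified Lean document; each statement's English description precedes it below -/
import Mathlib

section
/- For every θ > 0 and every T ≥ 1, the variance of 2θ·Y₁₁(T)/T satisfies Var(2θ·Y₁₁(T)/T) ≤ [(4/θ)(3 + 7/(4θ)) + 64/θ²] · (1/T). -/
open MeasureTheory ProbabilityTheory Real Filter Finset
open scoped Topology ENNReal NNReal

noncomputable section

/-- Kolmogorov distance between two Borel measures on `ℝ`. -/
def dKol (μ ν : Measure ℝ) : ℝ :=
  ⨆ z : ℝ, |(μ (Set.Iic z)).toReal - (ν (Set.Iic z)).toReal|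

/-- `X 0, X 1 : ℝ → Ω → ℝ` is a pair of independent centered Gaussian processes,
started at `0`, with almost surely continuous paths on `[0,∞)` and the
Ornstein–Uhlenbeck covariance `E[Xᵢ(s)Xᵢ(t)] = (e^{−θ|t−s|} − e^{−θ(t+s)})/(2θ)`. -/
structure IsOUPair {Ω : Type} [MeasureSpace Ω] (θ : ℝ) (X : Fin 2 → ℝ → Ω → ℝ) : Prop where
  meas : ∀ i t, Measurable (X i t)
  gaussian : ∀ (i : Fin 2) (n : ℕ) (t : Fin n → ℝ) (c : Fin n → ℝ), (∀ j, 0 ≤ t j) →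
      ∃ v : NNReal, Measure.map (fun ω => ∑ j, c j * X i (t j) ω) ℙ = gaussianReal 0 v
  indep : IndepFun (fun ω t => X 0 t ω) (fun ω t => X 1 t ω) ℙ
  cont : ∀ᵐ ω ∂(ℙ : Measure Ω), ∀ i, ContinuousOn (fun t => X i t ω) (Set.Ici 0)
  init : ∀ i ω, X i 0 ω = 0
  cov : ∀ (i : Fin 2) (s t : ℝ), 0 ≤ s → 0 ≤ t →
      ∫ ω, X i s ω * X i t ω ∂ℙ
        = (Real.exp (-θ * |t - s|) - Real.exp (-θ * (t + s))) / (2 * θ)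

variable {Ω : Type} [MeasureSpace Ω]

/-- `F_T := T^{-1/2} ∫₀^T X₁(u) X₂(u) du`. -/
def ouF (X : Fin 2 → ℝ → Ω → ℝ) (T : ℝ) (ω : Ω) : ℝ :=
  (1 / Real.sqrt T) * ∫ u in (0:ℝ)..T, X 0 u ω * X 1 u ω

/-- `X̄ᵢ(T) := T^{-1} ∫₀^T Xᵢ(u) du`. -/
def ouXbar (X : Fin 2 → ℝ → Ω → ℝ) (i : Fin 2) (T : ℝ) (ω : Ω) : ℝ :=
  (1 / T) * ∫ u in (0:ℝ)..T, X i u ω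

/-- `Y_{ij}(T) := ∫₀^T Xᵢ(u)Xⱼ(u) du − T·X̄ᵢ(T)·X̄ⱼ(T)`. -/
def ouY (X : Fin 2 → ℝ → Ω → ℝ) (i j : Fin 2) (T : ℝ) (ω : Ω) : ℝ :=
  (∫ u in (0:ℝ)..T, X i u ω * X j u ω) - T * ouXbar X i T ω * ouXbar X j T ω

/-- Yule's nonsense correlation `ρ(T)`. -/
def ouRho (X : Fin 2 → ℝ → Ω → ℝ) (T : ℝ) (ω : Ω) : ℝ :=
  ouY X 0 1 T ω / Real.sqrt (ouY X 0 0 T ω * ouY X 1 1 T ω)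

/-- `A(n) := (√Tₙ/n) Σ_{k<n} X₁(kΔ)X₂(kΔ)` with `Tₙ = nΔ`. -/
def ouA (X : Fin 2 → ℝ → Ω → ℝ) (n : ℕ) (Δ : ℝ) (ω : Ω) : ℝ :=
  (Real.sqrt (n * Δ) / n) * ∑ k ∈ Finset.range n, X 0 (k * Δ) ω * X 1 (k * Δ) ω

/-- `X̃ᵢ(n) := n^{-1} Σ_{k<n} Xᵢ(kΔ)`. -/
def ouXtilde (X : Fin 2 → ℝ → Ω → ℝ) (i : Fin 2) (n : ℕ) (Δ : ℝ) (ω : Ω) : ℝ :=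
  (1 / n) * ∑ k ∈ Finset.range n, X i (k * Δ) ω

/-- `Ỹ_{ij}(n) := Δ Σ_{k<n} Xᵢ(kΔ)Xⱼ(kΔ) − Tₙ·X̃ᵢ(n)·X̃ⱼ(n)` with `Tₙ = nΔ`. -/
def ouYtilde (X : Fin 2 → ℝ → Ω → ℝ) (i j : Fin 2) (n : ℕ) (Δ : ℝ) (ω : Ω) : ℝ :=
  Δ * ∑ k ∈ Finset.range n, X i (k * Δ) ω * X j (k * Δ) ω
    - (n * Δ) * ouXtilde X i n Δ ω * ouXtilde X j n Δ ω

/-- Yule's discrete nonsense correlation `ρ̃(n)`. -/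
def ouRhoTilde (X : Fin 2 → ℝ → Ω → ℝ) (n : ℕ) (Δ : ℝ) (ω : Ω) : ℝ :=
  ouYtilde X 0 1 n Δ ω / Real.sqrt (ouYtilde X 0 0 n Δ ω * ouYtilde X 1 1 n Δ ω)

/-!
`Y₁₁(T) / T` is the variance of the path `t ↦ X₁(t)` under the uniform probability measure `μ` on
`(0, T]`, i.e. `½ ∬ (X₁(s) - X₁(t))² dμ dμ`. Taking the variance in `ω` under the integral gives
`¼` of a double integral of covariances of squared increments, which Isserlis' formula turns into
`½` of a double integral of squared second differences of the covariance kernel `K`. Since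
`∬ (f(s) - f(t))² dμ dμ = 2 Var_μ f ≤ 2 ∫ f² dμ`, used once in each variable of `K`, this is at
most `2 ∬ K² dμ dμ`. Finally `|K(s, t)| ≤ exp (-θ|t - s|) / (2θ)`, whose square integrates over
`t ∈ ℝ` to `1 / (4θ³)`, so that the variance of `2θ Y₁₁(T) / T` is at most `2 / (θT)`.
-/

open Function (uncurry)

open scoped Nat in
-- For `n = 0` truncated subtraction gives `(2 * n - 1)‼ = 0‼ = 1`, the right value.
theorem integral_pow_two_mul_gaussianReal (v : ℝ≥0) (n : ℕ) :
    ∫ x, x ^ (2 * n) ∂gaussianReal 0 v = (2 * n - 1)‼ * (v : ℝ) ^ n := by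
  rcases eq_or_ne v 0 with rfl | hv
  · rcases eq_or_ne n 0 with rfl | hn <;> simp [*]
  have : 0 < (v : ℝ) := by positivity
  have half_line : ∫ x in Set.Ioi (0 : ℝ), x ^ (2 * n) * rexp (-(2 * v : ℝ)⁻¹ * x ^ 2) =
      (2 * v : ℝ) ^ ((n : ℝ) + 1 / 2) * (1 / 2) * Gamma (n + 1 / 2) := by
    have h := integral_rpow_mul_exp_neg_mul_rpow (p := 2) (q := (2 * n : ℕ)) (b := (2 * v : ℝ)⁻¹)
      (by norm_num) (lt_of_lt_of_le (by norm_num) (Nat.cast_nonneg _)) (by positivity)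
    simp only [rpow_natCast, rpow_ofNat] at h
    rw [h, inv_rpow (by positivity), ← rpow_neg (by positivity)]
    congr 3 <;> push_cast <;> ring
  calc ∫ x, x ^ (2 * n) ∂gaussianReal 0 v
      = (√(2 * π * v))⁻¹ * ∫ x : ℝ, |x| ^ (2 * n) * rexp (-(2 * v : ℝ)⁻¹ * |x| ^ 2) := by
        rw [integral_gaussianReal_eq_integral_smul hv, ← integral_const_mul]
        refine integral_congr_ae (ae_of_all _ fun x ↦ ?_)
        simp only [gaussianPDFReal, smul_eq_mul, sub_zero, (even_two_mul n).pow_abs, sq_abs]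
        rw [show -(2 * v : ℝ)⁻¹ * x ^ 2 = -x ^ 2 / (2 * v) by ring]
        ring
    _ = (√(2 * π * v))⁻¹ *
          (2 * ((2 * v : ℝ) ^ ((n : ℝ) + 1 / 2) * (1 / 2) * Gamma (n + 1 / 2))) := by
        rw [integral_comp_abs (f := fun x ↦ x ^ (2 * n) * rexp (-(2 * v : ℝ)⁻¹ * x ^ 2)), half_line]
    _ = (2 * n - 1)‼ * (v : ℝ) ^ n := by
        rw [Real.Gamma_nat_add_half, rpow_add (by positivity), rpow_natCast, ← sqrt_eq_rpow,
          show 2 * π * (v : ℝ) = 2 * v * π by ring, sqrt_mul (by positivity), mul_pow]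
        have : √(2 * v : ℝ) ≠ 0 := by positivity
        have : √π ≠ 0 := by positivity
        field_simp

section Gaussian

variable {Ω : Type*} {mΩ : MeasurableSpace Ω} {P : Measure Ω} {U V : Ω → ℝ}

theorem memLp_two_mul_of_memLp_four (hU : MemLp U 4 P) (hV : MemLp V 4 P) :
    MemLp (fun ω ↦ U ω * V ω) 2 P := by
  have : ENNReal.HolderTriple 4 4 2 := ⟨by
    rw [show (4 : ℝ≥0∞) = 2 * 2 by norm_num, ENNReal.mul_inv (by simp) (by simp), ← mul_add,
      ENNReal.inv_two_add_inv_two, mul_one]⟩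
  exact hV.mul hU

theorem memLp_two_sq_of_memLp_four (hU : MemLp U 4 P) : MemLp (fun ω ↦ U ω ^ 2) 2 P := by
  simpa only [sq] using memLp_two_mul_of_memLp_four hU hU

theorem integral_pow_four_of_hasGaussianLaw (hU : HasGaussianLaw U P) (hU0 : P[U] = 0) :
    ∫ ω, U ω ^ 4 ∂P = 3 * Var[U; P] ^ 2 := by
  have hmap := hU.map_eq_gaussianReal
  have hmoment := integral_pow_two_mul_gaussianReal Var[U; P].toNNReal 2
  rw [hU0] at hmap
  rw [← hmap, integral_map hU.aemeasurable (by fun_prop), coe_toNNReal _ (variance_nonneg _ _)]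
    at hmoment
  norm_num [Nat.doubleFactorial] at hmoment
  exact hmoment

theorem integrable_pow_four_of_memLp_four (hU : MemLp U 4 P) : Integrable (fun ω ↦ U ω ^ 4) P := by
  simpa only [← pow_mul] using (memLp_two_sq_of_memLp_four hU).integrable_sq

theorem integral_add_pow_four_add_integral_sub_pow_four (hU : MemLp U 4 P) (hV : MemLp V 4 P) :
    ∫ ω, (U + V) ω ^ 4 ∂P + ∫ ω, (U - V) ω ^ 4 ∂P =
      2 * ∫ ω, U ω ^ 4 ∂P + 12 * ∫ ω, U ω ^ 2 * V ω ^ 2 ∂P + 2 * ∫ ω, V ω ^ 4 ∂P := by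
  have hUV : Integrable (fun ω ↦ U ω ^ 2 * V ω ^ 2) P :=
    (memLp_two_sq_of_memLp_four hU).integrable_mul (memLp_two_sq_of_memLp_four hV)
  have hU4 := (integrable_pow_four_of_memLp_four hU).const_mul 2
  have hV4 := (integrable_pow_four_of_memLp_four hV).const_mul 2
  have hUUV : Integrable (fun ω ↦ 2 * U ω ^ 4 + 12 * (U ω ^ 2 * V ω ^ 2)) P :=
    hU4.add (hUV.const_mul 12)
  rw [← integral_add (integrable_pow_four_of_memLp_four (hU.add hV))
      (integrable_pow_four_of_memLp_four (hU.sub hV)),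
    ← integral_const_mul, ← integral_const_mul, ← integral_const_mul,
    ← integral_add hU4 (hUV.const_mul 12), ← integral_add hUUV hV4]
  congr with ω
  simp only [Pi.add_apply, Pi.sub_apply]
  ring

-- Isserlis' formula; for centered Gaussians it is the polarization of `E Z⁴ = 3 (Var Z)²`.
theorem covariance_sq_sq_of_hasGaussianLaw (hUV : HasGaussianLaw (fun ω ↦ (U ω, V ω)) P)
    (hU0 : P[U] = 0) (hV0 : P[V] = 0) :
    cov[fun ω ↦ U ω ^ 2, fun ω ↦ V ω ^ 2; P] = 2 * cov[U, V; P] ^ 2 := by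
  have := hUV.isProbabilityMeasure
  have hU := hUV.fst
  have hV := hUV.snd
  have hU4 : MemLp U 4 P := hU.memLp (by simp)
  have hV4 : MemLp V 4 P := hV.memLp (by simp)
  have hadd : P[U + V] = 0 := by
    rw [integral_add' hU.integrable hV.integrable, hU0, hV0, add_zero]
  have hsub : P[U - V] = 0 := by
    rw [integral_sub' hU.integrable hV.integrable, hU0, hV0, sub_zero]
  have polarization := integral_add_pow_four_add_integral_sub_pow_four hU4 hV4
  rw [integral_pow_four_of_hasGaussianLaw hUV.add hadd,
    integral_pow_four_of_hasGaussianLaw hUV.sub hsub,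
    integral_pow_four_of_hasGaussianLaw hU hU0, integral_pow_four_of_hasGaussianLaw hV hV0,
    variance_add hU.memLp_two hV.memLp_two, variance_sub hU.memLp_two hV.memLp_two] at polarization
  rw [covariance_eq_sub (memLp_two_sq_of_memLp_four hU4) (memLp_two_sq_of_memLp_four hV4),
    ← variance_of_integral_eq_zero hU.aemeasurable hU0,
    ← variance_of_integral_eq_zero hV.aemeasurable hV0]
  simp only [Pi.mul_apply]
  linear_combination (-1 / 12) * polarization

end Gaussian

section ProductSpaces

variable {α β : Type*} {mα : MeasurableSpace α} {mβ : MeasurableSpace β}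
  {μ : Measure α} {ν : Measure β}

theorem ae_memLp_two_prodMk_left [SFinite μ] [SFinite ν] {f : α × β → ℝ}
    (hf : MemLp f 2 (μ.prod ν)) :
    ∀ᵐ x ∂μ, MemLp (fun y ↦ f (x, y)) 2 ν := by
  filter_upwards [hf.aestronglyMeasurable.prodMk_left, hf.integrable_sq.prod_right_ae] with x hm hi
  exact (memLp_two_iff_integrable_sq hm).2 hi

theorem ae_memLp_two_prodMk_right [SFinite μ] [SFinite ν] {f : α × β → ℝ}
    (hf : MemLp f 2 (μ.prod ν)) : ∀ᵐ y ∂ν, MemLp (fun x ↦ f (x, y)) 2 μ :=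
  ae_memLp_two_prodMk_left (hf.comp_measurePreserving Measure.measurePreserving_swap)

theorem memLp_two_integral_right [SFinite μ] [IsProbabilityMeasure ν] {f : α × β → ℝ}
    (hf : MemLp f 2 (μ.prod ν)) : MemLp (fun x ↦ ∫ y, f (x, y) ∂ν) 2 μ := by
  have hm := hf.aestronglyMeasurable.integral_prod_right'
  refine (memLp_two_iff_integrable_sq hm).2
    (hf.integrable_sq.integral_prod_left.mono' (hm.pow 2) ?_)
  filter_upwards [ae_memLp_two_prodMk_left hf] with x hx
  rw [norm_of_nonneg (sq_nonneg _)]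
  have := variance_eq_sub hx ▸ variance_nonneg (fun y ↦ f (x, y)) ν
  simpa using this

theorem variance_integral [IsProbabilityMeasure μ] [IsProbabilityMeasure ν] {Z : α → β → ℝ}
    (hZ : MemLp (uncurry Z) 2 (μ.prod ν)) :
    Var[fun ω ↦ ∫ x, Z x ω ∂μ; ν] = ∫ z, cov[Z z.1, Z z.2; ν] ∂(μ.prod μ) := by
  have hslice : ∀ᵐ x ∂μ, MemLp (Z x) 2 ν := ae_memLp_two_prodMk_left hZ
  have hswap : MemLp (fun p : β × α ↦ Z p.2 p.1) 2 (ν.prod μ) :=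
    hZ.comp_measurePreserving Measure.measurePreserving_swap
  have hprod : Integrable (uncurry fun ω (z : α × α) ↦ Z z.1 ω * Z z.2 ω) (ν.prod (μ.prod μ)) :=
    MemLp.integrable_mul
      (hswap.comp_measurePreserving ((MeasurePreserving.id ν).prod measurePreserving_fst))
      (hswap.comp_measurePreserving ((MeasurePreserving.id ν).prod measurePreserving_snd))
  have hmean : MemLp (fun x ↦ ∫ ω, Z x ω ∂ν) 2 μ := memLp_two_integral_right hZ
  have hsq (ω : β) : (∫ x, Z x ω ∂μ) ^ 2 = ∫ z : α × α, Z z.1 ω * Z z.2 ω ∂(μ.prod μ) := by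
    rw [integral_prod_mul (Z · ω) (Z · ω), sq]
  calc Var[fun ω ↦ ∫ x, Z x ω ∂μ; ν]
      = ∫ ω, (∫ x, Z x ω ∂μ) ^ 2 ∂ν - (∫ ω, ∫ x, Z x ω ∂μ ∂ν) ^ 2 :=
        variance_eq_sub (memLp_two_integral_right hswap)
    _ = ∫ ω, ∫ z, Z z.1 ω * Z z.2 ω ∂(μ.prod μ) ∂ν - (∫ x, ∫ ω, Z x ω ∂ν ∂μ) ^ 2 := by
        rw [integral_integral_swap (hZ.integrable one_le_two)]
        simp only [hsq]
    _ = ∫ z, ∫ ω, Z z.1 ω * Z z.2 ω ∂ν ∂(μ.prod μ)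
          - ∫ z : α × α, (∫ ω, Z z.1 ω ∂ν) * ∫ ω, Z z.2 ω ∂ν ∂(μ.prod μ) := by
        rw [integral_integral_swap hprod,
          integral_prod_mul (fun x ↦ ∫ ω, Z x ω ∂ν) (fun x ↦ ∫ ω, Z x ω ∂ν), sq]
    _ = ∫ z, cov[Z z.1, Z z.2; ν] ∂(μ.prod μ) := by
        rw [← integral_sub (by exact hprod.integral_prod_right)
          ((hmean.integrable one_le_two).mul_prod (hmean.integrable one_le_two))]
        refine integral_congr_ae ?_
        filter_upwards [measurePreserving_fst.quasiMeasurePreserving.ae hslice,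
          measurePreserving_snd.quasiMeasurePreserving.ae hslice] with z h₁ h₂
        exact (covariance_eq_sub h₁ h₂).symm

theorem integral_prod_sq_sub [IsProbabilityMeasure μ] {f : α → ℝ} (hf : MemLp f 2 μ) :
    ∫ z : α × α, (f z.1 - f z.2) ^ 2 ∂(μ.prod μ) = 2 * Var[f; μ] := by
  have hf₁ := hf.comp_fst μ
  have hf₂ := hf.comp_snd μ
  have hcentered : ∫ z : α × α, (f z.1 - f z.2) ∂(μ.prod μ) = 0 := by
    rw [integral_sub (hf₁.integrable one_le_two) (hf₂.integrable one_le_two)]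
    simp [integral_fun_fst, integral_fun_snd]
  have hmeas : AEMeasurable (fun z : α × α ↦ f z.1 - f z.2) (μ.prod μ) := (hf₁.sub hf₂).aemeasurable
  rw [← variance_of_integral_eq_zero hmeas hcentered, variance_fun_sub hf₁ hf₂,
    covariance_fst_snd_prod hf hf, measurePreserving_fst.variance_fun_comp hf.aemeasurable,
    measurePreserving_snd.variance_fun_comp hf.aemeasurable]
  ring

theorem memLp_prod_sub [IsProbabilityMeasure μ] [SFinite ν] {p : ℝ≥0∞} {f : α × β → ℝ}
    (hf : MemLp f p (μ.prod ν)) :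
    MemLp (fun z : (α × α) × β ↦ f (z.1.1, z.2) - f (z.1.2, z.2)) p ((μ.prod μ).prod ν) :=
  (hf.comp_measurePreserving (measurePreserving_fst.prod (.id ν))).sub
    (hf.comp_measurePreserving (measurePreserving_snd.prod (.id ν)))

theorem integral_prod_sq_sub_le [IsProbabilityMeasure μ] [SFinite ν] {f : α × β → ℝ}
    (hf : MemLp f 2 (μ.prod ν)) :
    ∫ p : (α × α) × β, (f (p.1.1, p.2) - f (p.1.2, p.2)) ^ 2 ∂((μ.prod μ).prod ν) ≤
      2 * ∫ p, f p ^ 2 ∂(μ.prod ν) := by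
  have hsq := (memLp_prod_sub hf).integrable_sq
  rw [integral_prod_symm _ hsq, integral_prod_symm _ hf.integrable_sq, ← integral_const_mul]
  refine integral_mono_ae hsq.integral_prod_right
    (hf.integrable_sq.integral_prod_right.const_mul 2) ?_
  filter_upwards [ae_memLp_two_prodMk_right hf] with y hy
  rw [integral_prod_sq_sub hy]
  gcongr
  exact variance_le_expectation_sq hy.aestronglyMeasurable

theorem integral_prod_sq_sub_sub_sub_le [IsProbabilityMeasure μ] {K : α × α → ℝ}
    (hK : MemLp K 2 (μ.prod μ)) :
    ∫ z : (α × α) × (α × α), (K (z.1.1, z.2.1) - K (z.1.1, z.2.2)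
        - (K (z.1.2, z.2.1) - K (z.1.2, z.2.2))) ^ 2 ∂((μ.prod μ).prod (μ.prod μ)) ≤
      4 * ∫ z, K z ^ 2 ∂(μ.prod μ) := by
  let D (p : (α × α) × α) : ℝ := K (p.1.1, p.2) - K (p.1.2, p.2)
  have hD : MemLp (fun p : α × (α × α) ↦ D p.swap) 2 (μ.prod (μ.prod μ)) :=
    (memLp_prod_sub hK).comp_measurePreserving Measure.measurePreserving_swap
  calc ∫ z : (α × α) × (α × α), (K (z.1.1, z.2.1) - K (z.1.1, z.2.2)
        - (K (z.1.2, z.2.1) - K (z.1.2, z.2.2))) ^ 2 ∂((μ.prod μ).prod (μ.prod μ))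
      = ∫ z : (α × α) × (α × α), (D (z.2, z.1.1) - D (z.2, z.1.2)) ^ 2
          ∂((μ.prod μ).prod (μ.prod μ)) := by
        rw [← integral_prod_swap]
        refine integral_congr_ae (ae_of_all _ fun z ↦ ?_)
        simp only [D, Prod.fst_swap, Prod.snd_swap]
        ring
    _ ≤ 2 * ∫ p : α × (α × α), D p.swap ^ 2 ∂(μ.prod (μ.prod μ)) := integral_prod_sq_sub_le hD
    _ = 2 * ∫ p, D p ^ 2 ∂((μ.prod μ).prod μ) := by
        rw [integral_prod_swap (fun p ↦ D p ^ 2)]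
    _ ≤ 2 * (2 * ∫ z, K z ^ 2 ∂(μ.prod μ)) := by gcongr; exact integral_prod_sq_sub_le hK
    _ = 4 * ∫ z, K z ^ 2 ∂(μ.prod μ) := by ring

end ProductSpaces

section GaussianProcess

variable {α Ω : Type*} {mα : MeasurableSpace α} {mΩ : MeasurableSpace Ω}
  {μ : Measure α} {P : Measure Ω} {X : α → Ω → ℝ}

theorem isGaussianProcess_of_isGaussian_map_sum (hX : ∀ t, AEMeasurable (X t) P)
    (h : ∀ (n : ℕ) (t : Fin n → α) (c : Fin n → ℝ),
      IsGaussian (P.map fun ω ↦ ∑ j, c j * X (t j) ω)) :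
    IsGaussianProcess X P where
  hasGaussianLaw I := by
    classical
    have hI : AEMeasurable (fun ω ↦ I.restrict (X · ω)) P := aemeasurable_pi_lambda _ fun t ↦ hX t
    refine ⟨⟨fun L ↦ ?_⟩⟩
    have hL : (fun ω ↦ L (I.restrict (X · ω))) = fun ω ↦
        ∑ j, L (Pi.single (I.equivFin.symm j) 1) * X (I.equivFin.symm j) ω := by
      ext ω
      rw [Equiv.sum_comp I.equivFin.symm (fun t : I ↦ L (Pi.single t 1) * X t ω)]
      conv_lhs => rw [← Finset.univ_sum_single (I.restrict (X · ω)), map_sum]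
      refine Finset.sum_congr rfl fun t _ ↦ ?_
      rw [mul_comm, ← smul_eq_mul, ← map_smul, ← Pi.single_smul, smul_eq_mul, mul_one,
        Finset.restrict]
    have hLaw : HasGaussianLaw (fun ω ↦ L (I.restrict (X · ω))) P := ⟨hL ▸ h _ _ _⟩
    rw [AEMeasurable.map_map_of_aemeasurable (by fun_prop) hI,
      integral_map hI (by fun_prop), variance_map (by fun_prop) hI]
    exact hLaw.map_eq_gaussianReal

theorem aestronglyMeasurable_uncurry_of_ae_continuous [TopologicalSpace α]
    [TopologicalSpace.MetrizableSpace α] [SecondCountableTopology α] [OpensMeasurableSpace α]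
    (hX : ∀ t, StronglyMeasurable (X t)) (hcont : ∀ᵐ ω ∂P, Continuous (X · ω)) :
    AEStronglyMeasurable (uncurry X) (μ.prod P) := by
  obtain ⟨s, hs, hs_meas, hs_cont⟩ := hcont.exists_measurable_mem
  refine ⟨uncurry fun t ↦ s.indicator (X t),
    stronglyMeasurable_uncurry_of_continuous_of_stronglyMeasurable (fun ω ↦ ?_)
      fun t ↦ (hX t).indicator hs_meas, ?_⟩
  · by_cases hω : ω ∈ s
    · simpa only [Set.indicator_of_mem hω] using hs_cont ω hω
    · simpa only [Set.indicator_of_notMem hω] using continuous_const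
  · filter_upwards [Measure.quasiMeasurePreserving_snd.ae hs] with z hz
    exact (Set.indicator_of_mem hz _).symm

theorem memLp_four_uncurry_of_isGaussianProcess (hX : IsGaussianProcess X P)
    (hX0 : ∀ t, P[X t] = 0) (hmeas : AEStronglyMeasurable (uncurry X) (μ.prod P))
    (hvar : Integrable (fun t ↦ Var[X t; P] ^ 2) μ) : MemLp (uncurry X) 4 (μ.prod P) := by
  have := hX.isProbabilityMeasure
  have hpow : Integrable (fun z ↦ ‖uncurry X z‖ ^ 4) (μ.prod P) := by
    refine (integrable_prod_iff (hmeas.norm.pow 4)).2 ⟨ae_of_all _ fun t ↦ ?_, ?_⟩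
    · exact ((hX.hasGaussianLaw_eval t).memLp (p := 4) (by simp)).integrable_norm_pow (by simp)
    · refine (hvar.const_mul 3).congr (ae_of_all _ fun t ↦ ?_)
      simp only [Pi.pow_apply, uncurry, norm_pow, norm_eq_abs, (by decide : Even 4).pow_abs]
      exact (integral_pow_four_of_hasGaussianLaw (hX.hasGaussianLaw_eval t) (hX0 t)).symm
  exact (integrable_norm_rpow_iff hmeas (by simp) (by simp)).1 (by simpa using hpow)

theorem hasGaussianLaw_prodMk_sub (hX : IsGaussianProcess X P) (s t u v : α) :
    HasGaussianLaw (fun ω ↦ (X s ω - X t ω, X u ω - X v ω)) P := by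
  classical
  have : IsGaussianProcess (fun (z : α × α) ω ↦ X z.1 ω - X z.2 ω) P :=
    hX.of_isGaussianProcess fun z ↦ ⟨{z.1, z.2},
      .proj ⟨z.1, by simp⟩ - .proj ⟨z.2, by simp⟩, fun ω ↦ rfl⟩
  exact this.hasGaussianLaw_prodMk (s := (s, t)) (t := (u, v))

theorem memLp_two_covariance_of_memLp_four [IsProbabilityMeasure μ] (hX : IsGaussianProcess X P)
    (hX0 : ∀ t, P[X t] = 0) (hX4 : MemLp (uncurry X) 4 (μ.prod P)) :
    MemLp (fun z : α × α ↦ cov[X z.1, X z.2; P]) 2 (μ.prod μ) := by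
  have := hX.isProbabilityMeasure
  have hmul : MemLp (fun p : (α × α) × Ω ↦ X p.1.1 p.2 * X p.1.2 p.2) 2 ((μ.prod μ).prod P) :=
    memLp_two_mul_of_memLp_four
      (hX4.comp_measurePreserving (measurePreserving_fst.prod (.id P)))
      (hX4.comp_measurePreserving (measurePreserving_snd.prod (.id P)))
  convert memLp_two_integral_right hmul using 2 with z
  rw [covariance_eq_sub (hX.hasGaussianLaw_eval _).memLp_two (hX.hasGaussianLaw_eval _).memLp_two,
    hX0, zero_mul, sub_zero]
  rfl

theorem variance_variance_path_le [IsProbabilityMeasure μ] (hX : IsGaussianProcess X P)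
    (hX0 : ∀ t, P[X t] = 0) (hX4 : MemLp (uncurry X) 4 (μ.prod P)) :
    Var[fun ω ↦ Var[fun t ↦ X t ω; μ]; P] ≤ 2 * ∫ z, cov[X z.1, X z.2; P] ^ 2 ∂(μ.prod μ) := by
  have := hX.isProbabilityMeasure
  let Z (z : α × α) (ω : Ω) : ℝ := (X z.1 ω - X z.2 ω) ^ 2
  have hZ : MemLp (uncurry Z) 2 ((μ.prod μ).prod P) :=
    memLp_two_sq_of_memLp_four (memLp_prod_sub hX4)
  have hpath : ∀ᵐ ω ∂P, MemLp (fun t ↦ X t ω) 2 μ :=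
    ae_memLp_two_prodMk_right (hX4.mono_exponent (by norm_num))
  have hvar : (fun ω ↦ Var[fun t ↦ X t ω; μ]) =ᵐ[P] fun ω ↦ 1 / 2 * ∫ z, Z z ω ∂(μ.prod μ) := by
    filter_upwards [hpath] with ω hω
    rw [integral_prod_sq_sub hω]
    ring
  have hmemLp (t : α) : MemLp (X t) 2 P := (hX.hasGaussianLaw_eval t).memLp_two
  have hmean (s t : α) : ∫ ω, (X s ω - X t ω) ∂P = 0 := by
    rw [integral_sub ((hmemLp s).integrable one_le_two) ((hmemLp t).integrable one_le_two),
      hX0, hX0, sub_zero]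
  have hcov (z w : α × α) : cov[Z z, Z w; P] = 2 * (cov[X z.1, X w.1; P] - cov[X z.1, X w.2; P]
      - (cov[X z.2, X w.1; P] - cov[X z.2, X w.2; P])) ^ 2 := by
    rw [covariance_sq_sq_of_hasGaussianLaw (hasGaussianLaw_prodMk_sub hX z.1 z.2 w.1 w.2)
      (hmean _ _) (hmean _ _), covariance_fun_sub_fun_sub (hmemLp _) (hmemLp _) (hmemLp _)
      (hmemLp _)]
    ring
  rw [variance_congr hvar, variance_const_mul, variance_integral hZ]
  simp only [hcov, integral_const_mul]
  linarith [integral_prod_sq_sub_sub_sub_le (memLp_two_covariance_of_memLp_four hX hX0 hX4)]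

end GaussianProcess

theorem integral_cond_Ioc {a b : ℝ} (hab : a ≤ b) (f : ℝ → ℝ) :
    ∫ t, f t ∂volume[|Set.Ioc a b] = (b - a)⁻¹ * ∫ t in a..b, f t := by
  rw [← smul_eq_mul, ← interval_average_eq, Set.uIoc_of_le hab, average,
    Measure.restrict_apply_univ]
  rfl

theorem integral_cond_Ioc_le {a b : ℝ} (hab : a ≤ b) {f : ℝ → ℝ} (hf0 : 0 ≤ f)
    (hf : Integrable f) : ∫ t, f t ∂volume[|Set.Ioc a b] ≤ (b - a)⁻¹ * ∫ t, f t := by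
  rw [integral_cond_Ioc hab, intervalIntegral.integral_of_le hab]
  exact mul_le_mul_of_nonneg_left (setIntegral_le_integral hf (ae_of_all _ hf0))
    (inv_nonneg.2 (sub_nonneg.2 hab))

theorem integral_exp_neg_mul_abs {c : ℝ} (hc : 0 < c) : ∫ x : ℝ, rexp (-c * |x|) = 2 / c := by
  rw [integral_comp_abs (f := fun x ↦ rexp (-c * x)), integral_exp_mul_Ioi (neg_lt_zero.2 hc)]
  simp [div_eq_mul_inv]

theorem isProbabilityMeasure_cond_Ioc {a b : ℝ} (hab : a < b) :
    IsProbabilityMeasure (volume[|Set.Ioc a b]) :=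
  cond_isProbabilityMeasure_of_finite (by simpa using hab) (by simp)

theorem integrable_exp_neg_mul_abs_sub {μ : Measure (ℝ × ℝ)} [IsFiniteMeasure μ] {c : ℝ}
    (hc : 0 ≤ c) : Integrable (fun z ↦ rexp (-c * |z.2 - z.1|)) μ := by
  refine .of_bound (by fun_prop) 1 (ae_of_all _ fun z ↦ ?_)
  rw [norm_of_nonneg (exp_nonneg _), exp_le_one_iff]
  nlinarith [abs_nonneg (z.2 - z.1)]

theorem integral_exp_neg_mul_abs_sub_le {a b c : ℝ} (hab : a < b) (hc : 0 < c) :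
    ∫ z, rexp (-c * |z.2 - z.1|) ∂((volume[|Set.Ioc a b]).prod (volume[|Set.Ioc a b])) ≤
      2 / (c * (b - a)) := by
  have : IsProbabilityMeasure (volume[|Set.Ioc a b]) := isProbabilityMeasure_cond_Ioc hab
  have hint : Integrable (fun z : ℝ × ℝ ↦ rexp (-c * |z.2 - z.1|))
      ((volume[|Set.Ioc a b]).prod (volume[|Set.Ioc a b])) :=
    integrable_exp_neg_mul_abs_sub hc.le
  have hline : Integrable fun x : ℝ ↦ rexp (-c * |x|) :=
    .of_integral_ne_zero (by rw [integral_exp_neg_mul_abs hc]; positivity)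
  have hslice (s : ℝ) : ∫ t, rexp (-c * |t - s|) ∂volume[|Set.Ioc a b] ≤ 2 / (c * (b - a)) :=
    calc ∫ t, rexp (-c * |t - s|) ∂volume[|Set.Ioc a b]
        ≤ (b - a)⁻¹ * ∫ t, rexp (-c * |t - s|) :=
          integral_cond_Ioc_le hab.le (fun _ ↦ exp_nonneg _) (hline.comp_sub_right s)
      _ = 2 / (c * (b - a)) := by
          rw [integral_sub_right_eq_self (fun x ↦ rexp (-c * |x|)), integral_exp_neg_mul_abs hc,
            inv_mul_eq_div, div_div]
  rw [integral_prod _ hint]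
  simpa using integral_mono hint.integral_prod_left (integrable_const _) hslice

section OrnsteinUhlenbeck

variable {X : Fin 2 → ℝ → Ω → ℝ} {θ T : ℝ} {i : Fin 2}

-- `IsOUPair` constrains `X i t` only for `0 ≤ t`; freezing the process at its value at time `0` for
-- negative times makes it a Gaussian process with continuous paths indexed by all of `ℝ`.
theorem isGaussianProcess_of_isOUPair (hX : IsOUPair θ X) :
    IsGaussianProcess (fun t ↦ X i (max t 0)) (ℙ : Measure Ω) := by
  refine isGaussianProcess_of_isGaussian_map_sum (fun t ↦ (hX.meas i _).aemeasurable)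
    fun n t c ↦ ?_
  obtain ⟨v, hv⟩ := hX.gaussian i n (fun j ↦ max (t j) 0) c fun j ↦ le_max_right _ _
  rw [hv]
  infer_instance

theorem ouY_self_div_eq_variance {Ω : Type} {X : Fin 2 → ℝ → Ω → ℝ} (hT : 0 < T) {ω : Ω}
    (hω : MemLp (fun t ↦ X i (max t 0) ω) 2 (volume[|Set.Ioc 0 T])) :
    ouY X i i T ω / T = Var[fun t ↦ X i (max t 0) ω; volume[|Set.Ioc 0 T]] := by
  have hmax (f : ℝ → ℝ) : ∫ t in 0..T, f (max t 0) = ∫ t in 0..T, f t :=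
    intervalIntegral.integral_congr fun t ht ↦ by
      rw [Set.uIcc_of_le hT.le] at ht
      simp only [max_eq_left ht.1]
  have : IsProbabilityMeasure (volume[|Set.Ioc 0 T]) := isProbabilityMeasure_cond_Ioc hT
  rw [variance_eq_sub hω, integral_cond_Ioc hT.le, integral_cond_Ioc hT.le]
  simp only [Pi.pow_apply]
  rw [hmax fun t ↦ X i t ω ^ 2, hmax fun t ↦ X i t ω, ouY, ouXbar]
  simp only [← sq, sub_zero]
  field_simp

theorem integral_eq_zero_of_isOUPair (hX : IsOUPair θ X) {t : ℝ} (ht : 0 ≤ t) :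
    ∫ ω, X i t ω = 0 := by
  obtain ⟨v, hv⟩ := hX.gaussian i 1 (fun _ ↦ t) 1 fun _ ↦ ht
  have hlaw : Measure.map (X i t) ℙ = gaussianReal 0 v := by simpa using hv
  rw [← integral_id_gaussianReal (μ := 0) (v := v), ← hlaw,
    integral_map (hX.meas i t).aemeasurable (by fun_prop)]

theorem covariance_of_isOUPair (hX : IsOUPair θ X) {s t : ℝ} (hs : 0 ≤ s) (ht : 0 ≤ t) :
    cov[X i s, X i t; ℙ] = (rexp (-θ * |t - s|) - rexp (-θ * (t + s))) / (2 * θ) := by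
  simp only [covariance, integral_eq_zero_of_isOUPair hX hs, integral_eq_zero_of_isOUPair hX ht,
    sub_zero, hX.cov i s t hs ht]

theorem abs_covariance_le_of_isOUPair (hθ : 0 < θ) (hX : IsOUPair θ X) {s t : ℝ}
    (hs : 0 ≤ s) (ht : 0 ≤ t) : |cov[X i s, X i t; ℙ]| ≤ rexp (-θ * |t - s|) / (2 * θ) := by
  have hexp : rexp (-θ * (t + s)) ≤ rexp (-θ * |t - s|) := by
    rw [exp_le_exp, neg_mul, neg_mul, neg_le_neg_iff]
    gcongr
    exact abs_le.2 ⟨by linarith, by linarith⟩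
  rw [covariance_of_isOUPair hX hs ht,
    abs_of_nonneg (div_nonneg (sub_nonneg.2 hexp) (by positivity))]
  gcongr
  exact sub_le_self _ (exp_nonneg _)

theorem memLp_four_uncurry_of_isOUPair {μ : Measure ℝ} [IsFiniteMeasure μ] (hθ : 0 < θ)
    (hX : IsOUPair θ X) : MemLp (uncurry fun t ↦ X i (max t 0)) 4 (μ.prod ℙ) := by
  have hcont : ∀ᵐ ω, Continuous fun t ↦ X i (max t 0) ω := by
    filter_upwards [hX.cont] with ω hω
    exact (hω i).comp_continuous (by fun_prop) fun t ↦ le_max_right t 0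
  have hvar (t : ℝ) :
      Var[X i (max t 0); ℙ] = (1 - rexp (-θ * (max t 0 + max t 0))) / (2 * θ) := by
    rw [← covariance_self (hX.meas i _).aemeasurable,
      covariance_of_isOUPair hX (le_max_right t 0) (le_max_right t 0)]
    simp
  refine memLp_four_uncurry_of_isGaussianProcess (isGaussianProcess_of_isOUPair hX)
    (fun t ↦ integral_eq_zero_of_isOUPair hX (le_max_right t 0))
    (aestronglyMeasurable_uncurry_of_ae_continuous (fun t ↦ (hX.meas i _).stronglyMeasurable)
      hcont) ?_
  simp only [hvar]
  refine .of_bound (by fun_prop) ((1 / (2 * θ)) ^ 2) (ae_of_all _ fun t ↦ ?_)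
  have hle : 0 ≤ 1 - rexp (-θ * (max t 0 + max t 0)) := by
    rw [sub_nonneg, exp_le_one_iff]
    nlinarith [le_max_right t 0]
  rw [norm_of_nonneg (sq_nonneg _)]
  gcongr
  exact sub_le_self _ (exp_nonneg _)

theorem integral_covariance_sq_le_of_isOUPair (hθ : 0 < θ) (hT : 0 < T) (hX : IsOUPair θ X) :
    ∫ z, cov[X i (max z.1 0), X i (max z.2 0); ℙ] ^ 2
      ∂((volume[|Set.Ioc 0 T]).prod (volume[|Set.Ioc 0 T])) ≤ 1 / (4 * θ ^ 3 * T) := by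
  have : IsProbabilityMeasure (volume[|Set.Ioc 0 T]) := isProbabilityMeasure_cond_Ioc hT
  have hpos : ∀ᵐ t ∂volume[|Set.Ioc 0 T], 0 ≤ t :=
    (ae_cond_mem measurableSet_Ioc).mono fun t ht ↦ ht.1.le
  calc ∫ z, cov[X i (max z.1 0), X i (max z.2 0); ℙ] ^ 2
        ∂((volume[|Set.Ioc 0 T]).prod (volume[|Set.Ioc 0 T]))
      ≤ ∫ z, (4 * θ ^ 2)⁻¹ * rexp (-(2 * θ) * |z.2 - z.1|)
          ∂((volume[|Set.Ioc 0 T]).prod (volume[|Set.Ioc 0 T])) := by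
        refine integral_mono_of_nonneg (ae_of_all _ fun z ↦ sq_nonneg _)
          ((integrable_exp_neg_mul_abs_sub (by positivity)).const_mul _) ?_
        filter_upwards [measurePreserving_fst.quasiMeasurePreserving.ae hpos,
          measurePreserving_snd.quasiMeasurePreserving.ae hpos] with z h₁ h₂
        rw [max_eq_left h₁, max_eq_left h₂, ← sq_abs]
        refine (pow_le_pow_left₀ (abs_nonneg _)
          (abs_covariance_le_of_isOUPair hθ hX h₁ h₂) 2).trans_eq ?_
        rw [div_pow, ← exp_nat_mul]
        ring_nf
    _ ≤ (4 * θ ^ 2)⁻¹ * (2 / (2 * θ * (T - 0))) := by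
        rw [integral_const_mul]
        gcongr
        exact integral_exp_neg_mul_abs_sub_le hT (by positivity)
    _ = 1 / (4 * θ ^ 3 * T) := by
        rw [sub_zero]
        field_simp

end OrnsteinUhlenbeck

theorem stmt_9_general (θ : ℝ) (hθ : 0 < θ) (X : Fin 2 → ℝ → Ω → ℝ) (hX : IsOUPair θ X) (i : Fin 2)
    (T : ℝ) (hT : 0 < T) :
    variance (fun ω => 2 * θ * ouY X i i T ω / T) ℙ ≤ 2 / (θ * T) := by
  have : IsProbabilityMeasure (volume[|Set.Ioc 0 T]) := isProbabilityMeasure_cond_Ioc hT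
  have hX4 := memLp_four_uncurry_of_isOUPair (i := i) (μ := volume[|Set.Ioc 0 T]) hθ hX
  have hgauss := isGaussianProcess_of_isOUPair (i := i) hX
  have := hgauss.isProbabilityMeasure
  have hY : (fun ω ↦ 2 * θ * ouY X i i T ω / T) =ᵐ[ℙ]
      fun ω ↦ 2 * θ * Var[fun t ↦ X i (max t 0) ω; volume[|Set.Ioc 0 T]] := by
    filter_upwards [ae_memLp_two_prodMk_right (hX4.mono_exponent (by norm_num))] with ω hω
    rw [mul_div_assoc, ouY_self_div_eq_variance hT hω]
  calc Var[fun ω ↦ 2 * θ * ouY X i i T ω / T; ℙ]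
      = (2 * θ) ^ 2 * Var[fun ω ↦ Var[fun t ↦ X i (max t 0) ω; volume[|Set.Ioc 0 T]]; ℙ] := by
        rw [variance_congr hY, variance_const_mul]
    _ ≤ (2 * θ) ^ 2 * (2 * (1 / (4 * θ ^ 3 * T))) := by
        gcongr
        refine (variance_variance_path_le hgauss
          (fun t ↦ integral_eq_zero_of_isOUPair hX (le_max_right t 0)) hX4).trans ?_
        gcongr
        exact integral_covariance_sq_le_of_isOUPair hθ hT hX
    _ = 2 / (θ * T) := by
        field_simp
        norm_num

/-- `Var(2θ·Y₁₁(T)/T) ≤ [(4/θ)(3 + 7/(4θ)) + 64/θ²]·(1/T)` for `T ≥ 1`. -/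
theorem stmt_9 (θ : ℝ) (hθ : 0 < θ) [IsProbabilityMeasure (ℙ : Measure Ω)]
    (X : Fin 2 → ℝ → Ω → ℝ) (hX : IsOUPair θ X) (T : ℝ) (hT : 1 ≤ T) :
    variance (fun ω => 2 * θ * ouY X 0 0 T ω / T) ℙ
      ≤ ((4 / θ) * (3 + 7 / (4 * θ)) + 64 / θ ^ 2) * (1 / T) := by
  calc variance (fun ω => 2 * θ * ouY X 0 0 T ω / T) ℙ
      ≤ 2 / (θ * T) := stmt_9_general θ hθ X hX 0 T (zero_lt_one.trans_le hT)
    _ ≤ 2 / (θ * T) + (10 / θ + 71 / θ ^ 2) / T := le_add_of_nonneg_right (by positivity)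
    _ = ((4 / θ) * (3 + 7 / (4 * θ)) + 64 / θ ^ 2) * (1 / T) := by field_simp; ring

end
end

section
/- For every θ > 0 there exist constants c(θ) > 0, K(θ) > 0 and T₀(θ) ≥ e, depending only on θ, such that for all T ≥ T₀(θ), P( |2θ·Y₁₁(T)/T − 1| > c(θ)·ln(T)/√T ) ≤ K(θ)/√T. -/
open MeasureTheory ProbabilityTheory Real Filter Finset
open scoped Topology ENNReal NNReal

noncomputable section

variable {Ω : Type} [MeasureSpace Ω]

/-!
Sample the path at `n` equally spaced times. Diagonalising the covariance `C` of a centered Gaussian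
vector `x` writes `‖x‖² - tr C` as `∑ i, λᵢ (ξᵢ² - 1)` with independent standard Gaussian `ξᵢ`, so
that its moment generating function at `s` is at most `exp (4 s² tr C²)` as long as
`16 s² tr C² ≤ 1`. Exponential decorrelation bounds `(T / n)² tr C²` by a multiple of `T`, uniformly
in `n`, so Fatou's lemma controls the exponential moments of `∫₀ᵀ Z² - v T` up to an exponent of
order `1 / √T`. The exponential Markov inequality at a deviation of order `√T log T` then gives a
probability of order `1 / √T`. The remaining term `(∫₀ᵀ Z)² / T` has bounded expectation, and the
plain Markov inequality is enough for it.
-/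

lemma exp_neg_mul_inv_sqrt_one_sub_two_mul_le {a : ℝ} (ha : |a| ≤ 1 / 4) :
    exp (-a) * (√(1 - 2 * a))⁻¹ ≤ exp (4 * a ^ 2) := by
  have habs : |2 * a| = 2 * |a| := by rw [abs_mul, abs_two]
  have hpos : 0 < 1 - 2 * a := by linarith [le_abs_self a]
  have hlog : -(2 * a) - 8 * a ^ 2 ≤ log (1 - 2 * a) := by
    have htaylor := abs_log_sub_add_sum_range_le (x := 2 * a) (by linarith) 1
    have hrem : |2 * a| ^ (1 + 1) / (1 - |2 * a|) ≤ 8 * a ^ 2 := by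
      rw [div_le_iff₀ (by linarith), sq_abs]
      nlinarith [sq_nonneg a]
    simp only [Finset.sum_range_one, zero_add, pow_one, Nat.cast_zero, div_one] at htaylor
    linarith [(abs_le.1 htaylor).1]
  have hsqrt : (√(1 - 2 * a))⁻¹ = exp (-(log (1 - 2 * a) / 2)) := by
    rw [exp_neg, ← log_sqrt hpos.le, exp_log (sqrt_pos.2 hpos)]
  rw [hsqrt, ← exp_add, exp_le_exp]
  linarith

section GaussianReal

variable {v : ℝ≥0} {s : ℝ}

lemma gaussianPDFReal_zero_mul_exp_mul_sq (hv : v ≠ 0) (s x : ℝ) :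
    gaussianPDFReal 0 v x * exp (s * x ^ 2)
      = (√(2 * π * v))⁻¹ * exp (-((1 - 2 * s * v) / (2 * v)) * x ^ 2) := by
  rw [gaussianPDFReal_def, mul_assoc, ← exp_add]
  congr 2
  field_simp
  ring

lemma integrable_exp_mul_sq_gaussianReal (hs : 2 * s * v < 1) :
    Integrable (fun x ↦ exp (s * x ^ 2)) (gaussianReal 0 v) := by
  rcases eq_or_ne v 0 with rfl | hv
  · rw [gaussianReal_zero_var]
    exact integrable_dirac (by simp)
  have hvpos : (0 : ℝ) < v := by positivity
  have hb : 0 < (1 - 2 * s * v) / (2 * v) := div_pos (by linarith) (by linarith)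
  rw [gaussianReal_of_var_ne_zero _ hv, integrable_withDensity_iff (measurable_gaussianPDF 0 v)
    (ae_of_all _ fun _ ↦ gaussianPDF_lt_top)]
  simp_rw [toReal_gaussianPDF, mul_comm (exp _), gaussianPDFReal_zero_mul_exp_mul_sq hv]
  exact (integrable_exp_neg_mul_sq hb).const_mul _

lemma mgf_sq_gaussianReal (hs : 2 * s * v < 1) :
    mgf (fun x ↦ x ^ 2) (gaussianReal 0 v) s = (√(1 - 2 * s * v))⁻¹ := by
  rcases eq_or_ne v 0 with rfl | hv
  · simp [mgf]
  rw [mgf, integral_gaussianReal_eq_integral_smul hv]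
  simp_rw [smul_eq_mul, gaussianPDFReal_zero_mul_exp_mul_sq hv]
  rw [integral_const_mul, integral_gaussian, ← sqrt_inv, ← sqrt_inv, ← sqrt_mul (by positivity)]
  congr 1
  field_simp [(sub_pos.2 hs).ne']

lemma integrable_exp_mul_sq_sub_var_gaussianReal (hs : |s * v| ≤ 1 / 4) :
    Integrable (fun x ↦ exp (s * (x ^ 2 - v))) (gaussianReal 0 v) := by
  simp_rw [mul_sub, exp_sub]
  exact (integrable_exp_mul_sq_gaussianReal (by linarith [le_abs_self (s * v)])).div_const _

lemma mgf_sq_sub_var_gaussianReal_le (hs : |s * v| ≤ 1 / 4) :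
    mgf (fun x ↦ x ^ 2 - v) (gaussianReal 0 v) s ≤ exp (4 * (s * v) ^ 2) := by
  have hlt : 2 * s * v < 1 := by linarith [le_abs_self (s * v)]
  simp_rw [sub_eq_add_neg]
  rw [mgf_add_const, mgf_sq_gaussianReal hlt, mul_comm, mul_neg, mul_assoc 2]
  exact exp_neg_mul_inv_sqrt_one_sub_two_mul_le hs

end GaussianReal

section GaussianChaos

variable {Ω' : Type*} {mΩ : MeasurableSpace Ω'} {P : Measure Ω'} {ι : Type*}
  {Y : ι → Ω' → ℝ} {v : ι → ℝ≥0} {s : ℝ}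

lemma iIndepFun_sq_sub (hY : iIndepFun Y P) (v : ι → ℝ≥0) :
    iIndepFun (fun i ω ↦ Y i ω ^ 2 - (v i : ℝ)) P :=
  hY.comp (fun i x ↦ x ^ 2 - (v i : ℝ)) fun i ↦ by fun_prop

variable [Fintype ι]

lemma integrable_exp_mul_sum_sq_sub_var (hindep : iIndepFun Y P)
    (hmeas : ∀ i, Measurable (Y i)) (hlaw : ∀ i, P.map (Y i) = gaussianReal 0 (v i))
    (hs : ∀ i, |s * v i| ≤ 1 / 4) :
    Integrable (fun ω ↦ exp (s * ∑ i, (Y i ω ^ 2 - v i))) P := by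
  have := hindep.isProbabilityMeasure
  have hint (i) : Integrable (fun ω ↦ exp (s * (Y i ω ^ 2 - v i))) P := by
    have h := integrable_exp_mul_sq_sub_var_gaussianReal (hs i)
    rw [← hlaw i] at h
    exact h.comp_measurable (hmeas i)
  simpa using (iIndepFun_sq_sub hindep v).integrable_exp_mul_sum (by fun_prop)
    (s := Finset.univ) fun i _ ↦ hint i

lemma mgf_sum_sq_sub_var_le (hindep : iIndepFun Y P)
    (hmeas : ∀ i, Measurable (Y i)) (hlaw : ∀ i, P.map (Y i) = gaussianReal 0 (v i))
    (hs : ∀ i, |s * v i| ≤ 1 / 4) :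
    mgf (fun ω ↦ ∑ i, (Y i ω ^ 2 - v i)) P s ≤ exp (4 * s ^ 2 * ∑ i, (v i : ℝ) ^ 2) := by
  have hfactor (i) : mgf (fun ω ↦ Y i ω ^ 2 - v i) P s ≤ exp (4 * (s * v i) ^ 2) := by
    have h := mgf_sq_sub_var_gaussianReal_le (hs i)
    rwa [← hlaw i, mgf_map (hmeas i).aemeasurable (by fun_prop)] at h
  calc mgf (fun ω ↦ ∑ i, (Y i ω ^ 2 - v i)) P s
      = ∏ i, mgf (fun ω ↦ Y i ω ^ 2 - v i) P s := by
        rw [← (iIndepFun_sq_sub hindep v).mgf_sum (by fun_prop) Finset.univ]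
        simp only [Finset.sum_fn]
    _ ≤ ∏ i, exp (4 * (s * v i) ^ 2) :=
        Finset.prod_le_prod (fun _ _ ↦ mgf_nonneg) fun i _ ↦ hfactor i
    _ = exp (4 * s ^ 2 * ∑ i, (v i : ℝ) ^ 2) := by
        simp_rw [← exp_sum, Finset.mul_sum, mul_pow, mul_assoc]

end GaussianChaos

section GaussianMeasure

open scoped InnerProductSpace

variable {E : Type*} [NormedAddCommGroup E] [InnerProductSpace ℝ E]

lemma trace_comp_self_eq_sum_norm_sq {ι : Type*} [Fintype ι] {S : E →ₗ[ℝ] E}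
    (hS : S.IsSymmetric) (b : OrthonormalBasis ι ℝ E) :
    (S ∘ₗ S).trace ℝ E = ∑ i, ‖S (b i)‖ ^ 2 := by
  simp_rw [LinearMap.trace_eq_sum_inner _ b, LinearMap.comp_apply, ← hS _ (S _),
    real_inner_self_eq_norm_sq]

variable [FiniteDimensional ℝ E] [MeasurableSpace E] [BorelSpace E] {μ : Measure E} [IsGaussian μ]

lemma integral_inner_eq_zero_of_integral_eq_zero (hμ : ∫ x, x ∂μ = 0) (e : E) :
    ∫ x, ⟪e, x⟫_ℝ ∂μ = 0 := by
  rw [← inner_zero_right e, ← hμ]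
  exact integral_inner IsGaussian.integrable_id e

lemma map_inner_eq_gaussianReal (hμ : ∫ x, x ∂μ = 0) (e : E) :
    μ.map (fun x ↦ ⟪e, x⟫_ℝ) = gaussianReal 0 (⟪covarianceOperator μ e, e⟫_ℝ).toNNReal := by
  have h := IsGaussian.map_eq_gaussianReal (μ := μ) (innerSL ℝ e)
  have hmean : ∫ x, innerSL ℝ e x ∂μ = 0 := integral_inner_eq_zero_of_integral_eq_zero hμ e
  rw [variance_eq_integral (by fun_prop), hmean] at h
  rw [covarianceOperator_inner IsGaussian.memLp_two_id]
  simpa [pow_two] using h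

lemma iIndepFun_inner_of_covarianceOperator {ι : Type*} [Finite ι] (hμ : ∫ x, x ∂μ = 0)
    {b : ι → E} (hb : Pairwise fun i j ↦ ⟪covarianceOperator μ (b i), b j⟫_ℝ = 0) :
    iIndepFun (fun i x ↦ ⟪b i, x⟫_ℝ) μ := by
  cases nonempty_fintype ι
  have hlaw : HasGaussianLaw (fun x i ↦ ⟪b i, x⟫_ℝ) μ :=
    (IsGaussian.hasGaussianLaw_id (μ := μ)).map_fun (ContinuousLinearMap.pi fun i ↦ innerSL ℝ (b i))
  refine hlaw.iIndepFun_of_covariance_eq_zero fun i j hij ↦ ?_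
  rw [covariance_eq_sub (hlaw.eval i).memLp_two (hlaw.eval j).memLp_two,
    integral_inner_eq_zero_of_integral_eq_zero hμ, zero_mul, sub_zero, ← hb hij,
    covarianceOperator_inner IsGaussian.memLp_two_id]
  rfl

lemma exists_orthonormalBasis_iIndepFun_inner (hμ : ∫ x, x ∂μ = 0) :
    ∃ (b : OrthonormalBasis (Fin (Module.finrank ℝ E)) ℝ E) (v : Fin (Module.finrank ℝ E) → ℝ≥0),
      (∀ i, covarianceOperator μ (b i) = v i • b i) ∧
      (∀ i, μ.map (fun x ↦ ⟪b i, x⟫_ℝ) = gaussianReal 0 (v i)) ∧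
      iIndepFun (fun i x ↦ ⟪b i, x⟫_ℝ) μ := by
  have hpos := isPositive_covarianceOperator (μ := μ)
  set b := hpos.isSymmetric.eigenvectorBasis rfl
  set v := hpos.isSymmetric.eigenvalues rfl
  have hv (i) : 0 ≤ v i := hpos.nonneg_eigenvalues rfl i
  have happly (i) : covarianceOperator μ (b i) = v i • b i :=
    hpos.isSymmetric.apply_eigenvectorBasis rfl i
  refine ⟨b, fun i ↦ (v i).toNNReal, fun i ↦ ?_, fun i ↦ ?_,
    iIndepFun_inner_of_covarianceOperator hμ fun i j hij ↦ ?_⟩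
  · rw [happly, NNReal.smul_def, coe_toNNReal _ (hv i)]
  · rw [map_inner_eq_gaussianReal hμ, happly, real_inner_smul_left, real_inner_self_eq_norm_sq,
      b.norm_eq_one, one_pow, mul_one]
  · simp only [happly, real_inner_smul_left, b.orthonormal.inner_eq_zero hij, mul_zero]

variable {s : ℝ}

theorem integrable_exp_and_mgf_norm_sq_sub_trace_le (hμ : ∫ x, x ∂μ = 0) {S : E →ₗ[ℝ] E}
    (hS : S = covarianceOperator μ) (hs : 16 * s ^ 2 * (S ∘ₗ S).trace ℝ E ≤ 1) :
    Integrable (fun x ↦ exp (s * (‖x‖ ^ 2 - S.trace ℝ E))) μ ∧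
    mgf (fun x ↦ ‖x‖ ^ 2 - S.trace ℝ E) μ s ≤ exp (4 * s ^ 2 * (S ∘ₗ S).trace ℝ E) := by
  obtain ⟨b, v, hbv, hmap, hindep⟩ := exists_orthonormalBasis_iIndepFun_inner hμ
  have hsymm : S.IsSymmetric := hS ▸ isPositive_covarianceOperator.isSymmetric
  have happly (i) : S (b i) = v i • b i := by rw [hS]; exact hbv i
  have htrace : S.trace ℝ E = ∑ i, (v i : ℝ) := by
    simp [LinearMap.trace_eq_sum_inner _ b, happly, NNReal.smul_def, real_inner_smul_right]
  have htrace_sq : (S ∘ₗ S).trace ℝ E = ∑ i, (v i : ℝ) ^ 2 := by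
    simp [trace_comp_self_eq_sum_norm_sq hsymm b, happly, NNReal.smul_def, norm_smul]
  have hsum (x : E) : ‖x‖ ^ 2 - S.trace ℝ E = ∑ i, (⟪b i, x⟫_ℝ ^ 2 - v i) := by
    rw [htrace, ← b.sum_sq_inner_right x, Finset.sum_sub_distrib]
  have hsmall (i) : |s * v i| ≤ 1 / 4 := by
    have hle : (v i : ℝ) ^ 2 ≤ ∑ j, (v j : ℝ) ^ 2 :=
      Finset.single_le_sum (f := fun j ↦ (v j : ℝ) ^ 2) (fun _ _ ↦ sq_nonneg _) (Finset.mem_univ i)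
    refine abs_le_of_sq_le_sq ?_ (by norm_num)
    nlinarith [mul_le_mul_of_nonneg_left hle (sq_nonneg s)]
  simp_rw [htrace_sq, hsum]
  exact ⟨integrable_exp_mul_sum_sq_sub_var hindep (by fun_prop) hmap hsmall,
    mgf_sum_sq_sub_var_le hindep (by fun_prop) hmap hsmall⟩

end GaussianMeasure

section GaussianVector

open scoped InnerProductSpace

variable {Ω' : Type*} {mΩ : MeasurableSpace Ω'} {P : Measure Ω'} {ι : Type*} [Fintype ι]
  {X : ι → Ω' → ℝ} {s : ℝ}

lemma covarianceOperator_map_toLp_inner_basisFun (hX : HasGaussianLaw (fun ω i ↦ X i ω) P)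
    (i j : ι) :
    ⟪covarianceOperator (P.map fun ω ↦ WithLp.toLp 2 (X · ω)) (EuclideanSpace.basisFun ι ℝ i),
      EuclideanSpace.basisFun ι ℝ j⟫_ℝ = ∫ ω, X i ω * X j ω ∂P := by
  have := (hX.toLp_pi 2).isGaussian_map
  rw [covarianceOperator_inner IsGaussian.memLp_two_id,
    integral_map (hX.toLp_pi 2).aemeasurable (by fun_prop)]
  simp

lemma integral_map_toLp_eq_zero (hX : HasGaussianLaw (fun ω i ↦ X i ω) P)
    (hmean : ∀ i, ∫ ω, X i ω ∂P = 0) :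
    ∫ x, x ∂(P.map fun ω ↦ WithLp.toLp 2 (X · ω)) = 0 := by
  rw [integral_map (hX.toLp_pi 2).aemeasurable (by fun_prop)]
  ext i
  rw [PiLp.zero_apply, eval_integral_piLp fun j ↦ (hX.eval j).integrable]
  exact hmean i

theorem integrable_exp_and_mgf_sum_sq_sub_integral_sq_le (hX : HasGaussianLaw (fun ω i ↦ X i ω) P)
    (hmean : ∀ i, ∫ ω, X i ω ∂P = 0)
    (hs : 16 * s ^ 2 * ∑ i, ∑ j, (∫ ω, X i ω * X j ω ∂P) ^ 2 ≤ 1) :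
    Integrable (fun ω ↦ exp (s * ∑ i, (X i ω ^ 2 - ∫ ω', X i ω' ^ 2 ∂P))) P ∧
    mgf (fun ω ↦ ∑ i, (X i ω ^ 2 - ∫ ω', X i ω' ^ 2 ∂P)) P s ≤
      exp (4 * s ^ 2 * ∑ i, ∑ j, (∫ ω, X i ω * X j ω ∂P) ^ 2) := by
  have hlaw := hX.toLp_pi 2
  have := hlaw.isGaussian_map
  let e := EuclideanSpace.basisFun ι ℝ
  let S : EuclideanSpace ℝ ι →ₗ[ℝ] EuclideanSpace ℝ ι :=
    covarianceOperator (P.map fun ω ↦ WithLp.toLp 2 (X · ω))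
  have hentry (i j) : ⟪S (e i), e j⟫_ℝ = ∫ ω, X i ω * X j ω ∂P :=
    covarianceOperator_map_toLp_inner_basisFun hX i j
  have hsymm : S.IsSymmetric := isPositive_covarianceOperator.isSymmetric
  have htrace : S.trace ℝ _ = ∑ i, ∫ ω, X i ω ^ 2 ∂P := by
    simp_rw [S.trace_eq_sum_inner e, ← hsymm _ _, hentry, pow_two]
  have htrace_sq : (S ∘ₗ S).trace ℝ _ = ∑ i, ∑ j, (∫ ω, X i ω * X j ω ∂P) ^ 2 := by
    simp_rw [trace_comp_self_eq_sum_norm_sq hsymm e, ← e.sum_sq_inner_left, hentry]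
  have hnorm (ω) : ∑ i, (X i ω ^ 2 - ∫ ω', X i ω' ^ 2 ∂P)
      = ‖WithLp.toLp 2 (X · ω)‖ ^ 2 - S.trace ℝ _ := by
    rw [htrace, Finset.sum_sub_distrib, EuclideanSpace.real_norm_sq_eq]
  rw [← htrace_sq] at hs ⊢
  simp_rw [hnorm]
  obtain ⟨hint, hmgf⟩ :=
    integrable_exp_and_mgf_norm_sq_sub_trace_le (integral_map_toLp_eq_zero hX hmean) rfl hs
  rw [mgf_map hlaw.aemeasurable (by fun_prop)] at hmgf
  exact ⟨hint.comp_aemeasurable hlaw.aemeasurable, hmgf⟩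

end GaussianVector

section RiemannSum

/-- The left Riemann sum of `f` over `[0, T]` for the partition into `n` intervals of equal
length. -/
def riemannSum (f : ℝ → ℝ) (T : ℝ) (n : ℕ) : ℝ :=
  T / n * ∑ k : Fin n, f (k * (T / n))

lemma abs_mul_sub_integral_le {f : ℝ → ℝ} {a h ε : ℝ} (hh : 0 ≤ h)
    (hf : IntervalIntegrable f volume a (a + h))
    (hε : ∀ u ∈ Set.Icc a (a + h), |f a - f u| ≤ ε) :
    |h * f a - ∫ u in a..a + h, f u| ≤ h * ε := by
  have hconst : h * f a = ∫ _ in a..a + h, f a := by simp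
  rw [hconst, ← intervalIntegral.integral_sub intervalIntegrable_const hf, mul_comm h]
  have hbound := intervalIntegral.norm_integral_le_of_norm_le_const (f := fun u ↦ f a - f u)
    (a := a) (b := a + h) (C := ε) fun u hu ↦ hε u (Set.uIcc_of_le (by linarith : a ≤ a + h) ▸
      Set.uIoc_subset_uIcc hu)
  simpa [abs_of_nonneg hh] using hbound

lemma abs_riemannSum_sub_integral_le {f : ℝ → ℝ} {T δ ε : ℝ} {n : ℕ} (hT : 0 ≤ T) (hn : n ≠ 0)
    (hf : ContinuousOn f (Set.Icc 0 T))
    (hmod : ∀ x ∈ Set.Icc 0 T, ∀ y ∈ Set.Icc 0 T, |x - y| < δ → |f x - f y| ≤ ε)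
    (hmesh : T / n < δ) :
    |riemannSum f T n - ∫ u in 0..T, f u| ≤ T * ε := by
  have hn' : (0 : ℝ) < n := by positivity
  set h := T / n
  have hh : 0 ≤ h := by positivity
  have hnh : n * h = T := mul_div_cancel₀ _ hn'.ne'
  have hcell {k : ℕ} (hk : k < n) : Set.Icc (k * h) (k * h + h) ⊆ Set.Icc 0 T := by
    have hk' : (k + 1 : ℝ) ≤ n := by exact_mod_cast hk
    refine Set.Icc_subset_Icc (by positivity) ?_
    nlinarith
  have hint {k : ℕ} (hk : k < n) : IntervalIntegrable f volume (k * h) (k * h + h) :=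
    (hf.mono (Set.uIcc_of_le (by linarith : k * h ≤ k * h + h) ▸ hcell hk)).intervalIntegrable
  have hsplit : ∫ u in 0..T, f u = ∑ k ∈ Finset.range n, ∫ u in (k * h)..(k * h + h), f u := by
    have := intervalIntegral.sum_integral_adjacent_intervals (f := f) (μ := volume)
      (a := fun k : ℕ ↦ k * h) (n := n) fun _ hk ↦ by
        simpa [add_mul] using hint hk
    simpa [add_mul, hnh] using this.symm
  have hsum : riemannSum f T n = ∑ k ∈ Finset.range n, h * f (k * h) := by
    rw [riemannSum, Fin.sum_univ_eq_sum_range fun k : ℕ ↦ f (k * h), Finset.mul_sum]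
  calc |riemannSum f T n - ∫ u in 0..T, f u|
      ≤ ∑ k ∈ Finset.range n, |h * f (k * h) - ∫ u in (k * h)..(k * h + h), f u| := by
        rw [hsum, hsplit, ← Finset.sum_sub_distrib]
        exact Finset.abs_sum_le_sum_abs _ _
    _ ≤ ∑ _k ∈ Finset.range n, h * ε := by
        refine Finset.sum_le_sum fun _ hk ↦ ?_
        have hk := Finset.mem_range.1 hk
        refine abs_mul_sub_integral_le hh (hint hk) fun u hu ↦ ?_
        refine hmod _ (hcell hk ⟨le_rfl, by linarith⟩) _ (hcell hk hu) ?_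
        rw [abs_sub_comm, abs_of_nonneg (by linarith [hu.1])]
        linarith [hu.2]
    _ = T * ε := by rw [Finset.sum_const, Finset.card_range, nsmul_eq_mul, ← mul_assoc, hnh]

lemma tendsto_riemannSum {f : ℝ → ℝ} {T : ℝ} (hT : 0 < T) (hf : ContinuousOn f (Set.Icc 0 T)) :
    Tendsto (riemannSum f T) atTop (𝓝 (∫ u in 0..T, f u)) := by
  refine Metric.tendsto_atTop'.2 fun ε hε ↦ ?_
  obtain ⟨δ, hδ, hmod⟩ := Metric.uniformContinuousOn_iff.1
    (isCompact_Icc.uniformContinuousOn_of_continuous hf) (ε / (2 * T)) (by positivity)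
  obtain ⟨N, hN⟩ := exists_nat_gt (T / δ)
  refine ⟨N, fun n hn ↦ ?_⟩
  have hnpos : (0 : ℝ) < n := by exact_mod_cast (Nat.zero_le N).trans_lt hn
  have hmesh : T / n < δ := by
    rw [div_lt_iff₀ hδ] at hN
    rw [div_lt_iff₀ hnpos, mul_comm]
    exact hN.trans (mul_lt_mul_of_pos_right (by exact_mod_cast hn) hδ)
  have hle := abs_riemannSum_sub_integral_le hT.le (by exact_mod_cast hnpos.ne') hf
    (fun x hx y hy hxy ↦ (hmod x hx y hy hxy).le) hmesh
  rw [Real.dist_eq]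
  refine hle.trans_lt ?_
  field_simp
  linarith

end RiemannSum

section ExponentialKernel

lemma hasSum_exp_neg_mul_abs_int {a : ℝ} (ha : 0 < a) :
    HasSum (fun m : ℤ ↦ exp (-a * |(m : ℝ)|)) ((1 + exp (-a)) / (1 - exp (-a))) := by
  have hgeom : HasSum (fun m : ℕ ↦ exp (-a) ^ m) (1 - exp (-a))⁻¹ :=
    hasSum_geometric_of_lt_one (exp_pos _).le (exp_lt_one_iff.2 (by linarith))
  have hpow (m : ℕ) : exp (-a * m) = exp (-a) ^ m := by rw [mul_comm, exp_nat_mul]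
  rw [add_div, one_div, div_eq_mul_inv]
  refine HasSum.of_nat_of_neg_add_one ?_ ?_
  · simpa only [Int.cast_natCast, Nat.abs_cast, hpow] using hgeom
  · refine (hgeom.mul_left (exp (-a))).congr_fun fun m ↦ ?_
    rw [← pow_succ', ← hpow, Int.cast_neg, abs_neg]
    exact_mod_cast rfl

lemma sum_exp_neg_mul_abs_sub_le {a : ℝ} (ha : 0 < a) (n j : ℕ) :
    ∑ k : Fin n, exp (-a * |(k : ℝ) - j|) ≤ 2 * (1 + 1 / a) := by
  have hinj : Function.Injective fun k : Fin n ↦ (k : ℤ) - j := fun k l hkl ↦ by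
    simpa [Fin.ext_iff] using hkl
  have hr : exp (-a) * (1 + a) ≤ 1 := by
    rw [exp_neg, inv_mul_le_one₀ (exp_pos a)]
    linarith [add_one_le_exp a]
  have hlt : exp (-a) < 1 := exp_lt_one_iff.2 (by linarith)
  calc ∑ k : Fin n, exp (-a * |(k : ℝ) - j|)
      = ∑ m ∈ Finset.univ.image fun k : Fin n ↦ (k : ℤ) - j, exp (-a * |(m : ℝ)|) := by
        rw [Finset.sum_image hinj.injOn]
        push_cast
        rfl
    _ ≤ (1 + exp (-a)) / (1 - exp (-a)) :=
        sum_le_hasSum _ (fun _ _ ↦ (exp_pos _).le) (hasSum_exp_neg_mul_abs_int ha)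
    _ ≤ 2 * (1 + 1 / a) := by
        rw [div_le_iff₀ (by linarith)]
        field_simp
        nlinarith

lemma riemannSum_exp_neg_mul_abs_sub_le {θ T : ℝ} {n : ℕ} (hθ : 0 < θ) (hT : 0 < T)
    (hn : θ * T ≤ n) (j : ℕ) :
    riemannSum (fun u ↦ exp (-θ * |u - j * (T / n)|)) T n ≤ 4 / θ := by
  have hnpos : (0 : ℝ) < n := (mul_pos hθ hT).trans_le hn
  have habs (k : Fin n) : -θ * |(k : ℝ) * (T / n) - j * (T / n)|
      = -(θ * (T / n)) * |(k : ℝ) - j| := by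
    rw [← sub_mul, abs_mul, abs_of_pos (div_pos hT hnpos)]
    ring
  have hsum := sum_exp_neg_mul_abs_sub_le (a := θ * (T / n)) (by positivity) n j
  simp_rw [riemannSum, habs]
  calc T / n * ∑ k : Fin n, exp (-(θ * (T / n)) * |(k : ℝ) - j|)
      ≤ T / n * (2 * (1 + 1 / (θ * (T / n)))) := by gcongr
    _ = 2 * (θ * T / n + 1) / θ := by field_simp
    _ ≤ 4 / θ := by
        have : θ * T / n ≤ 1 := (div_le_one hnpos).2 hn
        gcongr
        linarith

lemma sum_sum_exp_neg_mul_abs_sub_le {θ T : ℝ} {n : ℕ} (hθ : 0 < θ) (hT : 0 < T)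
    (hn : θ * T ≤ n) :
    (T / n) ^ 2 * ∑ j : Fin n, ∑ k : Fin n, exp (-θ * |(k : ℝ) * (T / n) - j * (T / n)|)
      ≤ 4 * T / θ := by
  have hnpos : (0 : ℝ) < n := (mul_pos hθ hT).trans_le hn
  calc (T / n) ^ 2 * ∑ j : Fin n, ∑ k : Fin n, exp (-θ * |(k : ℝ) * (T / n) - j * (T / n)|)
      = T / n * ∑ j : Fin n, riemannSum (fun u ↦ exp (-θ * |u - j * (T / n)|)) T n := by
        simp_rw [riemannSum, ← Finset.mul_sum]
        ring
    _ ≤ T / n * ∑ _j : Fin n, 4 / θ := by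
        gcongr with j
        exact riemannSum_exp_neg_mul_abs_sub_le hθ hT hn j
    _ = 4 * T / θ := by
        rw [Finset.sum_const, Finset.card_univ, Fintype.card_fin, nsmul_eq_mul]
        field_simp

end ExponentialKernel

section FatouMarkov

variable {Ω' : Type*} {mΩ : MeasurableSpace Ω'} {P : Measure Ω'}

lemma integrable_and_integral_le_of_tendsto {f : ℕ → Ω' → ℝ} {g : Ω' → ℝ} {C : ℝ}
    (hf : ∀ n, 0 ≤ f n) (hint : ∀ᶠ n in atTop, Integrable (f n) P)
    (hbound : ∀ᶠ n in atTop, ∫ ω, f n ω ∂P ≤ C)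
    (hlim : ∀ᵐ ω ∂P, Tendsto (f · ω) atTop (𝓝 (g ω))) :
    Integrable g P ∧ ∫ ω, g ω ∂P ≤ C := by
  obtain ⟨N, hN⟩ := eventually_atTop.1 (hint.and hbound)
  have hint_shift (n) := (hN _ (Nat.le_add_left N n)).1
  have hlim_shift : ∀ᵐ ω ∂P, Tendsto (fun n ↦ f (n + N) ω) atTop (𝓝 (g ω)) :=
    hlim.mono fun ω hω ↦ hω.comp (tendsto_add_atTop_nat N)
  have hg : 0 ≤ᵐ[P] g := hlim.mono fun ω hω ↦ ge_of_tendsto' hω fun n ↦ hf n ω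
  have hgmeas : AEStronglyMeasurable g P :=
    aestronglyMeasurable_of_tendsto_ae atTop (fun n ↦ (hint_shift n).1) hlim_shift
  have hfatou : ∫⁻ ω, ENNReal.ofReal (g ω) ∂P ≤ ENNReal.ofReal C := by
    calc ∫⁻ ω, ENNReal.ofReal (g ω) ∂P
        = ∫⁻ ω, liminf (fun n ↦ ENNReal.ofReal (f (n + N) ω)) atTop ∂P :=
          lintegral_congr_ae <| hlim_shift.mono fun ω hω ↦
            ((ENNReal.continuous_ofReal.tendsto _).comp hω).liminf_eq.symm
      _ ≤ liminf (fun n ↦ ∫⁻ ω, ENNReal.ofReal (f (n + N) ω) ∂P) atTop :=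
          lintegral_liminf_le' fun n ↦ (hint_shift n).aemeasurable.ennreal_ofReal
      _ ≤ ENNReal.ofReal C := by
          refine liminf_le_of_le (by isBoundedDefault) fun b hb ↦ ?_
          obtain ⟨n, hn⟩ := hb.exists
          rw [← ofReal_integral_eq_lintegral_ofReal (hint_shift n) (ae_of_all _ (hf _))] at hn
          exact hn.trans (ENNReal.ofReal_le_ofReal (hN _ (Nat.le_add_left N n)).2)
  refine ⟨⟨hgmeas, (hasFiniteIntegral_iff_ofReal hg).2 (hfatou.trans_lt ENNReal.ofReal_lt_top)⟩, ?_⟩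
  obtain ⟨n, hn⟩ := hbound.exists
  rw [integral_eq_lintegral_of_nonneg_ae hg hgmeas]
  exact ENNReal.toReal_le_of_le_ofReal ((integral_nonneg (hf n)).trans hn) hfatou

lemma measureReal_le_div_of_tendsto_of_integral_le {f : ℕ → Ω' → ℝ} {g : Ω' → ℝ} {C ε : ℝ}
    (hε : 0 < ε) (hf : ∀ n, 0 ≤ f n) (hint : ∀ᶠ n in atTop, Integrable (f n) P)
    (hbound : ∀ᶠ n in atTop, ∫ ω, f n ω ∂P ≤ C)
    (hlim : ∀ᵐ ω ∂P, Tendsto (f · ω) atTop (𝓝 (g ω))) :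
    P.real {ω | ε ≤ g ω} ≤ C / ε := by
  obtain ⟨hg_int, hg_le⟩ := integrable_and_integral_le_of_tendsto hf hint hbound hlim
  have hg : 0 ≤ᵐ[P] g := hlim.mono fun ω hω ↦ ge_of_tendsto' hω fun n ↦ hf n ω
  rw [le_div_iff₀' hε]
  exact (mul_meas_ge_le_integral_of_nonneg hg hg_int ε).trans hg_le

end FatouMarkov

/-- The energy over `[0, T]` of the deviation of the path `f` from its time average: this is
`Y_ii(T)` when `f` is the path of `X_i`. -/
def centeredEnergy (f : ℝ → ℝ) (T : ℝ) : ℝ :=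
  (∫ u in 0..T, f u ^ 2) - (∫ u in 0..T, f u) ^ 2 / T

lemma le_abs_integral_sq_sub_or_le_integral_sq {f : ℝ → ℝ} {v T δ : ℝ} (hv : 0 < v) (hT : 0 < T)
    (hδ : δ < |centeredEnergy f T / (v * T) - 1|) :
    δ * (v * T) / 2 ≤ |(∫ u in 0..T, f u ^ 2) - v * T| ∨
      T * (δ * (v * T) / 2) ≤ (∫ u in 0..T, f u) ^ 2 := by
  have hvT : 0 < v * T := mul_pos hv hT
  set Q := ∫ u in 0..T, f u ^ 2
  set m := (∫ u in 0..T, f u) ^ 2 / T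
  have hm : 0 ≤ m := by positivity
  have hdev : δ * (v * T) < |Q - v * T| + m := by
    rw [div_sub_one hvT.ne', abs_div, abs_of_pos hvT, lt_div_iff₀ hvT] at hδ
    calc δ * (v * T) < |centeredEnergy f T - v * T| := hδ
      _ = |(Q - v * T) - m| := by rw [centeredEnergy, sub_right_comm]
      _ ≤ |Q - v * T| + m := (abs_sub _ _).trans_eq (by rw [abs_of_nonneg hm])
  by_contra! h
  have hm_lt : m < δ * (v * T) / 2 := (div_lt_iff₀' hT).2 h.2
  linarith [h.1]

section GaussianProcess

variable {Ω' : Type*} {mΩ : MeasurableSpace Ω'} {P : Measure Ω'}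

lemma isGaussianProcess_of_map_sum_eq_gaussianReal {S : Type*} {X : S → Ω' → ℝ}
    (hX : ∀ t, AEMeasurable (X t) P)
    (h : ∀ (n : ℕ) (t : Fin n → S) (c : Fin n → ℝ),
      ∃ m v, P.map (fun ω ↦ ∑ j, c j * X (t j) ω) = gaussianReal m v) :
    IsGaussianProcess X P := by
  classical
  refine ⟨fun I ↦ ⟨isGaussian_of_map_eq_gaussianReal fun L ↦ ?_⟩⟩
  obtain ⟨m, v, hmv⟩ := h I.card (fun j ↦ I.equivFin.symm j)
    (fun j ↦ L (Pi.single (I.equivFin.symm j) 1))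
  have hrestrict : AEMeasurable (fun ω ↦ I.restrict (X · ω)) P :=
    aemeasurable_pi_lambda (fun ω (i : I) ↦ X i ω) fun i ↦ hX i
  have hL (x : I → ℝ) :
      L x = ∑ j, L (Pi.single (I.equivFin.symm j) 1) * x (I.equivFin.symm j) := by
    rw [I.equivFin.symm.sum_comp fun i ↦ L (Pi.single i 1) * x i]
    conv_lhs => rw [← Finset.univ_sum_single x, map_sum]
    refine Finset.sum_congr rfl fun i _ ↦ ?_
    rw [mul_comm, ← smul_eq_mul, ← map_smul, ← Pi.single_smul, smul_eq_mul, mul_one]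
  refine ⟨m, v, ?_⟩
  rw [← hmv, AEMeasurable.map_map_of_aemeasurable (by fun_prop) hrestrict]
  congr with ω
  exact hL _

lemma hasGaussianLaw_pi_of_isGaussianProcess {S ι : Type*} [Finite ι] {X : S → Ω' → ℝ}
    (hX : IsGaussianProcess X P) (t : ι → S) : HasGaussianLaw (fun ω i ↦ X (t i) ω) P :=
  have := Fintype.ofFinite ι
  ((hX.comp_right t).hasGaussianLaw Finset.univ).map_fun
    (ContinuousLinearMap.pi fun i ↦
      ContinuousLinearMap.proj (R := ℝ) (φ := fun _ : (Finset.univ : Finset ι) ↦ ℝ)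
        ⟨i, Finset.mem_univ i⟩)

/-- A centered Gaussian process on `[0, ∞)` with almost surely continuous paths which is
asymptotically stationary with variance `v` and decorrelates exponentially fast: `A` and `θ` are
the constant and the rate of both decays. -/
structure IsExpDecayGaussianProcess (A θ v : ℝ) (Z : ℝ → Ω' → ℝ) (P : Measure Ω') : Prop where
  isGaussianProcess : IsGaussianProcess (fun t : ℝ≥0 ↦ Z t) P
  continuousOn : ∀ᵐ ω ∂P, ContinuousOn (Z · ω) (Set.Ici 0)
  integral_eq_zero : ∀ t, 0 ≤ t → ∫ ω, Z t ω ∂P = 0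
  abs_integral_mul_le : ∀ s t, 0 ≤ s → 0 ≤ t →
    |∫ ω, Z s ω * Z t ω ∂P| ≤ A * exp (-θ * |s - t|)
  abs_integral_sq_sub_le : ∀ t, 0 ≤ t → |∫ ω, Z t ω ^ 2 ∂P - v| ≤ A * exp (-θ * t)

namespace IsExpDecayGaussianProcess

variable {A θ v s T : ℝ} {Z : ℝ → Ω' → ℝ} {n : ℕ}

lemma const_nonneg (hZ : IsExpDecayGaussianProcess A θ v Z P) : 0 ≤ A := by
  simpa using (abs_nonneg _).trans (hZ.abs_integral_mul_le 0 0 le_rfl le_rfl)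

lemma hasGaussianLaw_grid (hZ : IsExpDecayGaussianProcess A θ v Z P) (hT : 0 ≤ T) (n : ℕ) :
    HasGaussianLaw (fun ω (k : Fin n) ↦ Z (k * (T / n)) ω) P :=
  hasGaussianLaw_pi_of_isGaussianProcess hZ.isGaussianProcess
    fun k : Fin n ↦ (⟨k * (T / n), by positivity⟩ : ℝ≥0)

lemma memLp_two (hZ : IsExpDecayGaussianProcess A θ v Z P) {t : ℝ} (ht : 0 ≤ t) :
    MemLp (Z t) 2 P :=
  (hZ.isGaussianProcess.hasGaussianLaw_eval ⟨t, ht⟩).memLp_two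

lemma sum_sum_integral_mul_sq_le (hZ : IsExpDecayGaussianProcess A θ v Z P) (hθ : 0 < θ)
    (hT : 0 < T) (hn : θ * T ≤ n) :
    (T / n) ^ 2 * ∑ j : Fin n, ∑ k : Fin n,
      (∫ ω, Z (j * (T / n)) ω * Z (k * (T / n)) ω ∂P) ^ 2 ≤ 4 * A ^ 2 * T / θ := by
  have hentry (j k : Fin n) : (∫ ω, Z (j * (T / n)) ω * Z (k * (T / n)) ω ∂P) ^ 2
      ≤ A ^ 2 * exp (-θ * |(k : ℝ) * (T / n) - j * (T / n)|) := by
    have h := hZ.abs_integral_mul_le (j * (T / n)) (k * (T / n)) (by positivity) (by positivity)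
    rw [abs_sub_comm] at h
    set r := exp (-θ * |(k : ℝ) * (T / n) - j * (T / n)|)
    have hr : r ≤ 1 := exp_le_one_iff.2 <| by
      rw [neg_mul, neg_nonpos]
      positivity
    calc (∫ ω, Z (j * (T / n)) ω * Z (k * (T / n)) ω ∂P) ^ 2
      _ ≤ (A * r) ^ 2 := sq_le_sq.2 (h.trans (le_abs_self _))
      _ = A ^ 2 * (r * r) := by ring
      _ ≤ A ^ 2 * r := by
        gcongr
        exact mul_le_of_le_one_left (exp_pos _).le hr
  calc (T / n) ^ 2 * ∑ j : Fin n, ∑ k : Fin n,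
        (∫ ω, Z (j * (T / n)) ω * Z (k * (T / n)) ω ∂P) ^ 2
      ≤ (T / n) ^ 2 * ∑ j : Fin n, ∑ k : Fin n,
        A ^ 2 * exp (-θ * |(k : ℝ) * (T / n) - j * (T / n)|) := by
        gcongr with j _ k
        exact hentry j k
    _ = A ^ 2 * ((T / n) ^ 2 * ∑ j : Fin n, ∑ k : Fin n,
        exp (-θ * |(k : ℝ) * (T / n) - j * (T / n)|)) := by
        simp_rw [← Finset.mul_sum]
        ring
    _ ≤ A ^ 2 * (4 * T / θ) := by
        gcongr
        exact sum_sum_exp_neg_mul_abs_sub_le hθ hT hn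
    _ = 4 * A ^ 2 * T / θ := by ring

lemma abs_riemannSum_integral_sq_sub_le (hZ : IsExpDecayGaussianProcess A θ v Z P) (hθ : 0 < θ)
    (hT : 0 < T) (hn : θ * T ≤ n) :
    |riemannSum (fun u ↦ ∫ ω, Z u ω ^ 2 ∂P) T n - v * T| ≤ 4 * A / θ := by
  have hnpos : (0 : ℝ) < n := (mul_pos hθ hT).trans_le hn
  have hconst : v * T = T / n * ∑ _k : Fin n, v := by
    rw [Finset.sum_const, Finset.card_univ, Fintype.card_fin, nsmul_eq_mul]
    field_simp
  rw [riemannSum, hconst, ← mul_sub, ← Finset.sum_sub_distrib, abs_mul,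
    abs_of_pos (div_pos hT hnpos)]
  calc T / n * |∑ k : Fin n, (∫ ω, Z (k * (T / n)) ω ^ 2 ∂P - v)|
      ≤ T / n * ∑ k : Fin n, A * exp (-θ * (k * (T / n))) := by
        gcongr
        exact (Finset.abs_sum_le_sum_abs _ _).trans (Finset.sum_le_sum fun k _ ↦
          hZ.abs_integral_sq_sub_le _ (by positivity))
    _ = A * riemannSum (fun u ↦ exp (-θ * |u - (0 : ℕ) * (T / n)|)) T n := by
        have habs (k : Fin n) : |(k : ℝ) * (T / n)| = k * (T / n) := abs_of_nonneg (by positivity)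
        simp_rw [riemannSum, Nat.cast_zero, zero_mul, sub_zero, habs, ← Finset.mul_sum]
        ring
    _ ≤ A * (4 / θ) :=
        mul_le_mul_of_nonneg_left (riemannSum_exp_neg_mul_abs_sub_le hθ hT hn 0) hZ.const_nonneg
    _ = 4 * A / θ := by ring

lemma integrable_and_integral_exp_mul_riemannSum_sq_sub_le
    (hZ : IsExpDecayGaussianProcess A θ v Z P) (hθ : 0 < θ) (hT : 0 < T)
    (hs : 64 * A ^ 2 * T * s ^ 2 ≤ θ) (hn : θ * T ≤ n) :
    Integrable (fun ω ↦ exp (s * (riemannSum (fun u ↦ Z u ω ^ 2) T n - v * T))) P ∧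
    ∫ ω, exp (s * (riemannSum (fun u ↦ Z u ω ^ 2) T n - v * T)) ∂P
      ≤ exp (1 / 4 + |s| * (4 * A / θ)) := by
  set H := ∑ j : Fin n, ∑ k : Fin n, (∫ ω, Z (j * (T / n)) ω * Z (k * (T / n)) ω ∂P) ^ 2
  set bias := riemannSum (fun u ↦ ∫ ω, Z u ω ^ 2 ∂P) T n - v * T
  have hH : 16 * (s * (T / n)) ^ 2 * H ≤ 1 := by
    calc 16 * (s * (T / n)) ^ 2 * H = 16 * s ^ 2 * ((T / n) ^ 2 * H) := by ring
      _ ≤ 16 * s ^ 2 * (4 * A ^ 2 * T / θ) := by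
        gcongr
        exact hZ.sum_sum_integral_mul_sq_le hθ hT hn
      _ = 64 * A ^ 2 * T * s ^ 2 / θ := by ring
      _ ≤ 1 := (div_le_one hθ).2 hs
  have hbias : exp (s * bias) ≤ exp (|s| * (4 * A / θ)) := by
    refine exp_le_exp.2 ((le_abs_self _).trans ?_)
    rw [abs_mul]
    gcongr
    exact hZ.abs_riemannSum_integral_sq_sub_le hθ hT hn
  obtain ⟨hint, hmgf⟩ := integrable_exp_and_mgf_sum_sq_sub_integral_sq_le
    (hZ.hasGaussianLaw_grid hT.le n) (fun k ↦ hZ.integral_eq_zero _ (by positivity)) hH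
  have hfactor (ω) : exp (s * (riemannSum (fun u ↦ Z u ω ^ 2) T n - v * T))
      = exp (s * (T / n) * ∑ k : Fin n,
        (Z (k * (T / n)) ω ^ 2 - ∫ ω', Z (k * (T / n)) ω' ^ 2 ∂P)) * exp (s * bias) := by
    rw [← exp_add, Finset.sum_sub_distrib]
    simp only [bias, riemannSum]
    ring_nf
  simp_rw [hfactor, integral_mul_const]
  refine ⟨hint.mul_const _, ?_⟩
  rw [exp_add]
  refine mul_le_mul (hmgf.trans (exp_le_exp.2 ?_)) hbias (exp_pos _).le (exp_pos _).le
  linarith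

lemma integrable_and_integral_riemannSum_sq_le (hZ : IsExpDecayGaussianProcess A θ v Z P)
    (hθ : 0 < θ) (hT : 0 < T) (hn : θ * T ≤ n) :
    Integrable (fun ω ↦ riemannSum (Z · ω) T n ^ 2) P ∧
    ∫ ω, riemannSum (Z · ω) T n ^ 2 ∂P ≤ 4 * A * T / θ := by
  have hprod (j k : Fin n) : Integrable (fun ω ↦ Z (j * (T / n)) ω * Z (k * (T / n)) ω) P :=
    (hZ.memLp_two (by positivity)).integrable_mul (hZ.memLp_two (by positivity))
  have hsq (ω) : riemannSum (Z · ω) T n ^ 2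
      = (T / n) ^ 2 * ∑ j : Fin n, ∑ k : Fin n, Z (j * (T / n)) ω * Z (k * (T / n)) ω := by
    rw [riemannSum, mul_pow, pow_two (∑ _, _), Finset.sum_mul_sum]
  have hint : Integrable (fun ω ↦ ∑ j : Fin n, ∑ k : Fin n,
      Z (j * (T / n)) ω * Z (k * (T / n)) ω) P :=
    integrable_finsetSum _ fun j _ ↦ integrable_finsetSum _ fun k _ ↦ hprod j k
  simp_rw [hsq]
  refine ⟨hint.const_mul _, ?_⟩
  rw [integral_const_mul,
    integral_finsetSum _ fun j _ ↦ integrable_finsetSum _ fun k _ ↦ hprod j k]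
  simp_rw [integral_finsetSum _ fun k _ ↦ hprod _ k]
  calc (T / n) ^ 2 * ∑ j : Fin n, ∑ k : Fin n, ∫ ω, Z (j * (T / n)) ω * Z (k * (T / n)) ω ∂P
      ≤ (T / n) ^ 2 * ∑ j : Fin n, ∑ k : Fin n,
        A * exp (-θ * |(k : ℝ) * (T / n) - j * (T / n)|) := by
        gcongr with j _ k
        rw [abs_sub_comm]
        exact (le_abs_self _).trans
          (hZ.abs_integral_mul_le _ _ (by positivity) (by positivity))
    _ = A * ((T / n) ^ 2 * ∑ j : Fin n, ∑ k : Fin n,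
        exp (-θ * |(k : ℝ) * (T / n) - j * (T / n)|)) := by
        simp_rw [← Finset.mul_sum]
        ring
    _ ≤ A * (4 * T / θ) :=
        mul_le_mul_of_nonneg_left (sum_sum_exp_neg_mul_abs_sub_le hθ hT hn) hZ.const_nonneg
    _ = 4 * A * T / θ := by ring

lemma measureReal_le_mul_integral_sq_sub_le (hZ : IsExpDecayGaussianProcess A θ v Z P)
    (hθ : 0 < θ) (hT : 0 < T) (hs : 64 * A ^ 2 * T * s ^ 2 ≤ θ) (x : ℝ) :
    P.real {ω | x ≤ s * ((∫ u in 0..T, Z u ω ^ 2) - v * T)}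
      ≤ exp (1 / 4 + |s| * (4 * A / θ) - x) := by
  have hmesh : ∀ᶠ n : ℕ in atTop, θ * T ≤ n :=
    tendsto_natCast_atTop_atTop.eventually_ge_atTop (θ * T)
  have hmoment := hmesh.mono fun n hn ↦
    hZ.integrable_and_integral_exp_mul_riemannSum_sq_sub_le hθ hT hs hn
  have hlim : ∀ᵐ ω ∂P, Tendsto
      (fun n ↦ exp (s * (riemannSum (fun u ↦ Z u ω ^ 2) T n - v * T))) atTop
      (𝓝 (exp (s * ((∫ u in 0..T, Z u ω ^ 2) - v * T)))) := by
    filter_upwards [hZ.continuousOn] with ω hω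
    have hsum := tendsto_riemannSum hT ((hω.mono Set.Icc_subset_Ici_self).pow 2)
    exact (continuous_exp.tendsto _).comp ((hsum.sub_const _).const_mul s)
  rw [exp_sub]
  simpa only [exp_le_exp] using measureReal_le_div_of_tendsto_of_integral_le (exp_pos x)
    (fun n ω ↦ (exp_pos _).le) (hmoment.mono fun _ h ↦ h.1) (hmoment.mono fun _ h ↦ h.2) hlim

lemma measureReal_le_mul_abs_integral_sq_sub_le (hZ : IsExpDecayGaussianProcess A θ v Z P)
    (hθ : 0 < θ) (hT : 0 < T) (hs : 0 ≤ s) (hsT : 64 * A ^ 2 * T * s ^ 2 ≤ θ) (x : ℝ) :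
    P.real {ω | x ≤ s * |(∫ u in 0..T, Z u ω ^ 2) - v * T|}
      ≤ 2 * exp (1 / 4 + s * (4 * A / θ) - x) := by
  have := hZ.isGaussianProcess.isProbabilityMeasure
  have hupper := hZ.measureReal_le_mul_integral_sq_sub_le hθ hT hsT x
  have hlower := hZ.measureReal_le_mul_integral_sq_sub_le hθ hT (s := -s) (by rwa [neg_sq]) x
  rw [abs_neg] at hlower
  rw [abs_of_nonneg hs] at hupper hlower
  rw [two_mul]
  refine (measureReal_mono fun ω hω ↦ ?_).trans
    ((measureReal_union_le _ _).trans (add_le_add hupper hlower))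
  rcases abs_cases ((∫ u in 0..T, Z u ω ^ 2) - v * T) with ⟨habs, -⟩ | ⟨habs, -⟩
  · left
    rwa [Set.mem_ofPred_eq, habs] at hω
  · right
    rwa [Set.mem_ofPred_eq, habs, mul_neg, ← neg_mul] at hω

lemma measureReal_le_integral_sq_le (hZ : IsExpDecayGaussianProcess A θ v Z P)
    (hθ : 0 < θ) (hT : 0 < T) {y : ℝ} (hy : 0 < y) :
    P.real {ω | y ≤ (∫ u in 0..T, Z u ω) ^ 2} ≤ 4 * A * T / θ / y := by
  have hmesh : ∀ᶠ n : ℕ in atTop, θ * T ≤ n :=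
    tendsto_natCast_atTop_atTop.eventually_ge_atTop (θ * T)
  have hmoment := hmesh.mono fun n hn ↦ hZ.integrable_and_integral_riemannSum_sq_le hθ hT hn
  refine measureReal_le_div_of_tendsto_of_integral_le hy (fun n ω ↦ sq_nonneg _)
    (hmoment.mono fun _ h ↦ h.1) (hmoment.mono fun _ h ↦ h.2) ?_
  filter_upwards [hZ.continuousOn] with ω hω
  exact (tendsto_riemannSum hT (hω.mono Set.Icc_subset_Ici_self)).pow 2

lemma variance_le_two_mul_const (hZ : IsExpDecayGaussianProcess A θ v Z P) : v ≤ 2 * A := by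
  have hsmall := (abs_le.1 (hZ.abs_integral_mul_le 0 0 le_rfl le_rfl)).2
  have hclose := (abs_le.1 (hZ.abs_integral_sq_sub_le 0 le_rfl)).1
  simp only [← pow_two, sub_self, abs_zero, mul_zero, exp_zero, mul_one] at hsmall hclose
  linarith

lemma measureReal_lt_abs_centeredEnergy_div_sub_one_le
    (hZ : IsExpDecayGaussianProcess A θ v Z P) (hθ : 0 < θ) (hv : 0 < v) (hT : 1 ≤ T)
    {δ : ℝ} (hδ : 0 < δ) :
    P.real {ω | δ < |centeredEnergy (Z · ω) T / (v * T) - 1|}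
      ≤ 2 * exp (1 / 4 + 1 / (2 * √θ) - v * √θ * δ * √T / (16 * A))
        + 8 * A / (θ * v * δ * T) := by
  have := hZ.isGaussianProcess.isProbabilityMeasure
  have hA : 0 < A := by linarith [hZ.variance_le_two_mul_const]
  have hTpos : 0 < T := one_pos.trans_le hT
  have hsqrt_θ : √θ ^ 2 = θ := sq_sqrt hθ.le
  have hsqrt_T : √T ^ 2 = T := sq_sqrt hTpos.le
  -- The largest exponent for which the moment bound holds.
  set s := √θ / (8 * A * √T) with hs
  have hs_nonneg : 0 ≤ s := by positivity
  have hexponent : 64 * A ^ 2 * T * s ^ 2 = θ := by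
    rw [hs, div_pow, mul_pow, hsqrt_θ, hsqrt_T]
    field_simp
    norm_num
  have hbias : s * (4 * A / θ) ≤ 1 / (2 * √θ) := by
    calc s * (4 * A / θ) = 1 / (2 * √θ) / √T := by
          rw [hs]
          field_simp
          linarith
      _ ≤ 1 / (2 * √θ) := div_le_self (by positivity) (one_le_sqrt.2 hT)
  have hthreshold : s * (δ * (v * T) / 2) = v * √θ * δ * √T / (16 * A) := by
    rw [hs]
    field_simp
    linarith
  have henergy := hZ.measureReal_le_mul_abs_integral_sq_sub_le hθ hTpos hs_nonneg hexponent.le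
    (s * (δ * (v * T) / 2))
  have hmean := hZ.measureReal_le_integral_sq_le hθ hTpos
    (show 0 < T * (δ * (v * T) / 2) by positivity)
  refine (measureReal_mono fun ω hω ↦ ?_).trans
    ((measureReal_union_le _ _).trans (add_le_add (henergy.trans ?_) (hmean.trans_eq ?_)))
  · exact (le_abs_integral_sq_sub_or_le_integral_sq hv hTpos hω).imp_left
      (mul_le_mul_of_nonneg_left · hs_nonneg)
  · rw [hthreshold]
    gcongr
  · field_simp
    norm_num

end IsExpDecayGaussianProcess

theorem stmt_10_general {A θ v T : ℝ} {Z : ℝ → Ω' → ℝ}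
    (hZ : IsExpDecayGaussianProcess A θ v Z P) (hθ : 0 < θ) (hv : 0 < v) (hT : exp 1 ≤ T) :
    P.real {ω | 8 * A / (v * √θ) * log T / √T < |centeredEnergy (Z · ω) T / (v * T) - 1|}
      ≤ (2 * exp (1 / 4 + 1 / (2 * √θ)) + 1 / √θ) / √T := by
  have hA : 0 < A := by linarith [hZ.variance_le_two_mul_const]
  have hTpos : 0 < T := (exp_pos 1).trans_le hT
  have hT_one : 1 ≤ T := (one_le_exp zero_le_one).trans hT
  have hlog : 0 < log T := log_pos ((one_lt_exp_iff.2 one_pos).trans_le hT)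
  set δ := 8 * A / (v * √θ) * log T / √T with hδ
  have hloss : v * √θ * δ * √T / (16 * A) = log √T := by
    rw [hδ, log_sqrt hTpos.le]
    field_simp
    norm_num
  have hmean : 8 * A / (θ * v * δ * T) ≤ 1 / √θ / √T := by
    calc 8 * A / (θ * v * δ * T) = 1 / √θ / √T / log T := by
          rw [hδ, ← sq_sqrt hθ.le, ← sq_sqrt hTpos.le, sqrt_sq (sqrt_nonneg θ),
            sqrt_sq (sqrt_nonneg T)]
          field_simp
      _ ≤ 1 / √θ / √T := div_le_self (by positivity) ((le_log_iff_exp_le hTpos).2 hT)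
  calc P.real {ω | δ < |centeredEnergy (Z · ω) T / (v * T) - 1|}
    _ ≤ 2 * exp (1 / 4 + 1 / (2 * √θ) - v * √θ * δ * √T / (16 * A))
        + 8 * A / (θ * v * δ * T) :=
      hZ.measureReal_lt_abs_centeredEnergy_div_sub_one_le hθ hv hT_one (by positivity)
    _ ≤ 2 * exp (1 / 4 + 1 / (2 * √θ) - log √T) + 1 / √θ / √T := by
      rw [hloss]
      gcongr
    _ = 2 * (exp (1 / 4 + 1 / (2 * √θ)) / √T) + 1 / √θ / √T := by
      rw [exp_sub, exp_log (sqrt_pos.2 hTpos)]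
    _ = (2 * exp (1 / 4 + 1 / (2 * √θ)) + 1 / √θ) / √T := by ring

end GaussianProcess

lemma ouY_self {Ω' : Type} (X : Fin 2 → ℝ → Ω' → ℝ) (i : Fin 2) (T : ℝ) (ω : Ω') :
    ouY X i i T ω = centeredEnergy (X i · ω) T := by
  rcases eq_or_ne T 0 with rfl | hT
  · simp [ouY, centeredEnergy]
  · simp only [ouY, ouXbar, centeredEnergy, pow_two]
    field_simp

namespace IsOUPair

variable {θ s t : ℝ} {X : Fin 2 → ℝ → Ω → ℝ}

lemma isGaussianProcess (hX : IsOUPair θ X) (i : Fin 2) :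
    IsGaussianProcess (fun t : ℝ≥0 ↦ X i t) ℙ :=
  isGaussianProcess_of_map_sum_eq_gaussianReal (fun t ↦ (hX.meas i t).aemeasurable)
    fun n t c ↦ ⟨0, hX.gaussian i n (fun j ↦ t j) c fun j ↦ (t j).coe_nonneg⟩

lemma integral_eq_zero (hX : IsOUPair θ X) (i : Fin 2) (ht : 0 ≤ t) :
    ∫ ω, X i t ω ∂ℙ = 0 := by
  obtain ⟨v, hv⟩ := hX.gaussian i 1 (fun _ ↦ t) (fun _ ↦ 1) fun _ ↦ ht
  simp only [Finset.univ_unique, one_mul, Finset.sum_const, Finset.card_singleton, one_smul] at hv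
  rw [← integral_map (f := fun x ↦ x) (hX.meas i t).aemeasurable (by fun_prop), hv,
    integral_id_gaussianReal]

lemma abs_integral_mul_le (hX : IsOUPair θ X) (hθ : 0 < θ) (i : Fin 2) (hs : 0 ≤ s)
    (ht : 0 ≤ t) : |∫ ω, X i s ω * X i t ω ∂ℙ| ≤ 1 / (2 * θ) * exp (-θ * |s - t|) := by
  have hdist : |s - t| ≤ t + s := abs_le.2 ⟨by linarith, by linarith⟩
  have hle : exp (-θ * (t + s)) ≤ exp (-θ * |s - t|) :=
    exp_le_exp.2 (mul_le_mul_of_nonpos_left hdist (neg_nonpos.2 hθ.le))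
  rw [hX.cov i s t hs ht, abs_sub_comm t s, abs_of_nonneg (div_nonneg (sub_nonneg.2 hle)
    (by positivity)), one_div_mul_eq_div]
  gcongr
  exact sub_le_self _ (exp_pos _).le

lemma abs_integral_sq_sub_le (hX : IsOUPair θ X) (hθ : 0 < θ) (i : Fin 2) (ht : 0 ≤ t) :
    |∫ ω, X i t ω ^ 2 ∂ℙ - 1 / (2 * θ)| ≤ 1 / (2 * θ) * exp (-θ * t) := by
  have hvar : ∫ ω, X i t ω ^ 2 ∂ℙ - 1 / (2 * θ) = -(1 / (2 * θ) * exp (-θ * (t + t))) := by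
    simp_rw [pow_two, hX.cov i t t ht ht, sub_self, abs_zero, mul_zero, exp_zero]
    ring
  rw [hvar, abs_neg, abs_of_nonneg (by positivity)]
  gcongr 1 / (2 * θ) * exp ?_
  exact mul_le_mul_of_nonpos_left (by linarith) (neg_nonpos.2 hθ.le)

lemma isExpDecayGaussianProcess (hX : IsOUPair θ X) (hθ : 0 < θ) (i : Fin 2) :
    IsExpDecayGaussianProcess (1 / (2 * θ)) θ (1 / (2 * θ)) (X i) ℙ where
  isGaussianProcess := hX.isGaussianProcess i
  continuousOn := hX.cont.mono fun _ h ↦ h i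
  integral_eq_zero _ := hX.integral_eq_zero i
  abs_integral_mul_le _ _ := hX.abs_integral_mul_le hθ i
  abs_integral_sq_sub_le _ := hX.abs_integral_sq_sub_le hθ i

end IsOUPair

/-- there exist `c(θ) > 0`, `K(θ) > 0` and `T₀(θ) ≥ e` such that for
all `T ≥ T₀(θ)`, `P(|2θ·Y₁₁(T)/T − 1| > c(θ)·ln(T)/√T) ≤ K(θ)/√T`. -/
theorem stmt_10 (θ : ℝ) (hθ : 0 < θ) [IsProbabilityMeasure (ℙ : Measure Ω)]
    (X : Fin 2 → ℝ → Ω → ℝ) (hX : IsOUPair θ X) :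
    ∃ c K T₀ : ℝ, 0 < c ∧ 0 < K ∧ Real.exp 1 ≤ T₀ ∧ ∀ T : ℝ, T₀ ≤ T →
      (ℙ {ω | c * Real.log T / Real.sqrt T < |2 * θ * ouY X 0 0 T ω / T - 1|}).toReal
        ≤ K / Real.sqrt T := by
  have hZ := hX.isExpDecayGaussianProcess hθ 0
  refine ⟨8 / √θ, 2 * exp (1 / 4 + 1 / (2 * √θ)) + 1 / √θ, exp 1, by positivity, by positivity,
    le_rfl, fun T hT ↦ ?_⟩
  have hconst : 8 / √θ = 8 * (1 / (2 * θ)) / (1 / (2 * θ) * √θ) := by field_simp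
  have hscale (ω) :
      2 * θ * ouY X 0 0 T ω / T = centeredEnergy (X 0 · ω) T / (1 / (2 * θ) * T) := by
    rw [ouY_self]
    field_simp
  simp_rw [hconst, hscale]
  exact stmt_10_general hZ hθ (by positivity) hT

end
end

section
/- For every θ > 0, every integer n ≥ 1 and every mesh 0 < Δₙ ≤ 1, the discretization error δ(n) := A(n) − F_{Tₙ} satisfies E[δ(n)²] ≤ C_θ · n·Δₙ², where C_θ := 4 · max( 8/(9θ), (√2/3)·θ^{−1/2}, 1/4 ). In particular, if Δₙ → 0 and n·Δₙ² → 0 as n → ∞, then E[δ(n)²] → 0. -/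
open MeasureTheory ProbabilityTheory Real Filter Finset
open scoped Topology ENNReal NNReal

noncomputable section

variable {Ω : Type} [MeasureSpace Ω]

/-!
The left Riemann sum of `Z = X₁X₂` with mesh `Δ` is the integral of `u ↦ Z(⌊u/Δ⌋Δ)`, so with
`T = nΔ` the error is `δ(n) = T^{-1/2} ∫₀ᵀ (Z(⌊u/Δ⌋Δ) − Z(u)) du`. By Cauchy–Schwarz and Fubini,
`E[δ(n)²] ≤ T · sup E[(Z(s) − Z(t))²]`, the supremum being over `s ≤ t ≤ s + Δ` in `[0, ∞)`.
If `K` is the Ornstein–Uhlenbeck covariance, independence gives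
`E[(Z(s) − Z(t))²] = K(s,s)² − 2K(s,t)² + K(t,t)²`. With `q = e^{−2θ(t−s)}` and the stationary
variance `v = 1/(2θ)`, one has `K(s,t)² = qK(s,s)²` and `K(t,t) = (1 − q)v + qK(s,s)`, so convexity
of the square bounds this by `2(1 − q)v² ≤ (t − s)/θ`. Hence `E[δ(n)²] ≤ nΔ²/θ`.
-/

section MeanSquare

variable {α β : Type*} {mα : MeasurableSpace α} {mβ : MeasurableSpace β}
  {ν : Measure α} {μ : Measure β}

lemma sq_integral_le_measureReal_univ_mul_integral_sq [IsFiniteMeasure ν] {f : α → ℝ}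
    (hf : MemLp f 2 ν) : (∫ x, f x ∂ν) ^ 2 ≤ ν.real Set.univ * ∫ x, f x ^ 2 ∂ν := by
  rcases eq_or_ne ν 0 with rfl | hν
  · simp
  have : NeZero ν := ⟨hν⟩
  have jensen : (⨍ x, f x ∂ν) ^ 2 ≤ ⨍ x, f x ^ 2 ∂ν :=
    even_two.convexOn_pow.map_average_le (by fun_prop) isClosed_univ (by simp)
      (hf.integrable one_le_two) hf.integrable_sq
  have hpos : 0 < ν.real Set.univ := measureReal_univ_pos
  simp only [average_eq, smul_eq_mul] at jensen
  calc (∫ x, f x ∂ν) ^ 2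
      = ν.real Set.univ ^ 2 * ((ν.real Set.univ)⁻¹ * ∫ x, f x ∂ν) ^ 2 := by field_simp
    _ ≤ ν.real Set.univ ^ 2 * ((ν.real Set.univ)⁻¹ * ∫ x, f x ^ 2 ∂ν) := by gcongr
    _ = ν.real Set.univ * ∫ x, f x ^ 2 ∂ν := by field_simp

lemma integral_sq_integral_le [IsFiniteMeasure ν] [SFinite μ] {D : α → β → ℝ}
    (hD : MemLp (Function.uncurry D) 2 (ν.prod μ)) :
    ∫ y, (∫ x, D x y ∂ν) ^ 2 ∂μ ≤ ν.real Set.univ * ∫ x, ∫ y, D x y ^ 2 ∂μ ∂ν := by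
  have hsq : Integrable (Function.uncurry fun x y => D x y ^ 2) (ν.prod μ) := hD.integrable_sq
  have hle : ∀ᵐ y ∂μ, (∫ x, D x y ∂ν) ^ 2 ≤ ν.real Set.univ * ∫ x, D x y ^ 2 ∂ν := by
    filter_upwards [hsq.prod_left_ae, hD.aestronglyMeasurable.prod_swap.prodMk_left]
      with y hy hmeas
    exact sq_integral_le_measureReal_univ_mul_integral_sq ((memLp_two_iff_integrable_sq hmeas).2 hy)
  calc ∫ y, (∫ x, D x y ∂ν) ^ 2 ∂μ
      ≤ ∫ y, ν.real Set.univ * ∫ x, D x y ^ 2 ∂ν ∂μ :=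
        integral_mono_of_nonneg (.of_forall fun _ => sq_nonneg _)
          (hsq.integral_prod_right.const_mul _) hle
    _ = ν.real Set.univ * ∫ x, ∫ y, D x y ^ 2 ∂μ ∂ν := by
        rw [integral_const_mul, integral_integral_swap hsq]

lemma memLp_two_uncurry_of_integral_sq_le [IsFiniteMeasure ν] [SFinite μ] {D : α → β → ℝ} {C : ℝ}
    (hmeas : AEStronglyMeasurable (Function.uncurry D) (ν.prod μ))
    (hL2 : ∀ᵐ x ∂ν, MemLp (D x) 2 μ) (hC : ∀ᵐ x ∂ν, ∫ y, D x y ^ 2 ∂μ ≤ C) :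
    MemLp (Function.uncurry D) 2 (ν.prod μ) := by
  have hmeas_sq : AEStronglyMeasurable (Function.uncurry D ^ 2) (ν.prod μ) := hmeas.pow 2
  refine (memLp_two_iff_integrable_sq hmeas).2 ((integrable_prod_iff hmeas_sq).2 ⟨?_, ?_⟩)
  · filter_upwards [hL2] with x hx using hx.integrable_sq
  · refine .of_bound hmeas_sq.norm.integral_prod_right' C ?_
    filter_upwards [hC] with x hx
    have hpos : 0 ≤ ∫ y, D x y ^ 2 ∂μ := integral_nonneg fun _ => sq_nonneg _
    simpa [abs_of_nonneg hpos] using hx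

lemma integral_sq_integral_le_of_integral_sq_le [IsFiniteMeasure ν] [SFinite μ] {D : α → β → ℝ}
    {C : ℝ} (hmeas : AEStronglyMeasurable (Function.uncurry D) (ν.prod μ))
    (hL2 : ∀ᵐ x ∂ν, MemLp (D x) 2 μ) (hC : ∀ᵐ x ∂ν, ∫ y, D x y ^ 2 ∂μ ≤ C) :
    ∫ y, (∫ x, D x y ∂ν) ^ 2 ∂μ ≤ ν.real Set.univ ^ 2 * C := by
  have hD := memLp_two_uncurry_of_integral_sq_le hmeas hL2 hC
  have hmean : ∫ x, ∫ y, D x y ^ 2 ∂μ ∂ν ≤ ν.real Set.univ * C := by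
    simpa using integral_mono_ae hD.integrable_sq.integral_prod_left (integrable_const C) hC
  calc ∫ y, (∫ x, D x y ∂ν) ^ 2 ∂μ
      ≤ ν.real Set.univ * ∫ x, ∫ y, D x y ^ 2 ∂μ ∂ν := integral_sq_integral_le hD
    _ ≤ ν.real Set.univ * (ν.real Set.univ * C) := by gcongr
    _ = ν.real Set.univ ^ 2 * C := by ring

end MeanSquare

section Measurability

variable {α β ι E : Type*} {mα : MeasurableSpace α} {mβ : MeasurableSpace β}
  {ν : Measure α} {μ : Measure β}
  [LinearOrder ι] [TopologicalSpace ι] [OrderClosedTopology ι]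
  [TopologicalSpace.MetrizableSpace ι] [SecondCountableTopology ι] [MeasurableSpace ι]
  [OpensMeasurableSpace ι]
  [TopologicalSpace E] [TopologicalSpace.PseudoMetrizableSpace E] [MeasurableSpace E]
  [BorelSpace E] {a : ι} {Z : ι → β → E}

lemma exists_measurable_uncurry_of_ae_continuousOn_Ici
    (hmeas : ∀ t, a ≤ t → Measurable (Z t))
    (hcont : ∀ᵐ y ∂μ, ContinuousOn (fun t => Z t y) (Set.Ici a)) :
    ∃ Y : ι → β → E, Measurable (Function.uncurry Y) ∧ ∀ᵐ y ∂μ, ∀ t, a ≤ t → Y t y = Z t y := by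
  classical
  obtain ⟨N, hN, hN_meas, hN_null⟩ := exists_measurable_superset_of_null (ae_iff.1 hcont)
  -- Paths in the null set `N`, and all paths before time `a`, are stopped at their value at `a`.
  refine ⟨fun t y => if y ∈ N then Z a y else Z (max a t) y, ?_, ?_⟩
  · refine measurable_uncurry_of_continuous_of_measurable (fun y => ?_) fun t =>
      Measurable.ite hN_meas (hmeas a le_rfl) (hmeas _ (le_max_left a t))
    by_cases hy : y ∈ N
    · simpa only [hy, if_true] using continuous_const
    · have hy_cont : ContinuousOn (fun t => Z t y) (Set.Ici a) := not_not.1 fun h => hy (hN h)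
      simp only [hy, if_false]
      exact hy_cont.comp_continuous (by fun_prop) fun t => le_max_left a t
  · filter_upwards [measure_eq_zero_iff_ae_notMem.1 hN_null] with y hy t ht
    simp [hy, max_eq_right ht]

lemma aemeasurable_uncurry_comp_of_ae_continuousOn_Ici [SFinite μ] {g : α → ι}
    (hmeas : ∀ t, a ≤ t → Measurable (Z t))
    (hcont : ∀ᵐ y ∂μ, ContinuousOn (fun t => Z t y) (Set.Ici a))
    (hg : Measurable g) (hag : ∀ᵐ x ∂ν, a ≤ g x) :
    AEMeasurable (fun p : α × β => Z (g p.1) p.2) (ν.prod μ) := by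
  obtain ⟨Y, hY, hYZ⟩ := exists_measurable_uncurry_of_ae_continuousOn_Ici hmeas hcont
  refine ⟨fun p => Y (g p.1) p.2, hY.comp ((hg.comp measurable_fst).prodMk measurable_snd), ?_⟩
  filter_upwards [Measure.quasiMeasurePreserving_fst.ae hag,
    Measure.quasiMeasurePreserving_snd.ae hYZ] with p hp hYp
  exact (hYp _ hp).symm

end Measurability

section RiemannSum

/-- The last point of the grid `{kΔ : k ∈ ℕ}` before time `u`. The left Riemann sum of `f` with
mesh `Δ` is the integral of `f ∘ gridFloor Δ`. For `u < 0` the value is `0`. -/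
def gridFloor (Δ u : ℝ) : ℝ := ⌊u / Δ⌋₊ * Δ

variable {Δ u : ℝ}

lemma measurable_gridFloor (Δ : ℝ) : Measurable (gridFloor Δ) := by
  unfold gridFloor
  fun_prop

lemma gridFloor_nonneg (hΔ : 0 ≤ Δ) (u : ℝ) : 0 ≤ gridFloor Δ u := by
  unfold gridFloor
  positivity

lemma gridFloor_le (hΔ : 0 < Δ) (hu : 0 ≤ u) : gridFloor Δ u ≤ u :=
  (le_div_iff₀ hΔ).1 (Nat.floor_le (by positivity))

lemma le_gridFloor_add (hΔ : 0 < Δ) (u : ℝ) : u ≤ gridFloor Δ u + Δ := by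
  have h := (div_lt_iff₀ hΔ).1 (Nat.lt_floor_add_one (u / Δ))
  unfold gridFloor
  linarith

lemma gridFloor_eq_of_mem_Ico (hΔ : 0 < Δ) {k : ℕ}
    (hu : u ∈ Set.Ico (k * Δ) ((k + 1 : ℕ) * Δ)) : gridFloor Δ u = k * Δ := by
  have hu0 : 0 ≤ u := le_trans (by positivity) hu.1
  have hfloor : ⌊u / Δ⌋₊ = k := by
    rw [Nat.floor_eq_iff (by positivity), le_div_iff₀ hΔ, div_lt_iff₀ hΔ]
    exact_mod_cast hu
  rw [gridFloor, hfloor]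

lemma eqOn_comp_gridFloor {α : Type*} (hΔ : 0 < Δ) (f : ℝ → α) (k : ℕ) :
    Set.EqOn (fun u => f (gridFloor Δ u)) (fun _ => f (k * Δ))
      (Set.uIoo (k * Δ) ((k + 1 : ℕ) * Δ)) := by
  intro u hu
  rw [Set.uIoo_of_le (by gcongr; simp)] at hu
  exact congrArg f (gridFloor_eq_of_mem_Ico hΔ (Set.Ioo_subset_Ico_self hu))

variable {E : Type*} [NormedAddCommGroup E]

lemma intervalIntegrable_comp_gridFloor_cell (hΔ : 0 < Δ) (f : ℝ → E) (k : ℕ) :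
    IntervalIntegrable (fun u => f (gridFloor Δ u)) volume (k * Δ) ((k + 1 : ℕ) * Δ) :=
  intervalIntegrable_const.congr_uIoo (eqOn_comp_gridFloor hΔ f k).symm

lemma intervalIntegrable_comp_gridFloor (hΔ : 0 < Δ) (f : ℝ → E) (n : ℕ) :
    IntervalIntegrable (fun u => f (gridFloor Δ u)) volume 0 (n * Δ) := by
  simpa using IntervalIntegrable.trans_iterate (a := fun k : ℕ => (k : ℝ) * Δ) (n := n)
    fun k _ => intervalIntegrable_comp_gridFloor_cell hΔ f k

variable [NormedSpace ℝ E] [CompleteSpace E]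

lemma integral_comp_gridFloor (hΔ : 0 < Δ) (f : ℝ → E) (n : ℕ) :
    ∫ u in (0 : ℝ)..n * Δ, f (gridFloor Δ u) = Δ • ∑ k ∈ range n, f (k * Δ) := by
  have hcell (k : ℕ) :
      ∫ u in (k * Δ : ℝ)..(k + 1 : ℕ) * Δ, f (gridFloor Δ u) = Δ • f (k * Δ) := by
    rw [intervalIntegral.integral_congr_uIoo (eqOn_comp_gridFloor hΔ f k),
      intervalIntegral.integral_const]
    congr 1
    push_cast
    ring
  have hsum := intervalIntegral.sum_integral_adjacent_intervals (n := n)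
    (a := fun k : ℕ => (k : ℝ) * Δ) fun k _ => intervalIntegrable_comp_gridFloor_cell hΔ f k
  simp only [hcell, Nat.cast_zero, zero_mul] at hsum
  rw [← hsum, smul_sum]

lemma smul_sum_sub_integral_eq_integral_gridFloor (hΔ : 0 < Δ) {f : ℝ → E} {n : ℕ}
    (hf : IntervalIntegrable f volume 0 (n * Δ)) :
    Δ • ∑ k ∈ range n, f (k * Δ) - ∫ u in (0 : ℝ)..n * Δ, f u
      = ∫ u in (0 : ℝ)..n * Δ, (f (gridFloor Δ u) - f u) := by
  rw [intervalIntegral.integral_sub (intervalIntegrable_comp_gridFloor hΔ f n) hf,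
    integral_comp_gridFloor hΔ]

theorem integral_sq_riemannSum_sub_integral_le {β : Type*} {mβ : MeasurableSpace β}
    {μ : Measure β} [SFinite μ] {Z : ℝ → β → ℝ} {C : ℝ} (hΔ : 0 < Δ) (n : ℕ)
    (hmeas : ∀ t, 0 ≤ t → Measurable (Z t))
    (hcont : ∀ᵐ y ∂μ, ContinuousOn (fun t => Z t y) (Set.Ici 0))
    (hL2 : ∀ t, 0 ≤ t → MemLp (Z t) 2 μ)
    (hC : ∀ s t, 0 ≤ s → s ≤ t → t ≤ s + Δ → ∫ y, (Z s y - Z t y) ^ 2 ∂μ ≤ C) :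
    ∫ y, (Δ * ∑ k ∈ range n, Z (k * Δ) y - ∫ u in (0 : ℝ)..n * Δ, Z u y) ^ 2 ∂μ
      ≤ (n * Δ) ^ 2 * C := by
  have hT : 0 ≤ n * Δ := by positivity
  set ν : Measure ℝ := volume.restrict (Set.Ioc 0 (n * Δ)) with hν
  have hν_nonneg : ∀ᵐ u ∂ν, 0 ≤ u := by
    filter_upwards [ae_restrict_mem measurableSet_Ioc] with u hu using hu.1.le
  have herr : ∀ᵐ y ∂μ, (Δ * ∑ k ∈ range n, Z (k * Δ) y - ∫ u in (0 : ℝ)..n * Δ, Z u y) ^ 2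
      = (∫ u, (Z (gridFloor Δ u) y - Z u y) ∂ν) ^ 2 := by
    filter_upwards [hcont] with y hy
    have hpath : IntervalIntegrable (fun u => Z u y) volume 0 (n * Δ) :=
      (hy.mono (Set.uIcc_of_le hT ▸ Set.Icc_subset_Ici_self)).intervalIntegrable
    rw [← smul_eq_mul, smul_sum_sub_integral_eq_integral_gridFloor hΔ hpath,
      intervalIntegral.integral_of_le hT]
  have hD_meas : AEStronglyMeasurable
      (Function.uncurry fun u y => Z (gridFloor Δ u) y - Z u y) (ν.prod μ) :=
    ((aemeasurable_uncurry_comp_of_ae_continuousOn_Ici hmeas hcont (measurable_gridFloor Δ)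
      (.of_forall (gridFloor_nonneg hΔ.le))).sub
      (aemeasurable_uncurry_comp_of_ae_continuousOn_Ici hmeas hcont measurable_id
        hν_nonneg)).aestronglyMeasurable
  have hD_L2 : ∀ᵐ u ∂ν, MemLp (fun y => Z (gridFloor Δ u) y - Z u y) 2 μ := by
    filter_upwards [hν_nonneg] with u hu
    exact (hL2 _ (gridFloor_nonneg hΔ.le u)).sub (hL2 u hu)
  have hD_le : ∀ᵐ u ∂ν, ∫ y, (Z (gridFloor Δ u) y - Z u y) ^ 2 ∂μ ≤ C := by
    filter_upwards [hν_nonneg] with u hu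
    exact hC _ _ (gridFloor_nonneg hΔ.le u) (gridFloor_le hΔ hu) (le_gridFloor_add hΔ u)
  rw [integral_congr_ae herr]
  simpa [hν, hT] using integral_sq_integral_le_of_integral_sq_le hD_meas hD_L2 hD_le

end RiemannSum

section IndependentProducts

variable {β : Type*} {mβ : MeasurableSpace β} {μ : Measure β} {U U' V V' : β → ℝ}

lemma memLp_two_mul_of_indepFun (hU : MemLp U 2 μ) (hV : MemLp V 2 μ) (hUV : IndepFun U V μ) :
    MemLp (fun y => U y * V y) 2 μ := by
  have hsq : Integrable (fun y => U y ^ 2 * V y ^ 2) μ :=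
    (hUV.comp (measurable_id.pow_const 2) (measurable_id.pow_const 2)).integrable_mul
      hU.integrable_sq hV.integrable_sq
  exact (memLp_two_iff_integrable_sq (hU.1.mul hV.1)).2
    (by simpa only [Pi.mul_apply, mul_pow] using hsq)

lemma integrable_mul_mul_of_indepFun (hU : MemLp U 2 μ) (hU' : MemLp U' 2 μ) (hV : MemLp V 2 μ)
    (hV' : MemLp V' 2 μ) (hUV : IndepFun (fun y => (U y, U' y)) (fun y => (V y, V' y)) μ) :
    Integrable (fun y => U y * U' y * (V y * V' y)) μ :=
  (hUV.comp measurable_mul measurable_mul).integrable_mul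
    (hU.integrable_mul hU') (hV.integrable_mul hV')

lemma integral_mul_mul_of_indepFun (hU : MemLp U 2 μ) (hU' : MemLp U' 2 μ) (hV : MemLp V 2 μ)
    (hV' : MemLp V' 2 μ) (hUV : IndepFun (fun y => (U y, U' y)) (fun y => (V y, V' y)) μ) :
    ∫ y, U y * U' y * (V y * V' y) ∂μ = (∫ y, U y * U' y ∂μ) * ∫ y, V y * V' y ∂μ :=
  (hUV.comp measurable_mul measurable_mul).integral_fun_mul_eq_mul_integral
    (hU.integrable_mul hU').1 (hV.integrable_mul hV').1

lemma integral_sq_mul_sub_mul_of_indepFun (hU : MemLp U 2 μ) (hU' : MemLp U' 2 μ)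
    (hV : MemLp V 2 μ) (hV' : MemLp V' 2 μ)
    (hUV : IndepFun (fun y => (U y, U' y)) (fun y => (V y, V' y)) μ) :
    ∫ y, (U y * V y - U' y * V' y) ^ 2 ∂μ
      = (∫ y, U y * U y ∂μ) * (∫ y, V y * V y ∂μ)
        - 2 * ((∫ y, U y * U' y ∂μ) * ∫ y, V y * V' y ∂μ)
        + (∫ y, U' y * U' y ∂μ) * ∫ y, V' y * V' y ∂μ := by
  have hindep : IndepFun (fun y => (U y, U y)) (fun y => (V y, V y)) μ :=
    hUV.comp (measurable_fst.prodMk measurable_fst) (measurable_fst.prodMk measurable_fst)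
  have hindep' : IndepFun (fun y => (U' y, U' y)) (fun y => (V' y, V' y)) μ :=
    hUV.comp (measurable_snd.prodMk measurable_snd) (measurable_snd.prodMk measurable_snd)
  have hprod := integrable_mul_mul_of_indepFun hU hU hV hV hindep
  have hprod_cross := (integrable_mul_mul_of_indepFun hU hU' hV hV' hUV).const_mul 2
  have hprod' := integrable_mul_mul_of_indepFun hU' hU' hV' hV' hindep'
  calc ∫ y, (U y * V y - U' y * V' y) ^ 2 ∂μ
      = ∫ y, U y * U y * (V y * V y) - 2 * (U y * U' y * (V y * V' y))
          + U' y * U' y * (V' y * V' y) ∂μ := by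
        congr with y
        ring
    _ = (∫ y, U y * U y * (V y * V y) ∂μ) - 2 * (∫ y, U y * U' y * (V y * V' y) ∂μ)
          + ∫ y, U' y * U' y * (V' y * V' y) ∂μ := by
        rw [integral_add (by exact hprod.sub hprod_cross) hprod', integral_sub hprod hprod_cross,
          integral_const_mul]
    _ = _ := by
        rw [integral_mul_mul_of_indepFun hU hU hV hV hindep,
          integral_mul_mul_of_indepFun hU hU' hV hV' hUV,
          integral_mul_mul_of_indepFun hU' hU' hV' hV' hindep']

end IndependentProducts

section OrnsteinUhlenbeck

/-- The covariance `E[X(s)X(t)]` of the Ornstein–Uhlenbeck process with mean-reversion rate `θ`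
started at `0`. -/
def ouCov (θ s t : ℝ) : ℝ := (exp (-θ * |t - s|) - exp (-θ * (t + s))) / (2 * θ)

variable {β : Type} {mβ : MeasurableSpace β} {μ : Measure β} {X : Fin 2 → ℝ → β → ℝ}
  {θ s t : ℝ}

lemma ouCov_self (θ t : ℝ) : ouCov θ t t = (1 - exp (-θ * (t + t))) / (2 * θ) := by
  simp [ouCov]

lemma ouCov_self_nonneg (hθ : 0 < θ) (ht : 0 ≤ t) : 0 ≤ ouCov θ t t := by
  rw [ouCov_self]
  have : exp (-θ * (t + t)) ≤ 1 := exp_le_one_iff.2 (by nlinarith)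
  have := sub_nonneg.2 this
  positivity

lemma ouCov_self_le (hθ : 0 < θ) (t : ℝ) : ouCov θ t t ≤ 1 / (2 * θ) := by
  rw [ouCov_self]
  gcongr
  linarith [exp_pos (-θ * (t + t))]

lemma ouCov_eq_exp_mul_ouCov_self (hst : s ≤ t) :
    ouCov θ s t = exp (-θ * (t - s)) * ouCov θ s s := by
  have hexp : exp (-θ * (t + s)) = exp (-θ * (t - s)) * exp (-θ * (s + s)) := by
    rw [← exp_add]
    ring_nf
  rw [ouCov_self, ouCov, abs_of_nonneg (sub_nonneg.2 hst), hexp]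
  ring

lemma ouCov_self_eq_convexCombination (θ s t : ℝ) :
    ouCov θ t t = (1 - exp (-θ * (t - s)) ^ 2) * (1 / (2 * θ))
      + exp (-θ * (t - s)) ^ 2 * ouCov θ s s := by
  have hexp : exp (-θ * (t + t)) = exp (-θ * (t - s)) ^ 2 * exp (-θ * (s + s)) := by
    rw [← exp_nat_mul, ← exp_add]
    push_cast
    ring_nf
  rw [ouCov_self, ouCov_self, hexp]
  ring

lemma ouCov_sq_increment_le (hθ : 0 < θ) (hs : 0 ≤ s) (hst : s ≤ t) :
    ouCov θ s s ^ 2 - 2 * ouCov θ s t ^ 2 + ouCov θ t t ^ 2 ≤ (t - s) / θ := by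
  set q := exp (-θ * (t - s)) ^ 2 with hq
  set v := 1 / (2 * θ) with hv
  set a := ouCov θ s s
  have hq_le : q ≤ 1 := pow_le_one₀ (exp_pos _).le (exp_le_one_iff.2 (by nlinarith))
  have hq_sub : 1 - q ≤ 2 * θ * (t - s) := by
    have : q = exp (-(2 * θ * (t - s))) := by
      rw [hq, ← exp_nat_mul]
      push_cast
      ring_nf
    linarith [add_one_le_exp (-(2 * θ * (t - s)))]
  have ha_sq : a ^ 2 ≤ v ^ 2 := by
    gcongr
    exacts [ouCov_self_nonneg hθ hs, ouCov_self_le hθ s]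
  have hcross : ouCov θ s t ^ 2 = q * a ^ 2 := by
    rw [ouCov_eq_exp_mul_ouCov_self hst, mul_pow]
  have hconvex : ouCov θ t t ^ 2 ≤ (1 - q) * v ^ 2 + q * a ^ 2 := by
    rw [ouCov_self_eq_convexCombination θ s t]
    exact even_two.convexOn_pow.2 (Set.mem_univ v) (Set.mem_univ a) (sub_nonneg.2 hq_le)
      (sq_nonneg _) (sub_add_cancel 1 q)
  calc a ^ 2 - 2 * ouCov θ s t ^ 2 + ouCov θ t t ^ 2
      ≤ (1 - q) * (a ^ 2 + v ^ 2) := by linarith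
    _ ≤ 2 * θ * (t - s) * (v ^ 2 + v ^ 2) := by
        have := sub_nonneg.2 hst
        gcongr
    _ = (t - s) / θ := by
        rw [hv]
        field_simp
        ring

lemma integral_sq_mul_sub_mul_le_of_ouCov (hθ : 0 < θ) (hL2 : ∀ i t, 0 ≤ t → MemLp (X i t) 2 μ)
    (hindep : IndepFun (fun y t => X 0 t y) (fun y t => X 1 t y) μ)
    (hcov : ∀ i s t, 0 ≤ s → 0 ≤ t → ∫ y, X i s y * X i t y ∂μ = ouCov θ s t)
    (hs : 0 ≤ s) (hst : s ≤ t) :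
    ∫ y, (X 0 s y * X 1 s y - X 0 t y * X 1 t y) ^ 2 ∂μ ≤ (t - s) / θ := by
  have ht : 0 ≤ t := hs.trans hst
  have heval : Measurable fun x : ℝ → ℝ => (x s, x t) := by fun_prop
  rw [integral_sq_mul_sub_mul_of_indepFun (hL2 0 s hs) (hL2 0 t ht) (hL2 1 s hs) (hL2 1 t ht)
    (hindep.comp heval heval)]
  simp only [hcov _ _ _ hs hs, hcov _ _ _ hs ht, hcov _ _ _ ht ht]
  simpa only [sq] using ouCov_sq_increment_le hθ hs hst

lemma IsOUPair.memLp_two {X : Fin 2 → ℝ → Ω → ℝ} (hX : IsOUPair θ X) (i : Fin 2)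
    (ht : 0 ≤ t) : MemLp (X i t) 2 ℙ := by
  obtain ⟨v, hv⟩ := hX.gaussian i 1 (fun _ => t) (fun _ => 1) fun _ => ht
  have hmap : Measure.map (X i t) ℙ = gaussianReal 0 v := by simpa using hv
  have hid : MemLp id 2 (Measure.map (X i t) ℙ) := hmap ▸ memLp_id_gaussianReal 2
  exact hid.comp_of_map (hX.meas i t).aemeasurable

lemma ouA_sub_ouF {β : Type} (X : Fin 2 → ℝ → β → ℝ) {n : ℕ} (hn : 1 ≤ n) {Δ : ℝ}
    (hΔ : 0 < Δ) (y : β) :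
    ouA X n Δ y - ouF X (n * Δ) y = 1 / √(n * Δ) *
      (Δ * ∑ k ∈ range n, X 0 (k * Δ) y * X 1 (k * Δ) y
        - ∫ u in (0 : ℝ)..n * Δ, X 0 u y * X 1 u y) := by
  have hscale : √(n * Δ) / n = 1 / √(n * Δ) * Δ := by
    have : √(n * Δ) ≠ 0 := by positivity
    field_simp
    rw [sq_sqrt (by positivity), mul_comm]
  rw [ouA, ouF, hscale]
  ring

theorem integral_sq_ouA_sub_ouF_le [SFinite μ]
    (hθ : 0 < θ) (hmeas : ∀ i t, 0 ≤ t → Measurable (X i t))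
    (hL2 : ∀ i t, 0 ≤ t → MemLp (X i t) 2 μ)
    (hindep : IndepFun (fun y t => X 0 t y) (fun y t => X 1 t y) μ)
    (hcont : ∀ᵐ y ∂μ, ∀ i, ContinuousOn (fun t => X i t y) (Set.Ici 0))
    (hcov : ∀ i s t, 0 ≤ s → 0 ≤ t → ∫ y, X i s y * X i t y ∂μ = ouCov θ s t)
    {n : ℕ} (hn : 1 ≤ n) {Δ : ℝ} (hΔ : 0 < Δ) :
    ∫ y, (ouA X n Δ y - ouF X (n * Δ) y) ^ 2 ∂μ ≤ 1 / θ * (n * Δ ^ 2) := by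
  have hriemann := integral_sq_riemannSum_sub_integral_le
    (Z := fun t y => X 0 t y * X 1 t y) (C := Δ / θ) hΔ n
    (fun t ht => (hmeas 0 t ht).mul (hmeas 1 t ht))
    (by filter_upwards [hcont] with y hy using (hy 0).mul (hy 1))
    (fun t ht => memLp_two_mul_of_indepFun (hL2 0 t ht) (hL2 1 t ht)
      (hindep.comp (measurable_pi_apply t) (measurable_pi_apply t)))
    fun s t hs hst hts => (integral_sq_mul_sub_mul_le_of_ouCov hθ hL2 hindep hcov hs hst).trans
      (by gcongr; linarith)
  simp only [ouA_sub_ouF X hn hΔ, mul_pow, div_pow, one_pow, integral_const_mul,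
    sq_sqrt (by positivity : 0 ≤ n * Δ)]
  calc _ ≤ 1 / (n * Δ) * ((n * Δ) ^ 2 * (Δ / θ)) := by gcongr
    _ = 1 / θ * (n * Δ ^ 2) := by field_simp

lemma one_div_le_four_mul_max (hθ : 0 < θ) (c : ℝ) : 1 / θ ≤ 4 * max (8 / (9 * θ)) c := by
  have hle : 1 / θ ≤ 4 * (8 / (9 * θ)) := by
    rw [← mul_div_assoc, div_le_div_iff₀ hθ (by positivity)]
    linarith
  exact hle.trans (by gcongr; exact le_max_left _ _)

end OrnsteinUhlenbeck

theorem stmt_11_general {β : Type} {mβ : MeasurableSpace β} {μ : Measure β}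
    [IsProbabilityMeasure μ] {θ : ℝ} (hθ : 0 < θ) {X : Fin 2 → ℝ → β → ℝ}
    (hmeas : ∀ i t, 0 ≤ t → Measurable (X i t))
    (hL2 : ∀ i t, 0 ≤ t → MemLp (X i t) 2 μ)
    (hindep : IndepFun (fun y t => X 0 t y) (fun y t => X 1 t y) μ)
    (hcont : ∀ᵐ y ∂μ, ∀ i, ContinuousOn (fun t => X i t y) (Set.Ici 0))
    (hcov : ∀ i s t, 0 ≤ s → 0 ≤ t → ∫ y, X i s y * X i t y ∂μ = ouCov θ s t) :
    (∀ n : ℕ, 1 ≤ n → ∀ Δ : ℝ, 0 < Δ →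
      ∫ y, (ouA X n Δ y - ouF X (n * Δ) y) ^ 2 ∂μ ≤ 1 / θ * (n * Δ ^ 2)) ∧
    (∀ Δ : ℕ → ℝ, (∀ n, 0 < Δ n) →
      Tendsto (fun n : ℕ => (n : ℝ) * (Δ n) ^ 2) atTop (𝓝 0) →
      Tendsto (fun n : ℕ => ∫ y, (ouA X n (Δ n) y - ouF X (n * Δ n) y) ^ 2 ∂μ)
        atTop (𝓝 0)) := by
  have hbound (n : ℕ) (hn : 1 ≤ n) (Δ : ℝ) (hΔ : 0 < Δ) :=
    integral_sq_ouA_sub_ouF_le hθ hmeas hL2 hindep hcont hcov hn hΔ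
  refine ⟨hbound, fun Δ hΔ hlim => squeeze_zero' (g := fun n => 1 / θ * (n * Δ n ^ 2)) ?_ ?_ ?_⟩
  · exact .of_forall fun n => integral_nonneg fun y => sq_nonneg _
  · filter_upwards [eventually_ge_atTop 1] with n hn using hbound n hn (Δ n) (hΔ n)
  · simpa only [mul_zero] using hlim.const_mul (1 / θ)

/-- the discretization error `δ(n) = A(n) − F_{Tₙ}` (with `Tₙ = nΔₙ`)
satisfies `E[δ(n)²] ≤ C_θ·n·Δₙ²` with `C_θ = 4·max(8/(9θ), (√2/3)θ^{−1/2}, 1/4)`;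
in particular if `Δₙ → 0` and `nΔₙ² → 0` then `E[δ(n)²] → 0`. -/
theorem stmt_11 (θ : ℝ) (hθ : 0 < θ) [IsProbabilityMeasure (ℙ : Measure Ω)]
    (X : Fin 2 → ℝ → Ω → ℝ) (hX : IsOUPair θ X) :
    (∀ n : ℕ, 1 ≤ n → ∀ Δ : ℝ, 0 < Δ → Δ ≤ 1 →
      ∫ ω, (ouA X n Δ ω - ouF X (n * Δ) ω) ^ 2 ∂ℙ
        ≤ (4 * max (8 / (9 * θ)) (max (Real.sqrt 2 / 3 * (1 / Real.sqrt θ)) (1 / 4)))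
            * ((n : ℝ) * Δ ^ 2)) ∧
    (∀ Δ : ℕ → ℝ, (∀ n, 0 < Δ n) → Tendsto Δ atTop (𝓝 0) →
      Tendsto (fun n : ℕ => (n : ℝ) * (Δ n) ^ 2) atTop (𝓝 0) →
      Tendsto (fun n : ℕ => ∫ ω, (ouA X n (Δ n) ω - ouF X (n * Δ n) ω) ^ 2 ∂ℙ)
        atTop (𝓝 0)) := by
  have h := stmt_11_general hθ (fun i t _ => hX.meas i t) (fun i _ => hX.memLp_two i)
    hX.indep hX.cont hX.cov
  exact ⟨fun n hn Δ hΔ _ => (h.1 n hn Δ hΔ).trans (by gcongr; exact one_div_le_four_mul_max hθ _),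
    fun Δ hΔ _ => h.2 Δ hΔ⟩

end
end

section
/- For every θ > 0 there exists a constant C(θ) > 0, depending only on θ, such that for every integer n ≥ 1 and every mesh Δₙ with 0 < Δₙ ≤ 1 and nΔₙ ≥ 1, d_Kol( A(n), N(0, 1/(4θ³)) ) ≤ C(θ) · max( (nΔₙ)^{−1/2}, (nΔₙ²)^{1/3} ). In particular, if Δₙ → 0, nΔₙ → ∞ and nΔₙ² → 0 as n → ∞, then A(n) converges in distribution to N(0, 1/(4θ³)). -/
open MeasureTheory ProbabilityTheory Real Filter Finset
open scoped Topology ENNReal NNReal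

noncomputable section

variable {Ω : Type} [MeasureSpace Ω]

/-!
Given the path of `X₁`, the statistic `A(n) = x ⬝ᵥ B *ᵥ y` is linear in the Gaussian vector `y` of
observations of `X₂`, hence centred Gaussian with variance the quadratic form
`Q(x) = x ⬝ᵥ (B K Bᵀ) *ᵥ x` in the observations `x` of `X₁`. Rescaling a standard normal law gives
`dKol(N(0, v), N(0, w)) ≤ (2 / w) |v - w|`, so the distance of `A(n)` to `N(0, w)` is at most
`(2 / w) 𝔼|Q - w| ≤ (2 / w) (√Var Q + |𝔼 Q - w|)`. By Isserlis' formula `𝔼 Q` and `Var Q` are traces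
of powers of the covariance matrix `(r ^ |i - j| - r ^ (i + j)) / (2θ)`, `r = e^{-θΔ}`. Geometric
sums show `Var Q = O(1 / (nΔ))`, while `𝔼 Q` differs from `(Δ / (4θ²)) (1 + r²) / (1 - r²)` by
`O(1 / (nΔ))`, and the latter is within `O(Δ)` of `1 / (4θ³)`.
-/

section KolmogorovDistance

lemma dKol_nonneg (μ ν : Measure ℝ) : 0 ≤ dKol μ ν :=
  Real.iSup_nonneg fun _ => abs_nonneg _

lemma abs_real_Iic_sub_real_Iic_le_one (μ ν : Measure ℝ) [IsProbabilityMeasure μ]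
    [IsProbabilityMeasure ν] (z : ℝ) : |μ.real (Set.Iic z) - ν.real (Set.Iic z)| ≤ 1 :=
  abs_sub_le_of_nonneg_of_le measureReal_nonneg measureReal_le_one measureReal_nonneg
    measureReal_le_one

lemma dKol_le_one (μ ν : Measure ℝ) [IsProbabilityMeasure μ] [IsProbabilityMeasure ν] :
    dKol μ ν ≤ 1 :=
  ciSup_le (abs_real_Iic_sub_real_Iic_le_one μ ν)

lemma abs_real_Iic_sub_real_Iic_le_dKol (μ ν : Measure ℝ) [IsProbabilityMeasure μ]
    [IsProbabilityMeasure ν] (z : ℝ) : |μ.real (Set.Iic z) - ν.real (Set.Iic z)| ≤ dKol μ ν :=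
  le_ciSup (f := fun z => |μ.real (Set.Iic z) - ν.real (Set.Iic z)|)
    ⟨1, Set.forall_mem_range.2 (abs_real_Iic_sub_real_Iic_le_one μ ν)⟩ z

lemma dKol_map_prod_le_integral {E F : Type*} [MeasurableSpace E] [MeasurableSpace F]
    {μ : Measure E} [IsProbabilityMeasure μ] {ν : Measure F} [IsProbabilityMeasure ν]
    {f : E × F → ℝ} (hf : Measurable f) (ρ : Measure ℝ) [IsProbabilityMeasure ρ] {g : E → ℝ}
    (hg : Integrable g μ) (hfg : ∀ x, dKol (ν.map fun y => f (x, y)) ρ ≤ g x) :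
    dKol ((μ.prod ν).map f) ρ ≤ ∫ x, g x ∂μ := by
  refine ciSup_le fun z => ?_
  have hfx (x : E) : Measurable fun y => f (x, y) := hf.comp measurable_prodMk_left
  set G : E → ℝ := fun x => (ν.map fun y => f (x, y)).real (Set.Iic z)
  have hG (x : E) : G x = ν.real (Prod.mk x ⁻¹' (f ⁻¹' Set.Iic z)) :=
    map_measureReal_apply (hfx x) measurableSet_Iic
  have hGm : Measurable G := by
    rw [funext hG]
    exact (measurable_measure_prodMk_left (hf measurableSet_Iic)).ennreal_toReal
  have hprob (x : E) : IsProbabilityMeasure (ν.map fun y => f (x, y)) :=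
    Measure.isProbabilityMeasure_map (hfx x).aemeasurable
  have hGi : Integrable G μ :=
    .of_bound hGm.aestronglyMeasurable 1 <| .of_forall fun x => by
      simpa only [Real.norm_of_nonneg measureReal_nonneg, G] using measureReal_le_one
  have hdisint : ((μ.prod ν).map f).real (Set.Iic z) = ∫ x, G x ∂μ := by
    simp only [hG]
    rw [map_measureReal_apply hf measurableSet_Iic, measureReal_def,
      Measure.prod_apply (hf measurableSet_Iic), ← integral_toReal
        (measurable_measure_prodMk_left (hf measurableSet_Iic)).aemeasurable
        (.of_forall fun x => measure_lt_top _ _)]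
    rfl
  calc |((μ.prod ν).map f).real (Set.Iic z) - ρ.real (Set.Iic z)|
      = |∫ x, (G x - ρ.real (Set.Iic z)) ∂μ| := by
        rw [hdisint, integral_sub hGi (integrable_const _), integral_const, probReal_univ, one_smul]
    _ ≤ ∫ x, |G x - ρ.real (Set.Iic z)| ∂μ := abs_integral_le_integral_abs
    _ ≤ ∫ x, g x ∂μ :=
        integral_mono (hGi.sub (integrable_const _)).abs hg fun x =>
          (abs_real_Iic_sub_real_Iic_le_dKol _ _ z).trans (hfg x)

end KolmogorovDistance

section GaussianScaling

lemma gaussianPDFReal_zero_one_le_exp {a x : ℝ} (h : |a| ≤ |x|) :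
    gaussianPDFReal 0 1 x ≤ exp (-(a ^ 2 / 2)) := by
  have hsqrt : 1 ≤ √(2 * π) := one_le_sqrt.2 (by linarith [pi_gt_three])
  have hexp : exp (-(x ^ 2 / 2)) ≤ exp (-(a ^ 2 / 2)) := by
    have := sq_le_sq.2 h
    gcongr
  calc gaussianPDFReal 0 1 x = (√(2 * π))⁻¹ * exp (-(x ^ 2 / 2)) := by
        simp [gaussianPDFReal, neg_div]
    _ ≤ 1 * exp (-(a ^ 2 / 2)) := by gcongr; exact inv_le_one_of_one_le₀ hsqrt
    _ = exp (-(a ^ 2 / 2)) := one_mul _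

lemma abs_mul_exp_neg_sq_div_two_le_one (a : ℝ) : |a| * exp (-(a ^ 2 / 2)) ≤ 1 := by
  rw [exp_neg, ← div_eq_mul_inv, div_le_one (exp_pos _)]
  nlinarith [add_one_le_exp (a ^ 2 / 2), sq_nonneg (|a| - 1), sq_abs a]

lemma gaussianReal_real_Iic_sub_real_Iic {v : ℝ≥0} (hv : v ≠ 0) (m a b : ℝ) :
    (gaussianReal m v).real (Set.Iic b) - (gaussianReal m v).real (Set.Iic a)
      = ∫ x in a..b, gaussianPDFReal m v x := by
  have hIic (c : ℝ) :
      (gaussianReal m v).real (Set.Iic c) = ∫ x in Set.Iic c, gaussianPDFReal m v x := by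
    rw [measureReal_def, gaussianReal_apply_eq_integral m hv,
      ENNReal.toReal_ofReal (integral_nonneg fun x => gaussianPDFReal_nonneg m v x)]
  have hint := integrable_gaussianPDFReal m v
  rw [hIic, hIic, intervalIntegral.integral_Iic_sub_Iic hint.integrableOn hint.integrableOn]

lemma abs_le_abs_of_mem_uIoc_mul {a r x : ℝ} (hr : 1 ≤ r) (hx : x ∈ Set.uIoc a (r * a)) :
    |a| ≤ |x| := by
  rcases le_total 0 a with ha | ha
  · rw [Set.uIoc_of_le (le_mul_of_one_le_left ha hr)] at hx
    exact abs_le_abs_of_nonneg ha hx.1.le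
  · rw [Set.uIoc_of_ge (mul_le_of_one_le_left ha hr)] at hx
    exact abs_le_abs_of_nonpos ha hx.2

lemma abs_gaussianReal_real_Iic_mul_sub_le {r : ℝ} (hr : 1 ≤ r) (a : ℝ) :
    |(gaussianReal 0 1).real (Set.Iic (r * a)) - (gaussianReal 0 1).real (Set.Iic a)| ≤ r - 1 := by
  have hr' : |r - 1| = r - 1 := abs_of_nonneg (sub_nonneg.2 hr)
  rw [gaussianReal_real_Iic_sub_real_Iic one_ne_zero]
  calc |∫ x in a..r * a, gaussianPDFReal 0 1 x|
      ≤ exp (-(a ^ 2 / 2)) * |r * a - a| := by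
        rw [← norm_eq_abs]
        refine intervalIntegral.norm_integral_le_of_norm_le_const fun x hx => ?_
        rw [norm_of_nonneg (gaussianPDFReal_nonneg _ _ _)]
        exact gaussianPDFReal_zero_one_le_exp (abs_le_abs_of_mem_uIoc_mul hr hx)
    _ = |a| * exp (-(a ^ 2 / 2)) * (r - 1) := by
        rw [← hr', show r * a - a = (r - 1) * a by ring, abs_mul]
        ring
    _ ≤ r - 1 :=
        mul_le_of_le_one_left (sub_nonneg.2 hr) (abs_mul_exp_neg_sq_div_two_le_one a)

lemma gaussianReal_zero_one_map_sqrt_mul (v : ℝ≥0) :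
    (gaussianReal 0 1).map (√v * ·) = gaussianReal 0 v := by
  rw [gaussianReal_map_const_mul, mul_zero]
  congr 1
  ext
  simp

lemma gaussianReal_zero_real_Iic {v : ℝ≥0} (hv : v ≠ 0) (z : ℝ) :
    (gaussianReal 0 v).real (Set.Iic z) = (gaussianReal 0 1).real (Set.Iic (z / √v)) := by
  have hv' : 0 < √(v : ℝ) := sqrt_pos.2 (by positivity)
  rw [← gaussianReal_zero_one_map_sqrt_mul, map_measureReal_apply (by fun_prop) measurableSet_Iic]
  congr 1
  ext x
  simp only [Set.mem_preimage, Set.mem_Iic, le_div_iff₀' hv']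

lemma dKol_gaussianReal_le_of_le {v w : ℝ≥0} (hv : v ≠ 0) (hvw : v ≤ w) :
    dKol (gaussianReal 0 v) (gaussianReal 0 w) ≤ w / v - 1 := by
  refine ciSup_le fun z => ?_
  have hw : w ≠ 0 := (hv.bot_lt.trans_le hvw).ne'
  have : 0 < √(v : ℝ) := sqrt_pos.2 (by positivity)
  have : 0 < √(w : ℝ) := sqrt_pos.2 (by positivity)
  have hr : 1 ≤ √(w / v : ℝ) :=
    one_le_sqrt.2 ((one_le_div (by positivity)).2 (by exact_mod_cast hvw))
  have hz : z / √v = √(w / v : ℝ) * (z / √w) := by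
    rw [sqrt_div w.coe_nonneg]
    field_simp
  change |(gaussianReal 0 v).real (Set.Iic z) - (gaussianReal 0 w).real (Set.Iic z)| ≤ _
  rw [gaussianReal_zero_real_Iic hv, gaussianReal_zero_real_Iic hw, hz]
  refine (abs_gaussianReal_real_Iic_mul_sub_le hr _).trans (sub_le_sub_right ?_ 1)
  exact sqrt_le_self_iff.2 (.inr (one_le_sqrt.1 hr))

lemma dKol_comm (μ ν : Measure ℝ) : dKol μ ν = dKol ν μ := by
  simp only [dKol, abs_sub_comm]

lemma dKol_gaussianReal_le (v : ℝ≥0) {w : ℝ≥0} (hw : w ≠ 0) :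
    dKol (gaussianReal 0 v) (gaussianReal 0 w) ≤ 2 / w * |(v : ℝ) - w| := by
  have hw0 : (0 : ℝ) < w := by positivity
  rcases le_total w v with hwv | hvw
  · have hsub : (0 : ℝ) ≤ v - w := sub_nonneg.2 (by exact_mod_cast hwv)
    calc dKol (gaussianReal 0 v) (gaussianReal 0 w) ≤ v / w - 1 := by
          rw [dKol_comm]
          exact dKol_gaussianReal_le_of_le hw hwv
      _ = 1 / w * (v - w) := by field_simp
      _ ≤ 2 / w * |(v : ℝ) - w| := by
          rw [abs_of_nonneg hsub]
          gcongr
          norm_num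
  · have habs : |(v : ℝ) - w| = w - v := by
      rw [abs_sub_comm, abs_of_nonneg (sub_nonneg.2 (by exact_mod_cast hvw))]
    have hvw' : (v : ℝ) ≤ w := by exact_mod_cast hvw
    rw [habs]
    rcases lt_or_ge (v : ℝ) (w / 2) with hsmall | hlarge
    · refine (dKol_le_one _ _).trans ?_
      rw [div_mul_eq_mul_div, one_le_div hw0]
      linarith
    · have hv0 : (0 : ℝ) < v := by linarith
      calc dKol (gaussianReal 0 v) (gaussianReal 0 w) ≤ w / v - 1 :=
            dKol_gaussianReal_le_of_le (by exact_mod_cast hv0.ne') hvw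
        _ = 1 / v * (w - v) := by field_simp
        _ ≤ 1 / (w / 2) * (w - v) := by gcongr
        _ = 2 / w * (w - v) := by field_simp

end GaussianScaling

section GaussianMoments

open scoped Nat

lemma integral_pow_gaussianReal_zero_one (k : ℕ) :
    ∫ x, x ^ (2 * k) ∂gaussianReal 0 1 = (2 * k - 1 : ℕ)‼ := by
  have habs (x : ℝ) : gaussianPDFReal 0 1 x • x ^ (2 * k)
      = (√(2 * π))⁻¹ * (|x| ^ (2 * k : ℝ) * exp (-(1 / 2) * |x| ^ (2 : ℝ))) := by
    rw [show (2 * k : ℝ) = (2 * k : ℕ) by push_cast; rfl, rpow_natCast, rpow_two, sq_abs,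
      Even.pow_abs (even_two_mul k)]
    simp only [gaussianPDFReal, NNReal.coe_one, mul_one, sub_zero, smul_eq_mul]
    ring_nf
  have hGamma := Gamma_nat_add_half k
  have hpow : (1 / 2 : ℝ) ^ (-(2 * k + 1) / 2 : ℝ) = 2 ^ k * √2 := by
    rw [one_div, inv_rpow zero_le_two, ← rpow_neg zero_le_two,
      show -(-(2 * k + 1) / 2 : ℝ) = k + 1 / 2 by ring, rpow_add two_pos, rpow_natCast,
      sqrt_eq_rpow]
  rw [integral_gaussianReal_eq_integral_smul one_ne_zero, funext habs, integral_const_mul,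
    integral_comp_abs (f := fun x => x ^ (2 * k : ℝ) * exp (-(1 / 2) * x ^ (2 : ℝ))),
    integral_rpow_mul_exp_neg_mul_rpow two_pos (by linarith [k.cast_nonneg (α := ℝ)])
      (by norm_num), show ((2 * k + 1) / 2 : ℝ) = k + 1 / 2 by ring, hGamma, hpow,
    sqrt_mul zero_le_two]
  field_simp

lemma integral_pow_gaussianReal_zero (v : ℝ≥0) (k : ℕ) :
    ∫ x, x ^ (2 * k) ∂gaussianReal 0 v = (2 * k - 1 : ℕ)‼ * (v : ℝ) ^ k := by
  have hsqrt : √(v : ℝ) ^ (2 * k) = v ^ k := by rw [pow_mul, sq_sqrt v.coe_nonneg]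
  calc ∫ x, x ^ (2 * k) ∂gaussianReal 0 v = ∫ x, (√v * x) ^ (2 * k) ∂gaussianReal 0 1 := by
        rw [← gaussianReal_zero_one_map_sqrt_mul, integral_map (by fun_prop) (by fun_prop)]
    _ = (2 * k - 1 : ℕ)‼ * (v : ℝ) ^ k := by
        simp_rw [mul_pow, integral_const_mul, integral_pow_gaussianReal_zero_one, hsqrt, mul_comm]

end GaussianMoments

section Isserlis

variable {E : Type*} [NormedAddCommGroup E] [NormedSpace ℝ E] [MeasurableSpace E] [BorelSpace E]

lemma memLp_dual_mul_dual (μ : Measure E) [IsGaussian μ] (L M : StrongDual ℝ E) :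
    MemLp (fun x => L x * M x) 2 μ :=
  have : ENNReal.HolderTriple 4 4 2 := ⟨by
    rw [← ENNReal.toReal_eq_toReal_iff' (by simp) (by simp), ENNReal.toReal_add (by simp) (by simp)]
    norm_num⟩
  (IsGaussian.memLp_dual μ M 4 (by norm_num)).mul (IsGaussian.memLp_dual μ L 4 (by norm_num))

variable [CompleteSpace E] [SecondCountableTopology E] {μ : Measure E} [IsGaussian μ]

lemma integral_dual_mul_dual (hμ : ∫ x, x ∂μ = 0) (L M : StrongDual ℝ E) :
    ∫ x, L x * M x ∂μ = covarianceBilinDual μ L M := by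
  simp only [covarianceBilinDual_apply IsGaussian.memLp_two_id, IsGaussian.integral_dual, hμ,
    map_zero, sub_zero]

lemma integral_dual_pow_four (hμ : ∫ x, x ∂μ = 0) (L : StrongDual ℝ E) :
    ∫ x, L x ^ 4 ∂μ = 3 * covarianceBilinDual μ L L ^ 2 := by
  have hlaw : μ.map L = gaussianReal 0 (covarianceBilinDual μ L L).toNNReal := by
    rw [IsGaussian.map_eq_gaussianReal, IsGaussian.integral_dual, hμ, map_zero,
      covarianceBilinDual_self_eq_variance IsGaussian.memLp_two_id]
  have hmom := integral_pow_gaussianReal_zero (covarianceBilinDual μ L L).toNNReal 2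
  rw [← hlaw, integral_map (by fun_prop) (by fun_prop)] at hmom
  simpa [Nat.doubleFactorial, coe_toNNReal _ (covarianceBilinDual_self_nonneg L)] using hmom

-- `192 a b c d` is a signed sum of the powers `(a ± b ± c ± d)⁴`, so fourth moments suffice.
lemma integral_dual_mul_dual_mul_dual_mul_dual (hμ : ∫ x, x ∂μ = 0)
    (L₁ L₂ L₃ L₄ : StrongDual ℝ E) :
    ∫ x, L₁ x * L₂ x * (L₃ x * L₄ x) ∂μ
      = covarianceBilinDual μ L₁ L₂ * covarianceBilinDual μ L₃ L₄
        + covarianceBilinDual μ L₁ L₃ * covarianceBilinDual μ L₂ L₄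
        + covarianceBilinDual μ L₁ L₄ * covarianceBilinDual μ L₂ L₃ := by
  have hpolar (x : E) : L₁ x * L₂ x * (L₃ x * L₄ x)
      = (∑ ε ∈ ({1, -1} : Finset ℝ), ∑ δ ∈ ({1, -1} : Finset ℝ), ∑ η ∈ ({1, -1} : Finset ℝ),
          ε * δ * η * ((L₁ + ε • L₂ + δ • L₃ + η • L₄) x) ^ 4) / 192 := by
    simp only [Finset.sum_pair (show (1 : ℝ) ≠ -1 by norm_num), add_apply, smul_apply, smul_eq_mul]
    ring
  have hint (c : ℝ) (L : StrongDual ℝ E) : Integrable (fun x => c * L x ^ 4) μ :=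
    .const_mul (by simpa [(show Even 4 by decide).pow_abs] using
      (IsGaussian.memLp_dual μ L 4 (by norm_num)).integrable_norm_pow (by norm_num)) c
  rw [funext hpolar, integral_div, integral_finsetSum _ fun _ _ => integrable_finsetSum _ fun _ _ =>
    integrable_finsetSum _ fun _ _ => hint _ _]
  simp_rw [integral_finsetSum _ fun _ _ => integrable_finsetSum _ fun _ _ => hint _ _]
  simp_rw [integral_finsetSum _ fun _ _ => hint _ _, integral_const_mul, integral_dual_pow_four hμ]
  simp only [Finset.sum_pair (show (1 : ℝ) ≠ -1 by norm_num), map_add, map_smul,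
    add_apply, smul_apply, smul_eq_mul,
    covarianceBilinDual_comm L₂ L₁, covarianceBilinDual_comm L₃ L₁,
    covarianceBilinDual_comm L₄ L₁, covarianceBilinDual_comm L₃ L₂,
    covarianceBilinDual_comm L₄ L₂, covarianceBilinDual_comm L₄ L₃]
  ring

lemma covariance_dual_mul_dual (hμ : ∫ x, x ∂μ = 0) (L₁ L₂ L₃ L₄ : StrongDual ℝ E) :
    cov[fun x => L₁ x * L₂ x, fun x => L₃ x * L₄ x; μ]
      = covarianceBilinDual μ L₁ L₃ * covarianceBilinDual μ L₂ L₄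
        + covarianceBilinDual μ L₁ L₄ * covarianceBilinDual μ L₂ L₃ := by
  rw [covariance_eq_sub (memLp_dual_mul_dual μ L₁ L₂) (memLp_dual_mul_dual μ L₃ L₄)]
  simp only [Pi.mul_apply, integral_dual_mul_dual_mul_dual_mul_dual hμ, integral_dual_mul_dual hμ]
  ring

end Isserlis

section QuadraticForm

open scoped Matrix

lemma memLp_const_mul_eval_mul_eval {ι : Type*} [Finite ι] (μ : Measure (ι → ℝ)) [IsGaussian μ]
    (c : ℝ) (i j : ι) : MemLp (fun x => c * (x i * x j)) 2 μ :=
  have := Fintype.ofFinite ι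
  (memLp_dual_mul_dual μ (.proj i) (.proj j)).const_mul c

variable {ι : Type*} [Fintype ι]

lemma dotProduct_mulVec_eq_sum_prod (K : Matrix ι ι ℝ) (x : ι → ℝ) :
    x ⬝ᵥ K *ᵥ x = ∑ p : ι × ι, K p.1 p.2 * (x p.1 * x p.2) := by
  simp only [Fintype.sum_prod_type, dotProduct, Matrix.mulVec, Finset.mul_sum]
  exact Finset.sum_congr rfl fun i _ => Finset.sum_congr rfl fun j _ => by ring

lemma trace_mul_self_mul_eq_sum_prod (K S : Matrix ι ι ℝ) :
    (K * S * (K * S)).trace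
      = ∑ p : ι × ι, ∑ q : ι × ι, K p.1 p.2 * K q.1 q.2 * (S p.2 q.1 * S q.2 p.1) := by
  simp only [Matrix.trace, Matrix.diag, Matrix.mul_apply, Finset.sum_mul_sum,
    Fintype.sum_prod_type]
  refine Finset.sum_congr rfl fun i _ => ?_
  rw [Finset.sum_comm]
  exact Finset.sum_congr rfl fun j _ => Finset.sum_congr rfl fun k _ =>
    Finset.sum_congr rfl fun l _ => by ring

lemma memLp_dotProduct_mulVec (μ : Measure (ι → ℝ)) [IsGaussian μ] (K : Matrix ι ι ℝ) :
    MemLp (fun x => x ⬝ᵥ K *ᵥ x) 2 μ := by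
  simp_rw [dotProduct_mulVec_eq_sum_prod]
  exact memLp_finsetSum _ fun p _ => memLp_const_mul_eval_mul_eval μ _ p.1 p.2

variable {μ : Measure (ι → ℝ)} [IsGaussian μ] {S : Matrix ι ι ℝ}

lemma integral_dotProduct_mulVec (hS : ∀ i j, ∫ x, x i * x j ∂μ = S i j) (K : Matrix ι ι ℝ) :
    ∫ x, x ⬝ᵥ K *ᵥ x ∂μ = (K * S).trace := by
  have hS_symm (i j : ι) : ∫ x, x i * x j ∂μ = S j i := by simp_rw [← hS, mul_comm]
  simp_rw [dotProduct_mulVec_eq_sum_prod]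
  rw [integral_finsetSum _ fun p _ =>
    (memLp_const_mul_eval_mul_eval μ _ p.1 p.2).integrable one_le_two]
  simp_rw [integral_const_mul, fun i j => hS_symm i j, Fintype.sum_prod_type]
  rfl

lemma covarianceBilinDual_proj (hμ : ∫ x, x ∂μ = 0) (hS : ∀ i j, ∫ x, x i * x j ∂μ = S i j)
    (i j : ι) : covarianceBilinDual μ (.proj i) (.proj j) = S i j := by
  rw [← integral_dual_mul_dual hμ, ← hS]
  rfl

lemma covariance_eval_mul_eval (hμ : ∫ x, x ∂μ = 0) (hS : ∀ i j, ∫ x, x i * x j ∂μ = S i j)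
    (i j k l : ι) :
    cov[fun x => x i * x j, fun x => x k * x l; μ] = S i k * S j l + S i l * S j k := by
  simp_rw [← covarianceBilinDual_proj hμ hS]
  exact covariance_dual_mul_dual hμ (.proj i) (.proj j) (.proj k) (.proj l)

lemma variance_dotProduct_mulVec (hμ : ∫ x, x ∂μ = 0) (hS : ∀ i j, ∫ x, x i * x j ∂μ = S i j)
    {K : Matrix ι ι ℝ} (hK : K.IsSymm) :
    Var[fun x => x ⬝ᵥ K *ᵥ x; μ] = 2 * (K * S * (K * S)).trace := by
  have hS_symm (i j : ι) : S i j = S j i := by simp_rw [← hS, mul_comm]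
  simp_rw [dotProduct_mulVec_eq_sum_prod]
  rw [variance_fun_sum fun p : ι × ι => memLp_const_mul_eval_mul_eval μ (K p.1 p.2) p.1 p.2]
  simp_rw [covariance_const_mul_left, covariance_const_mul_right, covariance_eval_mul_eval hμ hS,
    two_mul, trace_mul_self_mul_eq_sum_prod, ← Finset.sum_add_distrib]
  refine Finset.sum_congr rfl fun p _ => ?_
  calc ∑ q : ι × ι, K p.1 p.2 * (K q.1 q.2 * (S p.1 q.1 * S p.2 q.2 + S p.1 q.2 * S p.2 q.1))
      = ∑ q : ι × ι, K p.1 p.2 * K q.1 q.2 * (S p.2 q.2 * S q.1 p.1)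
        + ∑ q : ι × ι, K p.1 p.2 * K q.1 q.2 * (S p.2 q.1 * S q.2 p.1) := by
        rw [← Finset.sum_add_distrib]
        refine Finset.sum_congr rfl fun q _ => ?_
        rw [hS_symm p.1 q.1, hS_symm p.1 q.2]
        ring
    _ = ∑ q : ι × ι, K p.1 p.2 * K q.1 q.2 * (S p.2 q.1 * S q.2 p.1)
        + ∑ q : ι × ι, K p.1 p.2 * K q.1 q.2 * (S p.2 q.1 * S q.2 p.1) := by
        congr 1
        refine Fintype.sum_equiv (Equiv.prodComm ι ι) _ _ fun q => ?_
        simp [hK.apply q.2 q.1]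
    _ = _ := by rw [← Finset.sum_add_distrib]

end QuadraticForm

lemma integral_abs_sub_le_sqrt_variance_add {T : Type*} [MeasurableSpace T] {P : Measure T}
    [IsProbabilityMeasure P] {Y : T → ℝ} (hY : MemLp Y 2 P) (w : ℝ) :
    ∫ s, |Y s - w| ∂P ≤ √Var[Y; P] + |∫ s, Y s ∂P - w| := by
  have hYi : Integrable Y P := hY.integrable one_le_two
  have hcentred : MemLp (fun s => |Y s - P[Y]|) 2 P := (hY.sub (memLp_const _)).norm
  have hsqrt : ∫ s, |Y s - P[Y]| ∂P ≤ √Var[Y; P] := by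
    refine le_sqrt_of_sq_le ?_
    have hvar := variance_nonneg (fun s => |Y s - P[Y]|) P
    rw [variance_eq_sub hcentred] at hvar
    simp only [Pi.pow_apply, sq_abs] at hvar
    rw [variance_eq_integral hY.aemeasurable]
    linarith
  calc ∫ s, |Y s - w| ∂P ≤ ∫ s, (|Y s - P[Y]| + |P[Y] - w|) ∂P :=
        integral_mono (hYi.sub (integrable_const w)).abs
          ((hcentred.integrable one_le_two).add (integrable_const _))
          fun s => abs_sub_le (Y s) P[Y] w
    _ ≤ √Var[Y; P] + |∫ s, Y s ∂P - w| := by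
        rw [integral_add (hcentred.integrable one_le_two) (integrable_const _), integral_const,
          probReal_univ, one_smul]
        gcongr

section GaussianChaos

open scoped Matrix

variable {ι κ : Type*} [Fintype ι] [Fintype κ] {μ : Measure (ι → ℝ)} {ν : Measure (κ → ℝ)}
  [IsGaussian μ] [IsGaussian ν] {S : Matrix ι ι ℝ} {K : Matrix κ κ ℝ}

lemma map_dotProduct_eq_gaussianReal (hν : ∫ y, y ∂ν = 0) (u : κ → ℝ) :
    ν.map (u ⬝ᵥ ·) = gaussianReal 0 Var[(u ⬝ᵥ ·); ν].toNNReal := by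
  set L : StrongDual ℝ (κ → ℝ) := ∑ i, u i • .proj i
  have hL : (u ⬝ᵥ · : (κ → ℝ) → ℝ) = L := by
    ext y
    simp [L, dotProduct]
  rw [hL, IsGaussian.map_eq_gaussianReal, IsGaussian.integral_dual, hν, map_zero]

lemma variance_dotProduct (hν : ∫ y, y ∂ν = 0) (hK : ∀ i j, ∫ y, y i * y j ∂ν = K i j)
    (u : κ → ℝ) : Var[(u ⬝ᵥ ·); ν] = u ⬝ᵥ K *ᵥ u := by
  have hcov (i j : κ) : cov[fun y => u i * y i, fun y => u j * y j; ν] = u i * (K i j * u j) := by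
    rw [covariance_const_mul_left, covariance_const_mul_right, mul_comm (u j),
      ← covarianceBilinDual_proj hν hK, covarianceBilinDual_eq_covariance IsGaussian.memLp_two_id]
    rfl
  have hmemLp (i : κ) : MemLp (fun y => u i * y i) 2 ν :=
    (IsGaussian.memLp_dual ν (.proj i) 2 (by norm_num)).const_mul (u i)
  calc Var[(u ⬝ᵥ ·); ν] = ∑ i, ∑ j, u i * (K i j * u j) := by
        simp_rw [← hcov]
        exact variance_fun_sum hmemLp
    _ = u ⬝ᵥ K *ᵥ u := by simp only [← Finset.mul_sum]; rfl

theorem dKol_map_prod_dotProduct_mulVec_le (hμ : ∫ x, x ∂μ = 0) (hν : ∫ y, y ∂ν = 0)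
    (hS : ∀ i j, ∫ x, x i * x j ∂μ = S i j) (hK : ∀ i j, ∫ y, y i * y j ∂ν = K i j)
    (B : Matrix ι κ ℝ) {w : ℝ≥0} (hw : w ≠ 0) :
    dKol ((μ.prod ν).map fun p => p.1 ⬝ᵥ B *ᵥ p.2) (gaussianReal 0 w)
      ≤ 2 / w * (√(2 * (B * K * Bᵀ * S * (B * K * Bᵀ * S)).trace)
        + |(B * K * Bᵀ * S).trace - w|) := by
  set Q : Matrix ι ι ℝ := B * K * Bᵀ
  have hK_symm : K.IsSymm := Matrix.IsSymm.ext fun i j => by simp_rw [← hK, mul_comm]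
  have hQ_symm : Q.IsSymm := by
    simp only [Matrix.IsSymm, Q, Matrix.transpose_mul, Matrix.transpose_transpose, hK_symm.eq,
      Matrix.mul_assoc]
  have hvar (x : ι → ℝ) : Var[(x ᵥ* B ⬝ᵥ ·); ν] = x ⬝ᵥ Q *ᵥ x := by
    simp only [variance_dotProduct hν hK, Q, ← Matrix.mulVec_mulVec, Matrix.mulVec_transpose,
      Matrix.dotProduct_mulVec]
  have hcond (x : ι → ℝ) : dKol (ν.map fun y => x ⬝ᵥ B *ᵥ y) (gaussianReal 0 w)
      ≤ 2 / w * |x ⬝ᵥ Q *ᵥ x - w| := by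
    have h := dKol_gaussianReal_le (Var[(x ᵥ* B ⬝ᵥ ·); ν]).toNNReal hw
    rw [coe_toNNReal _ (variance_nonneg _ _), ← map_dotProduct_eq_gaussianReal hν, hvar] at h
    simpa only [Matrix.dotProduct_mulVec] using h
  have hQ := memLp_dotProduct_mulVec μ Q
  have hint : Integrable (fun x => 2 / w * |x ⬝ᵥ Q *ᵥ x - w|) μ :=
    ((hQ.integrable one_le_two).sub (integrable_const _)).abs.const_mul _
  calc dKol ((μ.prod ν).map fun p => p.1 ⬝ᵥ B *ᵥ p.2) (gaussianReal 0 w)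
      ≤ ∫ x, 2 / w * |x ⬝ᵥ Q *ᵥ x - w| ∂μ :=
        dKol_map_prod_le_integral (by unfold Matrix.mulVec dotProduct; fun_prop) _ hint hcond
    _ = 2 / w * ∫ x, |x ⬝ᵥ Q *ᵥ x - w| ∂μ := integral_const_mul _ _
    _ ≤ 2 / w * (√(2 * (Q * S * (Q * S)).trace) + |(Q * S).trace - w|) := by
        rw [← variance_dotProduct_mulVec hμ hS hQ_symm, ← integral_dotProduct_mulVec hS]
        gcongr
        exact integral_abs_sub_le_sqrt_variance_add hQ w

end GaussianChaos

section TraceBound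

open scoped Matrix.Norms.Operator

variable {ι : Type*} [Fintype ι]

lemma linfty_opNorm_le_of_sum_abs_le {A : Matrix ι ι ℝ} {s : ℝ} (hs : 0 ≤ s)
    (hA : ∀ i, ∑ j, |A i j| ≤ s) : ‖A‖ ≤ s := by
  lift s to ℝ≥0 using hs
  rw [Matrix.linfty_opNorm_def]
  exact NNReal.coe_le_coe.2 <| Finset.sup_le fun i _ => NNReal.coe_le_coe.1 <| by
    simpa only [NNReal.coe_sum, coe_nnnorm, Real.norm_eq_abs] using hA i

lemma sum_abs_le_linfty_opNorm (A : Matrix ι ι ℝ) (i : ι) : ∑ j, |A i j| ≤ ‖A‖ := by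
  rw [Matrix.linfty_opNorm_def]
  have h := Finset.le_sup (f := fun i => ∑ j, ‖A i j‖₊) (Finset.mem_univ i)
  simpa only [← NNReal.coe_le_coe, NNReal.coe_sum, coe_nnnorm, Real.norm_eq_abs] using h

lemma trace_mul_le_card_mul {A B : Matrix ι ι ℝ} {m : ℝ} (hB : ∀ i j, |B i j| ≤ m) :
    (A * B).trace ≤ Fintype.card ι * (‖A‖ * m) := by
  have hdiag (i : ι) : (A * B) i i ≤ ‖A‖ * m :=
    calc (A * B) i i = ∑ j, A i j * B j i := Matrix.mul_apply
      _ ≤ ∑ j, |A i j| * m := Finset.sum_le_sum fun j _ =>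
          (le_abs_self _).trans <| (abs_mul _ _).trans_le <|
            mul_le_mul_of_nonneg_left (hB j i) (abs_nonneg _)
      _ ≤ ‖A‖ * m := by
          rw [← Finset.sum_mul]
          exact mul_le_mul_of_nonneg_right (sum_abs_le_linfty_opNorm A i)
            ((abs_nonneg _).trans (hB i i))
  calc (A * B).trace ≤ ∑ _i : ι, ‖A‖ * m := Finset.sum_le_sum fun i _ => hdiag i
    _ = Fintype.card ι * (‖A‖ * m) := by simp

lemma trace_mul_mul_mul_le {A : Matrix ι ι ℝ} {s m : ℝ} (hs : 0 ≤ s)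
    (hrow : ∀ i, ∑ j, |A i j| ≤ s) (hm : 0 ≤ m) (hA : ∀ i j, |A i j| ≤ m) :
    (A * A * (A * A)).trace ≤ Fintype.card ι * (s ^ 3 * m) := by
  have hnorm := linfty_opNorm_le_of_sum_abs_le hs hrow
  calc (A * A * (A * A)).trace = (A * A * A * A).trace := by simp only [Matrix.mul_assoc]
    _ ≤ Fintype.card ι * (‖A * A * A‖ * m) := trace_mul_le_card_mul hA
    _ ≤ Fintype.card ι * (s ^ 3 * m) := by
        gcongr
        calc ‖A * A * A‖ ≤ ‖A‖ * ‖A‖ * ‖A‖ := norm_mul₃_le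
          _ ≤ s * s * s := by gcongr
          _ = s ^ 3 := by ring

end TraceBound

section GeometricSums

variable {q : ℝ}

lemma geom_sum_le_one_div (hq0 : 0 ≤ q) (hq1 : q < 1) (n : ℕ) :
    ∑ i ∈ range n, q ^ i ≤ 1 / (1 - q) := by
  rw [le_div_iff₀ (sub_pos.2 hq1), geom_sum_mul_neg]
  linarith [pow_nonneg hq0 n]

lemma one_sub_mul_sum_pow_dist (q : ℝ) (i m : ℕ) :
    (1 - q) * ∑ j ∈ range (i + 1 + m), q ^ Nat.dist i j = 1 + q - q ^ (i + 1) - q ^ (m + 1) := by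
  induction m with
  | zero =>
    have hreflect : ∑ j ∈ range (i + 1), q ^ Nat.dist i j = ∑ j ∈ range (i + 1), q ^ j := by
      rw [← sum_range_reflect]
      refine Finset.sum_congr rfl fun j hj => ?_
      rw [Nat.dist_eq_sub_of_le_right (by omega)]
      congr 1
      have := Finset.mem_range.1 hj
      omega
    rw [add_zero, hreflect, mul_neg_geom_sum]
    ring
  | succ m ih =>
    rw [← add_assoc, sum_range_succ, mul_add, ih, Nat.dist_eq_sub_of_le (by omega),
      show i + 1 + m - i = m + 1 by omega]
    ring

lemma sum_pow_dist_eq (hq : q ≠ 1) {i n : ℕ} (hi : i < n) :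
    ∑ j ∈ range n, q ^ Nat.dist i j = (1 + q - q ^ (i + 1) - q ^ (n - i)) / (1 - q) := by
  obtain ⟨m, rfl⟩ := Nat.exists_eq_add_of_lt hi
  rw [eq_div_iff (sub_ne_zero.2 hq.symm), mul_comm, add_right_comm, one_sub_mul_sum_pow_dist]
  congr 2
  omega

lemma sum_pow_dist_le (hq0 : 0 ≤ q) (hq1 : q < 1) {i n : ℕ} (hi : i < n) :
    ∑ j ∈ range n, q ^ Nat.dist i j ≤ 2 / (1 - q) := by
  have := sub_pos.2 hq1
  rw [sum_pow_dist_eq hq1.ne hi]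
  gcongr
  linarith [pow_nonneg hq0 (i + 1), pow_nonneg hq0 (n - i)]

lemma sum_sum_pow_dist_eq (hq : q ≠ 1) (n : ℕ) :
    ∑ i ∈ range n, ∑ j ∈ range n, q ^ Nat.dist i j
      = n * ((1 + q) / (1 - q)) - 2 * q / (1 - q) * ∑ i ∈ range n, q ^ i := by
  have hreflect : ∑ i ∈ range n, q ^ (n - i) = ∑ i ∈ range n, q ^ (i + 1) := by
    rw [← sum_range_reflect]
    refine Finset.sum_congr rfl fun i hi => ?_
    have := Finset.mem_range.1 hi
    congr 1
    omega
  have hne : 1 - q ≠ 0 := sub_ne_zero.2 hq.symm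
  rw [Finset.sum_congr rfl fun i hi => sum_pow_dist_eq hq (Finset.mem_range.1 hi),
    ← Finset.sum_div]
  simp only [Finset.sum_sub_distrib, hreflect, pow_succ, ← Finset.sum_mul, sum_const, card_range,
    nsmul_eq_mul]
  field_simp
  ring

end GeometricSums

section OrnsteinUhlenbeckMatrix

/-- The covariance matrix of `√(2θ) (X(0), X(Δ), …, X((n - 1)Δ))` for an Ornstein–Uhlenbeck process
`X` started at `0`, as a function of the one-step correlation `r = e^{-θΔ}`. -/
def ouMatrix (r : ℝ) (n : ℕ) : Matrix (Fin n) (Fin n) ℝ :=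
  .of fun i j => r ^ Nat.dist i j - r ^ (i + j : ℕ)

variable {r : ℝ}

lemma ouMatrix_apply (r : ℝ) {n : ℕ} (i j : Fin n) :
    ouMatrix r n i j = r ^ Nat.dist i j - r ^ (i + j : ℕ) :=
  rfl

lemma ouMatrix_comm (r : ℝ) {n : ℕ} (i j : Fin n) : ouMatrix r n i j = ouMatrix r n j i := by
  simp only [ouMatrix_apply, Nat.dist_comm, add_comm]

lemma pow_add_le_pow_dist (hr0 : 0 ≤ r) (hr1 : r ≤ 1) (i j : ℕ) :
    r ^ (i + j) ≤ r ^ Nat.dist i j :=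
  pow_le_pow_of_le_one hr0 hr1 <| add_le_add (Nat.sub_le i j) (Nat.sub_le j i)

lemma abs_ouMatrix_le_pow_dist (hr0 : 0 ≤ r) (hr1 : r ≤ 1) {n : ℕ} (i j : Fin n) :
    |ouMatrix r n i j| ≤ r ^ Nat.dist i j := by
  rw [ouMatrix_apply, abs_of_nonneg (sub_nonneg.2 (pow_add_le_pow_dist hr0 hr1 i j))]
  exact sub_le_self _ (pow_nonneg hr0 _)

lemma sum_abs_ouMatrix_le (hr0 : 0 ≤ r) (hr1 : r < 1) {n : ℕ} (i : Fin n) :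
    ∑ j, |ouMatrix r n i j| ≤ 2 / (1 - r) :=
  calc ∑ j, |ouMatrix r n i j| ≤ ∑ j : Fin n, r ^ Nat.dist i j :=
        Finset.sum_le_sum fun j _ => abs_ouMatrix_le_pow_dist hr0 hr1.le i j
    _ = ∑ j ∈ range n, r ^ Nat.dist i j := (Finset.sum_range fun j => r ^ Nat.dist i j).symm
    _ ≤ 2 / (1 - r) := sum_pow_dist_le hr0 hr1 i.isLt

lemma trace_ouMatrix_mul_mul_mul_le (hr0 : 0 ≤ r) (hr1 : r < 1) (n : ℕ) :
    (ouMatrix r n * ouMatrix r n * (ouMatrix r n * ouMatrix r n)).trace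
      ≤ n * (2 / (1 - r)) ^ 3 := by
  have hs : 0 ≤ 2 / (1 - r) := div_nonneg zero_le_two (sub_nonneg.2 hr1.le)
  have hm (i j : Fin n) : |ouMatrix r n i j| ≤ 1 :=
    (abs_ouMatrix_le_pow_dist hr0 hr1.le i j).trans (pow_le_one₀ hr0 hr1.le)
  simpa using trace_mul_mul_mul_le hs (sum_abs_ouMatrix_le hr0 hr1) zero_le_one hm

lemma trace_ouMatrix_mul_self (r : ℝ) (n : ℕ) :
    (ouMatrix r n * ouMatrix r n).trace
      = ∑ i ∈ range n, ∑ j ∈ range n, (r ^ Nat.dist i j - r ^ (i + j)) ^ 2 := by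
  simp_rw [Finset.sum_range, Matrix.trace, Matrix.diag, Matrix.mul_apply, sq]
  refine Finset.sum_congr rfl fun i _ => Finset.sum_congr rfl fun j _ => ?_
  rw [ouMatrix_comm r j i, ouMatrix_apply]

lemma sum_sum_sq_sub_sq_pow_dist_mem_Icc (hr0 : 0 ≤ r) (hr1 : r < 1) (n : ℕ) :
    ∑ i ∈ range n, ∑ j ∈ range n,
        ((r ^ Nat.dist i j) ^ 2 - (r ^ Nat.dist i j - r ^ (i + j)) ^ 2)
      ∈ Set.Icc 0 (2 / (1 - r) ^ 2) := by
  have hdist (i j : ℕ) : r ^ Nat.dist i j ≤ 1 := pow_le_one₀ hr0 hr1.le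
  have hadd (i j : ℕ) : 0 ≤ r ^ (i + j) := pow_nonneg hr0 _
  constructor
  · refine Finset.sum_nonneg fun i _ => Finset.sum_nonneg fun j _ => ?_
    nlinarith [pow_add_le_pow_dist hr0 hr1.le i j, hadd i j]
  · have hgeom := geom_sum_le_one_div hr0 hr1 n
    calc _ ≤ ∑ i ∈ range n, ∑ j ∈ range n, 2 * (r ^ i * r ^ j) := by
          gcongr with i _ j _
          rw [← pow_add]
          nlinarith [hdist i j, hadd i j]
      _ = 2 * (∑ i ∈ range n, r ^ i) ^ 2 := by
          simp only [← Finset.mul_sum, sq, Finset.sum_mul_sum]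
      _ ≤ 2 * (1 / (1 - r)) ^ 2 := by gcongr
      _ = 2 / (1 - r) ^ 2 := by rw [one_div, inv_pow, div_eq_mul_inv]

lemma abs_trace_ouMatrix_mul_self_sub_le (hr0 : 0 ≤ r) (hr1 : r < 1) (n : ℕ) :
    |(ouMatrix r n * ouMatrix r n).trace - n * ((1 + r ^ 2) / (1 - r ^ 2))|
      ≤ 4 / (1 - r) ^ 2 := by
  have hq0 : 0 ≤ r ^ 2 := sq_nonneg r
  have hqr : r ^ 2 ≤ r := by nlinarith
  have hq1 : r ^ 2 < 1 := hqr.trans_lt hr1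
  have hr1' : 0 < 1 - r := sub_pos.2 hr1
  have hmain := sum_sum_pow_dist_eq hq1.ne n
  obtain ⟨hinit0, hinit1⟩ := sum_sum_sq_sub_sq_pow_dist_mem_Icc hr0 hr1 n
  simp only [Finset.sum_sub_distrib, ← trace_ouMatrix_mul_self, ← pow_mul, mul_comm _ 2]
    at hinit0 hinit1
  simp only [← pow_mul] at hmain
  have hedge0 : 0 ≤ 2 * r ^ 2 / (1 - r ^ 2) * ∑ i ∈ range n, r ^ (2 * i) := by
    have := sub_pos.2 hq1
    positivity
  have hedge1 : 2 * r ^ 2 / (1 - r ^ 2) * ∑ i ∈ range n, r ^ (2 * i) ≤ 2 / (1 - r) ^ 2 :=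
    calc _ ≤ 2 * 1 / (1 - r) * (1 / (1 - r)) := by
          have hgeom := geom_sum_le_one_div hq0 hq1 n
          simp only [← pow_mul] at hgeom
          have : 1 / (1 - r ^ 2) ≤ 1 / (1 - r) := by gcongr
          gcongr
          exact hgeom.trans this
      _ = 2 / (1 - r) ^ 2 := by field_simp
  have hsplit : 4 / (1 - r) ^ 2 = 2 / (1 - r) ^ 2 + 2 / (1 - r) ^ 2 := by ring
  rw [abs_le]
  constructor <;> linarith

end OrnsteinUhlenbeckMatrix

section OrnsteinUhlenbeckSample

open scoped Matrix

/-- The vector `(Xₘ(0), Xₘ(Δ), …, Xₘ((n - 1)Δ))` of observations of the `m`-th process. -/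
def ouSample (X : Fin 2 → ℝ → Ω → ℝ) (m : Fin 2) (n : ℕ) (Δ : ℝ) (ω : Ω) : Fin n → ℝ :=
  fun i => X m (i * Δ) ω

lemma ouA_eq_dotProduct_mulVec {Ω : Type} (X : Fin 2 → ℝ → Ω → ℝ) (n : ℕ) (Δ : ℝ) (ω : Ω) :
    ouA X n Δ ω
      = ouSample X 0 n Δ ω ⬝ᵥ ((√(n * Δ) / n) • (1 : Matrix (Fin n) (Fin n) ℝ)) *ᵥ
          ouSample X 1 n Δ ω := by
  rw [Matrix.smul_mulVec, Matrix.one_mulVec, dotProduct_smul, ouA, Finset.sum_range]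
  rfl

lemma abs_natCast_sub_natCast (i j : ℕ) : |(i : ℝ) - j| = Nat.dist i j := by
  rcases le_total i j with h | h
  · rw [Nat.dist_eq_sub_of_le h, Nat.cast_sub h, abs_sub_comm,
      abs_of_nonneg (sub_nonneg.2 (Nat.cast_le.2 h))]
  · rw [Nat.dist_eq_sub_of_le_right h, Nat.cast_sub h,
      abs_of_nonneg (sub_nonneg.2 (Nat.cast_le.2 h))]

namespace IsOUPair

variable {θ Δ : ℝ} {X : Fin 2 → ℝ → Ω → ℝ}

lemma measurable_ouSample (hX : IsOUPair θ X) (m : Fin 2) (n : ℕ) (Δ : ℝ) :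
    Measurable (ouSample X m n Δ) :=
  measurable_pi_lambda _ fun _ => hX.meas m _

lemma exists_map_dual_ouSample_eq_gaussianReal (hX : IsOUPair θ X) (hΔ : 0 ≤ Δ) (m : Fin 2)
    {n : ℕ} (L : StrongDual ℝ (Fin n → ℝ)) :
    ∃ v : ℝ≥0, (Measure.map (ouSample X m n Δ) ℙ).map L = gaussianReal 0 v := by
  obtain ⟨v, hv⟩ := hX.gaussian m n (fun j => j * Δ) (fun j => L (Pi.single j 1))
    fun j => by positivity
  refine ⟨v, ?_⟩
  rw [Measure.map_map L.continuous.measurable (hX.measurable_ouSample m n Δ), ← hv]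
  congr 1
  ext ω
  rw [Function.comp_apply, ← L.coe_coe, LinearMap.pi_apply_eq_sum_univ]
  simp only [smul_eq_mul, mul_comm (X _ _ _), ouSample]
  refine Finset.sum_congr rfl fun j _ => ?_
  congr 2
  ext i
  simp only [Pi.single_apply, eq_comm]

lemma isGaussian_map_ouSample (hX : IsOUPair θ X) (hΔ : 0 ≤ Δ) (m : Fin 2) (n : ℕ) :
    IsGaussian (Measure.map (ouSample X m n Δ) ℙ) :=
  isGaussian_of_map_eq_gaussianReal fun L =>
    ⟨0, hX.exists_map_dual_ouSample_eq_gaussianReal hΔ m L⟩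

lemma integral_map_ouSample (hX : IsOUPair θ X) (hΔ : 0 ≤ Δ) (m : Fin 2) (n : ℕ) :
    ∫ x, x ∂(Measure.map (ouSample X m n Δ) ℙ) = 0 := by
  have := hX.isGaussian_map_ouSample hΔ m n
  ext i
  let L : StrongDual ℝ (Fin n → ℝ) := .proj i
  obtain ⟨v, hv⟩ := hX.exists_map_dual_ouSample_eq_gaussianReal hΔ m L
  calc (∫ x, x ∂(Measure.map (ouSample X m n Δ) ℙ)) i
      = ∫ x, L x ∂(Measure.map (ouSample X m n Δ) ℙ) := (IsGaussian.integral_dual L).symm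
    _ = ∫ x, x ∂((Measure.map (ouSample X m n Δ) ℙ).map L) :=
        (integral_map L.continuous.aemeasurable aestronglyMeasurable_id).symm
    _ = 0 := by rw [hv, integral_id_gaussianReal]

lemma integral_mul_map_ouSample (hX : IsOUPair θ X) (hΔ : 0 ≤ Δ) (m : Fin 2) {n : ℕ}
    (i j : Fin n) :
    ∫ x, x i * x j ∂(Measure.map (ouSample X m n Δ) ℙ)
      = ((2 * θ)⁻¹ • ouMatrix (exp (-θ * Δ)) n) i j := by
  have hdist : -θ * |j * Δ - i * Δ| = (Nat.dist i j : ℕ) * (-θ * Δ) := by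
    rw [← sub_mul, abs_mul, abs_of_nonneg hΔ, abs_natCast_sub_natCast, Nat.dist_comm]
    ring
  have hadd : -θ * (j * Δ + i * Δ) = (i + j : ℕ) * (-θ * Δ) := by
    push_cast
    ring
  calc ∫ x, x i * x j ∂(Measure.map (ouSample X m n Δ) ℙ)
      = ∫ ω, X m (i * Δ) ω * X m (j * Δ) ω ∂ℙ :=
        integral_map (hX.measurable_ouSample m n Δ).aemeasurable
          (by fun_prop : Measurable fun x : Fin n → ℝ => x i * x j).aestronglyMeasurable
    _ = ((2 * θ)⁻¹ • ouMatrix (exp (-θ * Δ)) n) i j := by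
        rw [hX.cov m _ _ (by positivity) (by positivity), hdist, hadd, exp_nat_mul, exp_nat_mul,
          Matrix.smul_apply, ouMatrix_apply, smul_eq_mul, div_eq_inv_mul]

lemma map_ouA_eq_map_prod [IsFiniteMeasure (ℙ : Measure Ω)] (hX : IsOUPair θ X) (n : ℕ) (Δ : ℝ) :
    Measure.map (ouA X n Δ) ℙ
      = ((Measure.map (ouSample X 0 n Δ) ℙ).prod (Measure.map (ouSample X 1 n Δ) ℙ)).map
          fun p => p.1 ⬝ᵥ ((√(n * Δ) / n) • (1 : Matrix (Fin n) (Fin n) ℝ)) *ᵥ p.2 := by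
  have hrestrict : Measurable fun (x : ℝ → ℝ) (i : Fin n) => x (i * Δ) := by fun_prop
  have hindep : IndepFun (ouSample X 0 n Δ) (ouSample X 1 n Δ) ℙ :=
    hX.indep.comp hrestrict hrestrict
  have hmeas := hX.measurable_ouSample
  rw [← (indepFun_iff_map_prod_eq_prod_map_map (hmeas 0 n Δ).aemeasurable
      (hmeas 1 n Δ).aemeasurable).1 hindep,
    Measure.map_map (by unfold Matrix.mulVec dotProduct; fun_prop)
      ((hmeas 0 n Δ).prodMk (hmeas 1 n Δ))]
  exact congrArg (Measure.map · ℙ) (funext (ouA_eq_dotProduct_mulVec X n Δ))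

lemma dKol_map_ouA_le_of_trace [IsFiniteMeasure (ℙ : Measure Ω)] (hX : IsOUPair θ X) (hΔ : 0 ≤ Δ)
    {n : ℕ} (hn : n ≠ 0) {w : ℝ≥0} (hw : w ≠ 0) :
    letI R := ouMatrix (exp (-θ * Δ)) n
    dKol (Measure.map (ouA X n Δ) ℙ) (gaussianReal 0 w)
      ≤ 2 / w * (√(2 * (Δ / n / (4 * θ ^ 2)) ^ 2 * (R * R * (R * R)).trace)
        + |Δ / n / (4 * θ ^ 2) * (R * R).trace - w|) := by
  have := hX.isGaussian_map_ouSample hΔ 0 n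
  have := hX.isGaussian_map_ouSample hΔ 1 n
  have h := dKol_map_prod_dotProduct_mulVec_le (hX.integral_map_ouSample hΔ 0 n)
    (hX.integral_map_ouSample hΔ 1 n) (hX.integral_mul_map_ouSample hΔ 0)
    (hX.integral_mul_map_ouSample hΔ 1) ((√(n * Δ) / n) • (1 : Matrix (Fin n) (Fin n) ℝ)) hw
  have hprod : (√(n * Δ) / n) • (1 : Matrix (Fin n) (Fin n) ℝ)
        * ((2 * θ)⁻¹ • ouMatrix (exp (-θ * Δ)) n)
        * ((√(n * Δ) / n) • (1 : Matrix (Fin n) (Fin n) ℝ))ᵀ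
        * ((2 * θ)⁻¹ • ouMatrix (exp (-θ * Δ)) n)
      = (Δ / n / (4 * θ ^ 2)) • (ouMatrix (exp (-θ * Δ)) n * ouMatrix (exp (-θ * Δ)) n) := by
    have hscale : (2 * θ)⁻¹ * (√(n * Δ) / n * ((2 * θ)⁻¹ * (√(n * Δ) / n)))
        = (√(n * Δ)) ^ 2 / n ^ 2 / (4 * θ ^ 2) := by ring
    have hcancel : (√(n * Δ)) ^ 2 / n ^ 2 = Δ / n := by
      rw [sq_sqrt (by positivity)]
      field_simp
    simp only [Matrix.transpose_smul, Matrix.transpose_one, Matrix.smul_mul, Matrix.mul_smul,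
      Matrix.one_mul, Matrix.mul_one, smul_smul, hscale, hcancel]
  rw [← hX.map_ouA_eq_map_prod, hprod] at h
  simpa only [Matrix.smul_mul, Matrix.mul_smul, Matrix.trace_smul, smul_smul, smul_eq_mul,
    mul_assoc, sq (Δ / n / (4 * θ ^ 2))] using h

end IsOUPair

end OrnsteinUhlenbeckSample

section Mesh

lemma one_div_one_sub_exp_neg_le {x : ℝ} (hx : 0 < x) : 1 / (1 - exp (-x)) ≤ (1 + x) / x := by
  have hexp : exp (-x) ≤ 1 / (1 + x) := by
    rw [exp_neg, ← one_div, add_comm 1 x]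
    exact one_div_le_one_div_of_le (by positivity) (add_one_le_exp x)
  have hsub : x / (1 + x) ≤ 1 - exp (-x) :=
    calc x / (1 + x) = 1 - 1 / (1 + x) := by field_simp; ring
      _ ≤ 1 - exp (-x) := by gcongr
  calc 1 / (1 - exp (-x)) ≤ 1 / (x / (1 + x)) := by gcongr
    _ = (1 + x) / x := one_div_div x (1 + x)

lemma abs_one_add_exp_neg_div_sub_two_div_le_one {x : ℝ} (hx : 0 < x) :
    |(1 + exp (-x)) / (1 - exp (-x)) - 2 / x| ≤ 1 := by
  have hexp : 0 < 1 - exp (-x) := sub_pos.2 (exp_lt_one_iff.2 (neg_lt_zero.2 hx))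
  have hupper : 1 / (1 - exp (-x)) ≤ 1 / x + 1 :=
    (one_div_one_sub_exp_neg_le hx).trans_eq (by field_simp)
  have hlower : 1 / x ≤ 1 / (1 - exp (-x)) :=
    one_div_le_one_div_of_le hexp (by linarith [add_one_le_exp (-x)])
  have hsplit : (1 + exp (-x)) / (1 - exp (-x)) - 2 / x
      = 2 * (1 / (1 - exp (-x)) - 1 / x) - 1 := by
    field_simp
    ring
  rw [hsplit, abs_le]
  constructor <;> linarith

variable {θ Δ : ℝ} {n : ℕ}

lemma one_div_one_sub_exp_neg_mul_le (hθ : 0 < θ) (hΔ : 0 < Δ) (hΔ1 : Δ ≤ 1) :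
    1 / (1 - exp (-θ * Δ)) ≤ (1 + θ) / (θ * Δ) :=
  calc 1 / (1 - exp (-θ * Δ)) ≤ (1 + θ * Δ) / (θ * Δ) := by
        rw [neg_mul]
        exact one_div_one_sub_exp_neg_le (by positivity)
    _ ≤ (1 + θ) / (θ * Δ) := by
        gcongr
        exact mul_le_of_le_one_right hθ.le hΔ1

lemma abs_one_add_exp_neg_mul_sq_div_sub_one_div_le_one (hθΔ : 0 < θ * Δ) :
    |(1 + exp (-θ * Δ) ^ 2) / (1 - exp (-θ * Δ) ^ 2) - 1 / (θ * Δ)| ≤ 1 := by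
  have hsq : exp (-θ * Δ) ^ 2 = exp (-(2 * (θ * Δ))) := by
    rw [← exp_nat_mul]
    ring_nf
  have hdiv : 1 / (θ * Δ) = 2 / (2 * (θ * Δ)) := by field_simp
  rw [hsq, hdiv]
  exact abs_one_add_exp_neg_div_sub_two_div_le_one (by positivity)

lemma trace_ouMatrix_exp_mul_mul_mul_le (hθ : 0 < θ) (hΔ : 0 < Δ) (hΔ1 : Δ ≤ 1) (hn : n ≠ 0) :
    letI R := ouMatrix (exp (-θ * Δ)) n
    2 * (Δ / n / (4 * θ ^ 2)) ^ 2 * (R * R * (R * R)).trace ≤ (1 + θ) ^ 3 / θ ^ 7 / (n * Δ) := by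
  have hr1 : exp (-θ * Δ) < 1 := exp_lt_one_iff.2 (by nlinarith)
  have : 0 < 1 - exp (-θ * Δ) := sub_pos.2 hr1
  calc _ ≤ 2 * (Δ / n / (4 * θ ^ 2)) ^ 2 * (n * (2 / (1 - exp (-θ * Δ))) ^ 3) := by
        gcongr
        exact trace_ouMatrix_mul_mul_mul_le (exp_nonneg _) hr1 n
    _ ≤ 2 * (Δ / n / (4 * θ ^ 2)) ^ 2 * (n * (2 * ((1 + θ) / (θ * Δ))) ^ 3) := by
        have hinv := one_div_one_sub_exp_neg_mul_le hθ hΔ hΔ1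
        rw [← mul_one_div 2 (1 - _)]
        gcongr
    _ = (1 + θ) ^ 3 / θ ^ 7 / (n * Δ) := by
        field_simp
        ring

lemma abs_trace_ouMatrix_exp_mul_self_sub_le (hθ : 0 < θ) (hΔ : 0 < Δ) (hΔ1 : Δ ≤ 1)
    (hn : n ≠ 0) :
    letI R := ouMatrix (exp (-θ * Δ)) n
    |Δ / n / (4 * θ ^ 2) * (R * R).trace - 1 / (4 * θ ^ 3)|
      ≤ (1 + θ) ^ 2 / θ ^ 4 / (n * Δ) + Δ / (4 * θ ^ 2) := by
  set R := ouMatrix (exp (-θ * Δ)) n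
  have hr1 : exp (-θ * Δ) < 1 := exp_lt_one_iff.2 (by nlinarith)
  have : 0 < 1 - exp (-θ * Δ) := sub_pos.2 hr1
  set c : ℝ := (1 + exp (-θ * Δ) ^ 2) / (1 - exp (-θ * Δ) ^ 2)
  have htrace : |(R * R).trace - n * c| ≤ 4 * ((1 + θ) / (θ * Δ)) ^ 2 :=
    calc |(R * R).trace - n * c| ≤ 4 / (1 - exp (-θ * Δ)) ^ 2 :=
          abs_trace_ouMatrix_mul_self_sub_le (exp_nonneg _) hr1 n
      _ = 4 * (1 / (1 - exp (-θ * Δ))) ^ 2 := by rw [div_pow, one_pow, mul_one_div]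
      _ ≤ 4 * ((1 + θ) / (θ * Δ)) ^ 2 := by
          have hinv := one_div_one_sub_exp_neg_mul_le hθ hΔ hΔ1
          gcongr
  have hcoth : |c - 1 / (θ * Δ)| ≤ 1 :=
    abs_one_add_exp_neg_mul_sq_div_sub_one_div_le_one (mul_pos hθ hΔ)
  calc |Δ / n / (4 * θ ^ 2) * (R * R).trace - 1 / (4 * θ ^ 3)|
      = |Δ / n / (4 * θ ^ 2) * ((R * R).trace - n * c)
          + Δ / (4 * θ ^ 2) * (c - 1 / (θ * Δ))| := by
        congr 1
        field_simp
        ring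
    _ ≤ Δ / n / (4 * θ ^ 2) * |(R * R).trace - n * c|
          + Δ / (4 * θ ^ 2) * |c - 1 / (θ * Δ)| := by
        refine (abs_add_le _ _).trans_eq ?_
        rw [abs_mul, abs_mul, abs_of_pos (by positivity : 0 < Δ / n / (4 * θ ^ 2)),
          abs_of_pos (by positivity : 0 < Δ / (4 * θ ^ 2))]
    _ ≤ Δ / n / (4 * θ ^ 2) * (4 * ((1 + θ) / (θ * Δ)) ^ 2) + Δ / (4 * θ ^ 2) * 1 := by gcongr
    _ = (1 + θ) ^ 2 / θ ^ 4 / (n * Δ) + Δ / (4 * θ ^ 2) := by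
        field_simp

end Mesh

section Rate

/-- The constant in the rate `max (1 / √(nΔ)) Δ` of the central limit theorem for `ouA`. The
summand `1` covers the range where this maximum is at least `1`. -/
def ouRateConst (θ : ℝ) : ℝ :=
  1 + 8 * θ ^ 3 * (√((1 + θ) ^ 3 / θ ^ 7) + (1 + θ) ^ 2 / θ ^ 4 + 1 / (4 * θ ^ 2))

variable {θ : ℝ}

lemma one_le_ouRateConst (hθ : 0 < θ) : 1 ≤ ouRateConst θ :=
  le_add_of_nonneg_right (by positivity)

namespace IsOUPair

variable [IsProbabilityMeasure (ℙ : Measure Ω)] {X : Fin 2 → ℝ → Ω → ℝ}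

lemma dKol_map_ouA_le_of_mesh_le_one (hX : IsOUPair θ X) (hθ : 0 < θ) {n : ℕ} (hn : n ≠ 0) {Δ : ℝ}
    (hΔ : 0 < Δ) (hΔ1 : Δ ≤ 1) :
    dKol (Measure.map (ouA X n Δ) ℙ) (gaussianReal 0 (1 / (4 * θ ^ 3)).toNNReal)
      ≤ 8 * θ ^ 3 * (√((1 + θ) ^ 3 / θ ^ 7 / (n * Δ))
        + ((1 + θ) ^ 2 / θ ^ 4 / (n * Δ) + Δ / (4 * θ ^ 2))) := by
  have hw : 0 < 1 / (4 * θ ^ 3) := by positivity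
  have h := hX.dKol_map_ouA_le_of_trace hΔ.le hn (toNNReal_pos.2 hw).ne'
  have hconst : 2 / (1 / (4 * θ ^ 3)) = 8 * θ ^ 3 := by
    field_simp
    norm_num
  rw [coe_toNNReal _ hw.le, hconst] at h
  refine h.trans ?_
  gcongr
  · exact trace_ouMatrix_exp_mul_mul_mul_le hθ hΔ hΔ1 hn
  · exact abs_trace_ouMatrix_exp_mul_self_sub_le hθ hΔ hΔ1 hn

lemma dKol_map_ouA_le (hX : IsOUPair θ X) (hθ : 0 < θ) {n : ℕ} (hn : n ≠ 0) {Δ : ℝ} (hΔ : 0 < Δ) :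
    dKol (Measure.map (ouA X n Δ) ℙ) (gaussianReal 0 (1 / (4 * θ ^ 3)).toNNReal)
      ≤ ouRateConst θ * max (1 / √(n * Δ)) Δ := by
  set M := max (1 / √(n * Δ)) Δ
  rcases le_total 1 M with hM | hM
  · have : IsProbabilityMeasure (Measure.map (ouA X n Δ) ℙ) := by
      have hmeas := hX.meas
      refine Measure.isProbabilityMeasure_map (Measurable.aemeasurable ?_)
      unfold ouA
      fun_prop
    exact (dKol_le_one _ _).trans (one_le_mul_of_one_le_of_one_le (one_le_ouRateConst hθ) hM)
  have hsqrtM : 1 / √(n * Δ) ≤ M := le_max_left _ _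
  have hΔM : Δ ≤ M := le_max_right _ _
  have hTM : 1 / (n * Δ) ≤ M :=
    calc 1 / (n * Δ) = (1 / √(n * Δ)) ^ 2 := by rw [div_pow, one_pow, sq_sqrt (by positivity)]
      _ ≤ 1 / √(n * Δ) := pow_le_of_le_one (by positivity) (hsqrtM.trans hM) two_ne_zero
      _ ≤ M := hsqrtM
  calc _ ≤ 8 * θ ^ 3 * (√((1 + θ) ^ 3 / θ ^ 7 / (n * Δ))
        + ((1 + θ) ^ 2 / θ ^ 4 / (n * Δ) + Δ / (4 * θ ^ 2))) :=
        hX.dKol_map_ouA_le_of_mesh_le_one hθ hn hΔ (hΔM.trans hM)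
    _ = 8 * θ ^ 3 * (√((1 + θ) ^ 3 / θ ^ 7) * (1 / √(n * Δ))
        + ((1 + θ) ^ 2 / θ ^ 4 * (1 / (n * Δ)) + 1 / (4 * θ ^ 2) * Δ)) := by
        rw [sqrt_div (by positivity : 0 ≤ (1 + θ) ^ 3 / θ ^ 7)]
        ring
    _ ≤ 8 * θ ^ 3 * (√((1 + θ) ^ 3 / θ ^ 7) * M
        + ((1 + θ) ^ 2 / θ ^ 4 * M + 1 / (4 * θ ^ 2) * M)) := by gcongr
    _ = (ouRateConst θ - 1) * M := by
        rw [ouRateConst]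
        ring
    _ ≤ ouRateConst θ * M := by
        gcongr
        exact sub_le_self _ zero_le_one

end IsOUPair

lemma le_mul_sq_rpow_one_div_three {n : ℕ} (hn : 1 ≤ n) {Δ : ℝ} (hΔ : 0 ≤ Δ) (hΔ1 : Δ ≤ 1) :
    Δ ≤ (n * Δ ^ 2) ^ ((1 : ℝ) / 3) :=
  calc Δ = (Δ ^ 3) ^ ((1 : ℝ) / 3) := by
        rw [one_div]
        exact (pow_rpow_inv_natCast hΔ three_ne_zero).symm
    _ ≤ (n * Δ ^ 2) ^ ((1 : ℝ) / 3) := by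
        have hΔn : Δ ≤ n := hΔ1.trans (by exact_mod_cast hn)
        rw [pow_succ']
        gcongr

theorem stmt_12_general (θ : ℝ) (hθ : 0 < θ) [IsProbabilityMeasure (ℙ : Measure Ω)]
    (X : Fin 2 → ℝ → Ω → ℝ) (hX : IsOUPair θ X) :
    (∀ n : ℕ, 1 ≤ n → ∀ Δ : ℝ, 0 < Δ →
      dKol (Measure.map (ouA X n Δ) ℙ) (gaussianReal 0 (1 / (4 * θ ^ 3)).toNNReal)
        ≤ ouRateConst θ * max (1 / √(n * Δ)) Δ) ∧
    (∀ Δ : ℕ → ℝ, Tendsto Δ atTop (𝓝 0) → Tendsto (fun n : ℕ => (n : ℝ) * Δ n) atTop atTop →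
      Tendsto (fun n : ℕ => dKol (Measure.map (ouA X n (Δ n)) ℙ)
        (gaussianReal 0 (1 / (4 * θ ^ 3)).toNNReal)) atTop (𝓝 0)) := by
  have hrate (n : ℕ) (hn : 1 ≤ n) (Δ : ℝ) (hΔ : 0 < Δ) :=
    hX.dKol_map_ouA_le hθ (Nat.one_le_iff_ne_zero.1 hn) hΔ
  refine ⟨hrate, fun Δ hΔ0 hT => ?_⟩
  have hsqrt : Tendsto (fun n : ℕ => 1 / √(n * Δ n)) atTop (𝓝 0) :=
    (tendsto_sqrt_atTop.comp hT).const_div_atTop 1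
  have hbound : Tendsto (fun n : ℕ => ouRateConst θ * max (1 / √(n * Δ n)) (Δ n)) atTop (𝓝 0) := by
    simpa only [max_self, mul_zero] using (hsqrt.max hΔ0).const_mul (ouRateConst θ)
  refine squeeze_zero' (.of_forall fun n => dKol_nonneg _ _) ?_ hbound
  filter_upwards [hT.eventually_gt_atTop 0, eventually_ge_atTop 1] with n hTn hn
  exact hrate n hn (Δ n) (pos_of_mul_pos_right hTn n.cast_nonneg)

end Rate

/-- there is `C(θ) > 0` such that for all `n ≥ 1` and meshes
`0 < Δₙ ≤ 1` with `nΔₙ ≥ 1`,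
`d_Kol(A(n), N(0,1/(4θ³))) ≤ C(θ)·max((nΔₙ)^{−1/2}, (nΔₙ²)^{1/3})`;
in particular if `Δₙ → 0`, `nΔₙ → ∞` and `nΔₙ² → 0` then `A(n) ⇒ N(0,1/(4θ³))`. -/
theorem stmt_12 (θ : ℝ) (hθ : 0 < θ) [IsProbabilityMeasure (ℙ : Measure Ω)]
    (X : Fin 2 → ℝ → Ω → ℝ) (hX : IsOUPair θ X) :
    (∃ C : ℝ, 0 < C ∧ ∀ n : ℕ, 1 ≤ n → ∀ Δ : ℝ, 0 < Δ → Δ ≤ 1 → 1 ≤ (n : ℝ) * Δ →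
      dKol (Measure.map (ouA X n Δ) ℙ) (gaussianReal 0 (Real.toNNReal (1 / (4 * θ ^ 3))))
        ≤ C * max (1 / Real.sqrt ((n : ℝ) * Δ)) (((n : ℝ) * Δ ^ 2) ^ ((1 : ℝ) / 3))) ∧
    (∀ Δ : ℕ → ℝ, (∀ n, 0 < Δ n) → Tendsto Δ atTop (𝓝 0) →
      Tendsto (fun n : ℕ => (n : ℝ) * Δ n) atTop atTop →
      Tendsto (fun n : ℕ => (n : ℝ) * (Δ n) ^ 2) atTop (𝓝 0) →
      Tendsto (fun n : ℕ => dKol (Measure.map (ouA X n (Δ n)) ℙ)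
          (gaussianReal 0 (Real.toNNReal (1 / (4 * θ ^ 3))))) atTop (𝓝 0)) := by
  obtain ⟨hrate, hlim⟩ := stmt_12_general θ hθ X hX
  have hC : 0 < ouRateConst θ := one_pos.trans_le (one_le_ouRateConst hθ)
  refine ⟨⟨ouRateConst θ, hC, fun n hn Δ hΔ hΔ1 _ => (hrate n hn Δ hΔ).trans ?_⟩,
    fun Δ _ hΔ0 hT _ => hlim Δ hΔ0 hT⟩
  gcongr
  exact le_mul_sq_rpow_one_div_three hn hΔ.le hΔ1

end
end
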